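/- Let m be an odd integer with m > 7 and let n ≥ 1. If the group (ℤ/2ℤ)^r acts freely and continuously on the product (ℝP^m)^n, then r ≤ 2n. -/

import Mathlib

noncomputable section

/-- The unit sphere `S^m` in `ℝ^{m+1}`. -/
abbrev Sph (m : ℕ) : Type := Metric.sphere (0 : EuclideanSpace ℝ (Fin (m + 1))) 1

/-- The antipodal relation on the sphere `S^m`. -/
def antipodal (m : ℕ) (x y : Sph m) : Prop :=
  (y : EuclideanSpace ℝ (Fin (m + 1))) = (x : EuclideanSpace ℝ (Fin (m + 1))) ∨
    (y : EuclideanSpace ℝ (Fin (m + 1))) = -(x : EuclideanSpace ℝ (Fin (m + 1)))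

/-- Real projective `m`-space: the quotient of `S^m` by the antipodal map,
with the quotient topology. -/
abbrev RP (m : ℕ) : Type := Quot (antipodal m)

/-!
Maps of `(ℝP^m)^n` lift to `(S^m)^n`, so an action of `V = (ℤ/2)^r` lifts to an extension of `V` by
the group `(ℤ/2)^n` of sign changes. The resulting action of `V` on `H^m((S^m)^n) = ℤ^n` has a
kernel `K`, and the characters of `V` occurring in it span the dual of `V / K`. Hence some `g` takes
the value `-1` on a basis of them, and its `-1`-eigenspace `L` has rank `s ≥ dim V - dim K`.

For `k ∈ K` the square of the lift of `k` is a sign change that depends quadratically on `k`. A map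
whose square is a sign change and which negates a class `c` has a square that pairs to zero with
`c` modulo two. For `c ∈ L` this applies to the lift of `g` and to its composite with the lift of
`k`, which shows that the pairing of the square of `k` with `c` is linear in `k`. So `s` of the `n`
components of the square are linear and the other `n - s` quadratic; if `dim V > 2n`, then
`s + 2 (n - s) < dim K`, and by Chevalley–Warning they have a common zero `k ≠ 0`.

The lift of this `k` is an involution commuting with the sign changes. As `(ℤ/2)^{n+1}` cannot act
freely on `(S^m)^n` by sign changes and one more involution, its composite with some sign change
has a fixed point, so `k` has a fixed point in `(ℝP^m)^n`.

Cohomology is Alexander–Spanier cohomology, computed with germs of cochains near the diagonal.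
-/

open Filter Topology Uniformity

/-! ### Alexander–Spanier cochains -/

/-- Alexander–Spanier cochains on `X` with values in `M`, in all degrees at once: a cochain of
degree `p` in the usual numbering is evaluated on lists of length `p + 1`, and the empty list
carries the augmentation. -/
abbrev Cochain (X M : Type*) : Type _ := List X → M

namespace Cochain

variable {X Y Z M N : Type*} [AddCommGroup M] [AddCommGroup N]

/-- The underlying function of the coboundary `Cochain.δ`. -/
def δAux : (List X → M) → List X → M
  | _, [] => 0
  | f, x :: l => f l - δAux (fun l' => f (x :: l')) l

theorem δAux_add (f g : Cochain X M) (l : List X) : δAux (f + g) l = δAux f l + δAux g l := by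
  induction l generalizing f g with
  | nil => simp only [δAux, add_zero]
  | cons x l ih =>
    have hcons : δAux (fun l' => f (x :: l') + g (x :: l')) l =
        δAux (fun l' => f (x :: l')) l + δAux (fun l' => g (x :: l')) l := ih _ _
    simp only [δAux, Pi.add_apply, hcons]
    abel

/-- The coboundary `(δ f)(x₀, …, xₚ) = ∑ (-1)ⁱ f(x₀, …, x̂ᵢ, …, xₚ)` of a cochain. -/
def δ : Cochain X M →+ Cochain X M :=
  AddMonoidHom.mk' δAux fun f g => funext (δAux_add f g)

@[simp] theorem δ_nil (f : Cochain X M) : δ f [] = 0 := rfl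

theorem δ_cons (f : Cochain X M) (x : X) (l : List X) :
    δ f (x :: l) = f l - δ (fun l' => f (x :: l')) l := rfl

theorem δ_section_eq_sub (f : Cochain X M) (x : X) :
    (fun l => δ f (x :: l)) = f - δ (fun l => f (x :: l)) := rfl

theorem δ_δ (f : Cochain X M) : δ (δ f) = 0 := by
  funext l
  induction l generalizing f with
  | nil => rfl
  | cons x l ih =>
    rw [δ_cons, δ_section_eq_sub, map_sub, Pi.sub_apply, ih, Pi.zero_apply, Pi.zero_apply,
      sub_zero, sub_self]

/-- Pull-back of cochains along a map of points. -/
def pullback (φ : X → Y) : Cochain Y M →+ Cochain X M :=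
  AddMonoidHom.mk' (fun f l => f (l.map φ)) fun _ _ => rfl

@[simp] theorem pullback_apply (φ : X → Y) (f : Cochain Y M) (l : List X) :
    pullback φ f l = f (l.map φ) := rfl

theorem pullback_pullback (φ : X → Y) (ψ : Y → Z) (f : Cochain Z M) :
    pullback φ (pullback ψ f) = pullback (fun x => ψ (φ x)) f := by
  funext l
  simp only [pullback_apply, List.map_map, Function.comp_def]

theorem pullback_id (f : Cochain X M) : pullback (fun x => x) f = f := by
  funext l
  rw [pullback_apply, List.map_id']

theorem δ_pullback (φ : X → Y) (f : Cochain Y M) : δ (pullback φ f) = pullback φ (δ f) := by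
  funext l
  induction l generalizing f with
  | nil => rfl
  | cons x l ih =>
    have hcons : δ (fun l' => pullback φ f (x :: l')) l =
        pullback φ (δ fun l' => f (φ x :: l')) l := ih fun l' => f (φ x :: l')
    rw [δ_cons, hcons]
    rfl

theorem δ_map_coeff (φ : M →+ N) (f : Cochain X M) :
    δ (fun l => φ (f l)) = fun l => φ (δ f l) := by
  funext l
  induction l generalizing f with
  | nil => simp only [δ_nil, map_zero]
  | cons x l ih => simp only [δ_cons, ih, map_sub]

theorem δ_congr_of_sublist {f g : Cochain X M} (l : List X)
    (h : ∀ l', l'.Sublist l → l'.length + 1 = l.length → f l' = g l') : δ f l = δ g l := by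
  induction l generalizing f g with
  | nil => rfl
  | cons x l ih =>
    rw [δ_cons, δ_cons, h l (List.sublist_cons_self x l) rfl]
    congr 1
    exact ih fun l' hsub hlen => h _ (hsub.cons_cons x) (by simp only [List.length_cons, hlen])

/-- The prism operator, a chain homotopy between the pull-backs along `φ` and `ψ`. -/
def prism (φ ψ : X → Y) : (List Y → M) → List X → M
  | _, [] => 0
  | f, x :: l => f (φ x :: ψ x :: l.map ψ) - prism φ ψ (fun l' => f (φ x :: l')) l

@[simp] theorem prism_nil (φ ψ : X → Y) (f : Cochain Y M) : prism φ ψ f [] = 0 := rfl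

theorem prism_cons (φ ψ : X → Y) (f : Cochain Y M) (x : X) (l : List X) :
    prism φ ψ f (x :: l) =
      f (φ x :: ψ x :: l.map ψ) - prism φ ψ (fun l' => f (φ x :: l')) l := rfl

theorem prism_sub (φ ψ : X → Y) (f g : Cochain Y M) (l : List X) :
    prism φ ψ (f - g) l = prism φ ψ f l - prism φ ψ g l := by
  induction l generalizing f g with
  | nil => simp only [prism_nil, sub_zero]
  | cons x l ih =>
    have hcons : prism φ ψ (fun l' => f (φ x :: l') - g (φ x :: l')) l =
        prism φ ψ (fun l' => f (φ x :: l')) l - prism φ ψ (fun l' => g (φ x :: l')) l := ih _ _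
    simp only [prism_cons, Pi.sub_apply, hcons]
    abel

theorem δ_prism_add_prism_δ (φ ψ : X → Y) (f : Cochain Y M) (l : List X) :
    δ (prism φ ψ f) l + prism φ ψ (δ f) l = f (l.map ψ) - f (l.map φ) := by
  induction l generalizing f with
  | nil => simp only [δ_nil, prism_nil, List.map_nil, add_zero, sub_self]
  | cons x l ih =>
    have hδ : δ (prism φ ψ f) (x :: l) = prism φ ψ f l -
        (δ (fun l' => f (φ x :: ψ x :: l')) (l.map ψ) -
          δ (prism φ ψ fun l' => f (φ x :: l')) l) := by
      have hsection : (fun l' => prism φ ψ f (x :: l')) =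
          pullback ψ (fun l' => f (φ x :: ψ x :: l')) - prism φ ψ fun l' => f (φ x :: l') := rfl
      rw [δ_cons, hsection, map_sub, δ_pullback, Pi.sub_apply, pullback_apply]
    have hprism : prism φ ψ (δ f) (x :: l) = f (ψ x :: l.map ψ) -
        (f (φ x :: l.map ψ) - δ (fun l' => f (φ x :: ψ x :: l')) (l.map ψ)) -
          (prism φ ψ f l - prism φ ψ (δ fun l' => f (φ x :: l')) l) := by
      rw [prism_cons, δ_section_eq_sub, prism_sub, δ_cons, δ_cons]
    have hih := ih fun l' => f (φ x :: l')
    calc δ (prism φ ψ f) (x :: l) + prism φ ψ (δ f) (x :: l)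
        = f (ψ x :: l.map ψ) - f (φ x :: l.map ψ) +
          (δ (prism φ ψ fun l' => f (φ x :: l')) l +
            prism φ ψ (δ fun l' => f (φ x :: l')) l) := by rw [hδ, hprism]; abel
      _ = f ((x :: l).map ψ) - f ((x :: l).map φ) := by
        rw [hih, List.map_cons, List.map_cons]; abel

theorem prism_eq_zero {φ ψ : X → Y} {g : Cochain Y M} (l : List X)
    (h : ∀ l' : List Y, l'.length = l.length + 1 →
      (∀ y ∈ l', ∃ x ∈ l, y = φ x ∨ y = ψ x) → g l' = 0) : prism φ ψ g l = 0 := by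
  induction l generalizing g with
  | nil => rfl
  | cons x l ih =>
    have hfirst : g (φ x :: ψ x :: l.map ψ) = 0 := by
      refine h _ (by simp only [List.length_cons, List.length_map]) ?_
      simp only [List.forall_mem_cons, List.forall_mem_map]
      exact ⟨⟨x, List.mem_cons_self, .inl rfl⟩, ⟨x, List.mem_cons_self, .inr rfl⟩,
        fun z hz => ⟨z, List.mem_cons_of_mem x hz, .inr rfl⟩⟩
    have hrest : prism φ ψ (fun l' => g (φ x :: l')) l = 0 := by
      refine ih fun l' hlen hl' => h _ (by simp only [List.length_cons, hlen]) ?_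
      refine List.forall_mem_cons.2 ⟨⟨x, List.mem_cons_self, .inl rfl⟩, fun y hy => ?_⟩
      obtain ⟨z, hz, hyz⟩ := hl' y hy
      exact ⟨z, List.mem_cons_of_mem x hz, hyz⟩
    rw [prism_cons, hfirst, hrest, sub_zero]

theorem prism_map {φ ψ γ : X → X} (f : Cochain X M) (l : List X)
    (hφ : ∀ x ∈ l, φ (γ x) = γ (φ x)) (hψ : ∀ x ∈ l, ψ (γ x) = γ (ψ x)) :
    prism φ ψ f (l.map γ) = prism φ ψ (pullback γ f) l := by
  induction l generalizing f with
  | nil => rfl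
  | cons x l ih =>
    rw [List.forall_mem_cons] at hφ hψ
    have hmap : (l.map γ).map ψ = (l.map ψ).map γ := by
      simp only [List.map_map]
      exact List.map_congr_left hψ.2
    rw [List.map_cons, prism_cons, prism_cons, hφ.1, hψ.1, hmap, ih _ hφ.2 hψ.2]
    rfl

open Classical in
/-- The cochain equal to `f` on lists of points of `S` and to `g` on all other lists. -/
def glue (S : Set X) (f g : List X → Z) (l : List X) : Z :=
  if ∀ x ∈ l, x ∈ S then f l else g l

theorem glue_map {S : Set X} {f : Cochain X Z} {c : Z} {γ : X → X}
    (hS : ∀ x, γ x ∈ S ↔ x ∈ S) {l : List X} (h : (∀ x ∈ l, x ∈ S) → f (l.map γ) = f l) :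
    glue S f (fun _ => c) (l.map γ) = glue S f (fun _ => c) l := by
  have hiff : (∀ x ∈ l.map γ, x ∈ S) ↔ ∀ x ∈ l, x ∈ S := by
    simp only [List.forall_mem_map, hS]
  by_cases hl : ∀ x ∈ l, x ∈ S
  · exact ((if_pos (hiff.2 hl)).trans (h hl)).trans (if_pos hl).symm
  · exact (if_neg (hiff.not.2 hl)).trans (if_neg hl).symm

end Cochain

open Cochain

/-! ### Germs of cochains near the diagonal -/

section Germs

variable {X Y M N : Type*} [UniformSpace X] [UniformSpace Y] [AddCommGroup M]

/-- The filter of lists of length `k` of points of `S` that are close together; two cochains that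
are eventually equal along it have the same germ on the diagonal of `S`. -/
def nearDiag (S : Set X) (k : ℕ) : Filter (List X) where
  sets := {s | ∃ V ∈ 𝓤 X, ∀ l : List X, l.length = k → (∀ x ∈ l, x ∈ S) →
    (∀ x ∈ l, ∀ y ∈ l, (x, y) ∈ V) → l ∈ s}
  univ_sets := ⟨Set.univ, univ_mem, fun _ _ _ _ => trivial⟩
  sets_of_superset := fun ⟨V, hV, h⟩ hs => ⟨V, hV, fun l hk hS hl => hs (h l hk hS hl)⟩
  inter_sets := fun ⟨V, hV, h⟩ ⟨W, hW, h'⟩ => ⟨V ∩ W, inter_mem hV hW, fun l hk hS hl =>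
    ⟨h l hk hS fun x hx y hy => (hl x hx y hy).1, h' l hk hS fun x hx y hy => (hl x hx y hy).2⟩⟩

theorem eventually_nearDiag_of_forall {S : Set X} {k : ℕ} {p : List X → Prop}
    (h : ∀ l : List X, l.length = k → (∀ x ∈ l, x ∈ S) → p l) : ∀ᶠ l in nearDiag S k, p l :=
  ⟨Set.univ, univ_mem, fun l hk hS _ => h l hk hS⟩

theorem eventually_nearDiag_close {S : Set X} {k : ℕ} {V : Set (X × X)} (hV : V ∈ 𝓤 X) :
    ∀ᶠ l in nearDiag S k, l.length = k ∧ (∀ x ∈ l, x ∈ S) ∧ ∀ x ∈ l, ∀ y ∈ l, (x, y) ∈ V :=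
  ⟨V, hV, fun _ hk hS hl => ⟨hk, hS, hl⟩⟩

theorem nearDiag_mono {S T : Set X} (h : S ⊆ T) (k : ℕ) : nearDiag S k ≤ nearDiag T k :=
  fun _ ⟨V, hV, hs⟩ => ⟨V, hV, fun l hk hS => hs l hk fun x hx => h (hS x hx)⟩

theorem eventually_nearDiag_zero {S : Set X} {p : List X → Prop} :
    (∀ᶠ l in nearDiag S 0, p l) ↔ p [] := by
  constructor
  · rintro ⟨V, -, h⟩
    exact h [] rfl (List.forall_mem_nil _) (List.forall_mem_nil _)
  · intro h
    refine eventually_nearDiag_of_forall fun l hl _ => ?_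
    rwa [List.length_eq_zero_iff.1 hl]

theorem eventually_nearDiag_of_inter {S T : Set X} {k : ℕ} {p : List X → Prop}
    (h : ∀ᶠ l in nearDiag (S ∩ T) k, p l) : ∀ᶠ l in nearDiag S k, (∀ x ∈ l, x ∈ T) → p l := by
  obtain ⟨V, hV, h⟩ := h
  exact ⟨V, hV, fun l hk hS hl hT => h l hk (fun x hx => ⟨hS x hx, hT x hx⟩) hl⟩

theorem tendsto_map_nearDiag {S : Set X} {T : Set Y} {φ : X → Y} (hφ : UniformContinuousOn φ S)
    (hm : Set.MapsTo φ S T) (k : ℕ) : Tendsto (List.map φ) (nearDiag S k) (nearDiag T k) := by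
  rintro s ⟨V, hV, hs⟩
  have hU : {p : X × X | p.1 ∈ S → p.2 ∈ S → (φ p.1, φ p.2) ∈ V} ∈ 𝓤 X := by
    have := hφ hV
    rw [mem_map, mem_inf_principal] at this
    filter_upwards [this] with p hp h₁ h₂ using hp ⟨h₁, h₂⟩
  refine ⟨_, hU, fun l hk hS hl => hs _ (by rwa [List.length_map]) ?_ ?_⟩
  · simpa only [List.forall_mem_map] using fun x hx => hm (hS x hx)
  · simpa only [List.forall_mem_map] using fun x hx y hy => hl x hx y hy (hS x hx) (hS y hy)

theorem nearDiag_le_sup_halfspaces (S : Set X) (k : ℕ) {u : X → ℝ} (hu : UniformContinuous u) :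
    nearDiag S k ≤
      nearDiag (S ∩ {x | -(1 / 2) ≤ u x}) k ⊔ nearDiag (S ∩ {x | u x ≤ 1 / 2}) k := by
  rintro s ⟨⟨V, hV, h⟩, ⟨W, hW, h'⟩⟩
  have hU : {p : X × X | |u p.1 - u p.2| < 1} ∈ 𝓤 X := hu (Metric.dist_mem_uniformity one_pos)
  refine ⟨V ∩ W ∩ _, inter_mem (inter_mem hV hW) hU, fun l hk hS hl => ?_⟩
  by_cases hc : ∀ x ∈ l, -(1 / 2) ≤ u x
  · exact h l hk (fun x hx => ⟨hS x hx, hc x hx⟩) fun x hx y hy => (hl x hx y hy).1.1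
  · push Not at hc
    obtain ⟨y, hy, hylt⟩ := hc
    refine h' l hk (fun x hx => ⟨hS x hx, ?_⟩) fun x hx y hy => (hl x hx y hy).1.2
    have hxy : |u x - u y| < 1 := (hl x hx y hy).2
    exact (show u x ≤ 1 / 2 by linarith [(abs_lt.1 hxy).2])

theorem δ_congr {S : Set X} {k : ℕ} {f g : Cochain X M} (h : f =ᶠ[nearDiag S k] g) :
    δ f =ᶠ[nearDiag S (k + 1)] δ g := by
  obtain ⟨V, hV, h⟩ := h
  exact ⟨V, hV, fun l hk hS hl => δ_congr_of_sublist l fun l' hsub hlen => h l' (by omega)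
    (fun x hx => hS x (hsub.subset hx))
    (fun x hx y hy => hl x (hsub.subset hx) y (hsub.subset hy))⟩

theorem pullback_congr {S : Set X} {T : Set Y} {φ : X → Y} (hφ : UniformContinuousOn φ S)
    (hm : Set.MapsTo φ S T) {k : ℕ} {f g : Cochain Y M} (h : f =ᶠ[nearDiag T k] g) :
    pullback φ f =ᶠ[nearDiag S k] pullback φ g :=
  (tendsto_map_nearDiag hφ hm k).eventually h

theorem pullback_congr_univ {φ : X → Y} (hφ : UniformContinuous φ) {k : ℕ} {f g : Cochain Y M}
    (h : f =ᶠ[nearDiag Set.univ k] g) : pullback φ f =ᶠ[nearDiag Set.univ k] pullback φ g :=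
  pullback_congr hφ.uniformContinuousOn (Set.mapsTo_univ _ _) h

theorem glue_left (S : Set X) (f g : Cochain X N) (k : ℕ) : glue S f g =ᶠ[nearDiag S k] f :=
  eventually_nearDiag_of_forall fun _ _ h => if_pos h

theorem glue_right {S T : Set X} {f g : Cochain X N} {k : ℕ}
    (h : f =ᶠ[nearDiag (S ∩ T) k] g) : glue S f g =ᶠ[nearDiag T k] g := by
  obtain ⟨V, hV, h⟩ := h
  refine ⟨V, hV, fun l hk hT hl => ?_⟩
  by_cases hc : ∀ x ∈ l, x ∈ S
  · exact (if_pos hc).trans (h l hk (fun x hx => ⟨hc x hx, hT x hx⟩) hl)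
  · exact if_neg hc

/-- The restriction of `f` to lists of length `k` near the diagonal of `S` is a cocycle. -/
def IsCocycle (S : Set X) (k : ℕ) (f : Cochain X M) : Prop :=
  δ f =ᶠ[nearDiag S (k + 1)] 0

theorem IsCocycle.mono {S T : Set X} {k : ℕ} {f : Cochain X M} (hf : IsCocycle T k f)
    (h : S ⊆ T) : IsCocycle S k f :=
  nearDiag_mono h _ hf

theorem IsCocycle.add {S : Set X} {k : ℕ} {f g : Cochain X M} (hf : IsCocycle S k f)
    (hg : IsCocycle S k g) : IsCocycle S k (f + g) := by
  filter_upwards [hf, hg] with l hf hg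
  rw [map_add, Pi.add_apply, hf, hg, Pi.zero_apply, add_zero]

theorem IsCocycle.sub {S : Set X} {k : ℕ} {f g : Cochain X M} (hf : IsCocycle S k f)
    (hg : IsCocycle S k g) : IsCocycle S k (f - g) := by
  filter_upwards [hf, hg] with l hf hg
  rw [map_sub, Pi.sub_apply, hf, hg, Pi.zero_apply, sub_zero]

theorem isCocycle_of_eventuallyEq_δ {S : Set X} {k : ℕ} {f h : Cochain X M}
    (e : f =ᶠ[nearDiag S k] δ h) : IsCocycle S k f := by
  have := δ_congr e
  rwa [δ_δ] at this

/-- The germ of `f` on lists of length `k` of points of `S` is invariant under every map in `Γ`,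
on a neighbourhood of the diagonal that does not depend on the map. -/
def InvariantGerm (Γ : Set (X → X)) (S : Set X) (k : ℕ) (f : Cochain X N) : Prop :=
  ∀ᶠ l in nearDiag S k, ∀ γ ∈ Γ, f (l.map γ) = f l

namespace InvariantGerm

variable {Γ Γ' : Set (X → X)} {S S' : Set X} {k : ℕ}

theorem mono {f : Cochain X N} (h : InvariantGerm Γ' S' k f) (hΓ : Γ ⊆ Γ') (hS : S ⊆ S') :
    InvariantGerm Γ S k f := by
  filter_upwards [nearDiag_mono hS k h] with l hl γ hγ using hl γ (hΓ hγ)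

theorem empty (S : Set X) (k : ℕ) (f : Cochain X N) : InvariantGerm ∅ S k f :=
  Eventually.of_forall fun _ _ h => absurd h (Set.notMem_empty _)

theorem congr {f g : Cochain X N} (h : InvariantGerm Γ S k f) (hfin : Γ.Finite)
    (hΓ : ∀ γ ∈ Γ, UniformContinuousOn γ S) (hS : ∀ γ ∈ Γ, Set.MapsTo γ S S)
    (hfg : f =ᶠ[nearDiag S k] g) : InvariantGerm Γ S k g := by
  have hmap : ∀ᶠ l in nearDiag S k, ∀ γ ∈ Γ, f (l.map γ) = g (l.map γ) :=
    (eventually_all_finite hfin).2 fun γ hγ =>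
      (tendsto_map_nearDiag (hΓ γ hγ) (hS γ hγ) k).eventually hfg
  filter_upwards [h, hfg, hmap] with l hl hfgl hmapl γ hγ
  rw [← hmapl γ hγ, hl γ hγ, hfgl]

theorem extend_zero {f : Cochain X M} (hS : ∀ γ ∈ Γ, ∀ x, γ x ∈ S ↔ x ∈ S)
    (h : InvariantGerm Γ S k f) : InvariantGerm Γ Set.univ k (glue S f fun _ => 0) := by
  obtain ⟨V, hV, h⟩ := h
  exact ⟨V, hV, fun l hlen _ hl γ hγ =>
    glue_map (hS γ hγ) fun hlS => h l hlen hlS hl γ hγ⟩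

protected theorem δ {f : Cochain X M} (h : InvariantGerm Γ S k f) :
    InvariantGerm Γ S (k + 1) (δ f) := by
  obtain ⟨V, hV, h⟩ := h
  refine ⟨V, hV, fun l hlen hS hl γ hγ => ?_⟩
  rw [← pullback_apply γ (Cochain.δ f), ← δ_pullback]
  exact δ_congr_of_sublist l fun l' hsub hlen' => h l' (by omega)
    (fun x hx => hS x (hsub.subset hx))
    (fun x hx y hy => hl x (hsub.subset hx) y (hsub.subset hy)) γ hγ

theorem pullback_of_commute {f : Cochain X N} {φ : X → X} (h : InvariantGerm Γ S' k f)
    (hφ : UniformContinuousOn φ S) (hm : Set.MapsTo φ S S')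
    (hΓ : ∀ γ ∈ Γ, ∀ x ∈ S, φ (γ x) = γ (φ x)) :
    InvariantGerm Γ S k fun l => f (l.map φ) := by
  filter_upwards [(tendsto_map_nearDiag hφ hm k).eventually h,
    eventually_nearDiag_of_forall fun l _ h => h] with l hl hlS γ hγ
  rw [← hl γ hγ, List.map_map, List.map_map]
  exact congrArg f (List.map_congr_left fun x hx => hΓ γ hγ x (hlS x hx))

theorem add {f g : Cochain X M} (hf : InvariantGerm Γ S k f) (hg : InvariantGerm Γ S k g) :
    InvariantGerm Γ S k (f + g) := by
  filter_upwards [hf, hg] with l hfl hgl γ hγ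
  rw [Pi.add_apply, Pi.add_apply, hfl γ hγ, hgl γ hγ]

theorem sub {f g : Cochain X M} (hf : InvariantGerm Γ S k f) (hg : InvariantGerm Γ S k g) :
    InvariantGerm Γ S k (f - g) := by
  filter_upwards [hf, hg] with l hfl hgl γ hγ
  rw [Pi.sub_apply, Pi.sub_apply, hfl γ hγ, hgl γ hγ]

theorem sum {ι : Type*} (s : Finset ι) {f : ι → Cochain X M}
    (hf : ∀ i ∈ s, InvariantGerm Γ S k (f i)) : InvariantGerm Γ S k (∑ i ∈ s, f i) :=
  Finset.sum_induction _ (InvariantGerm Γ S k) (fun _ _ => add)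
    (Eventually.of_forall fun _ _ _ => rfl) hf

end InvariantGerm

end Germs

/-! ### Homotopy invariance -/

section Homotopy

variable {X Y M : Type*} [AddCommGroup M]

/-- The maps `φ` and `ψ` carry `R`-close points of `S` to `V`-close points, even when different
maps are applied to the two points. -/
def CarriesClose (R : Set (X × X)) (V : Set (Y × Y)) (S : Set X) (φ ψ : X → Y) : Prop :=
  ∀ x ∈ S, ∀ y ∈ S, (x, y) ∈ R → ∀ χ ∈ ({φ, ψ} : Set (X → Y)), ∀ χ' ∈ ({φ, ψ} : Set (X → Y)),
    (χ x, χ' y) ∈ V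

theorem CarriesClose.prism_eq_zero {R : Set (X × X)} {V : Set (Y × Y)} {S : Set X} {T : Set Y}
    {φ ψ : X → Y} (h : CarriesClose R V S φ ψ) (hφ : Set.MapsTo φ S T) (hψ : Set.MapsTo ψ S T)
    {g : Cochain Y M} {l : List X}
    (hg : ∀ l' : List Y, l'.length = l.length + 1 → (∀ y ∈ l', y ∈ T) →
      (∀ y ∈ l', ∀ y' ∈ l', (y, y') ∈ V) → g l' = 0)
    (hS : ∀ x ∈ l, x ∈ S) (hR : ∀ x ∈ l, ∀ y ∈ l, (x, y) ∈ R) : prism φ ψ g l = 0 := by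
  refine Cochain.prism_eq_zero l fun l' hlen hl' => ?_
  have hl' : ∀ y ∈ l', ∃ x ∈ l, ∃ χ ∈ ({φ, ψ} : Set (X → Y)), y = χ x := fun y hy => by
    obtain ⟨x, hx, rfl | rfl⟩ := hl' y hy
    · exact ⟨x, hx, φ, .inl rfl, rfl⟩
    · exact ⟨x, hx, ψ, .inr rfl, rfl⟩
  refine hg l' hlen (fun y hy => ?_) fun y hy y' hy' => ?_
  · obtain ⟨x, hx, χ, rfl | rfl, rfl⟩ := hl' y hy
    · exact hφ (hS x hx)
    · exact hψ (hS x hx)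
  · obtain ⟨x, hx, χ, hχ, rfl⟩ := hl' y hy
    obtain ⟨x', hx', χ', hχ', rfl⟩ := hl' y' hy'
    exact h x (hS x hx) x' (hS x' hx') (hR x hx x' hx') χ hχ χ' hχ'

variable [UniformSpace X] [UniformSpace Y]

theorem exists_carriesClose_partition {S : Set X} {Φ : ℝ → X → Y}
    (hΦ : UniformContinuousOn (fun p : ℝ × X => Φ p.1 p.2) (Set.Icc 0 1 ×ˢ S))
    {V : Set (Y × Y)} (hV : V ∈ 𝓤 Y) :
    ∃ N : ℕ, 0 < N ∧ ∃ R ∈ 𝓤 X, ∀ i < N,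
      CarriesClose R V S (Φ (i / N)) (Φ ((i + 1 : ℕ) / N)) := by
  have hpre := hΦ hV
  rw [mem_map, mem_inf_principal, uniformity_prod, mem_inf_iff_superset] at hpre
  obtain ⟨P, hP, R, hR, hPR⟩ := hpre
  obtain ⟨P', hP', hPP⟩ := mem_comap.1 hP
  obtain ⟨R', hR', hRR⟩ := mem_comap.1 hR
  obtain ⟨ε, hε, hεP⟩ := Metric.mem_uniformity_dist.1 hP'
  have hclose : ∀ s ∈ Set.Icc (0 : ℝ) 1, ∀ t ∈ Set.Icc (0 : ℝ) 1, |s - t| < ε →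
      ∀ x ∈ S, ∀ y ∈ S, (x, y) ∈ R' → (Φ s x, Φ t y) ∈ V :=
    fun s hs t ht hst x hx y hy hxy =>
      hPR (a := ((s, x), (t, y))) ⟨hPP (hεP hst), hRR hxy⟩ ⟨⟨hs, hx⟩, ⟨ht, hy⟩⟩
  obtain ⟨N, hN⟩ := exists_nat_one_div_lt hε
  refine ⟨N + 1, N.succ_pos, R', hR', fun i hi x hx y hy hxy => ?_⟩
  have hN0 : (0 : ℝ) < (N + 1 : ℕ) := by positivity
  have hmem : ∀ j ≤ N + 1, (j : ℝ) / (N + 1 : ℕ) ∈ Set.Icc (0 : ℝ) 1 := fun j hj =>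
    ⟨by positivity, (div_le_one hN0).2 (Nat.cast_le.2 hj)⟩
  have hstep : |(i : ℝ) / (N + 1 : ℕ) - (i + 1 : ℕ) / (N + 1 : ℕ)| < ε := by
    rwa [← sub_div, abs_div, Nat.cast_succ i, sub_add_cancel_left, abs_neg, abs_one,
      abs_of_pos hN0, Nat.cast_succ N]
  have hself : ∀ s : ℝ, |s - s| < ε := fun s => by rwa [sub_self, abs_zero]
  rintro χ (rfl | rfl) χ' (rfl | rfl)
  · exact hclose _ (hmem i hi.le) _ (hmem i hi.le) (hself _) x hx y hy hxy
  · exact hclose _ (hmem i hi.le) _ (hmem _ hi) hstep x hx y hy hxy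
  · exact hclose _ (hmem _ hi) _ (hmem i hi.le) (by rwa [abs_sub_comm]) x hx y hy hxy
  · exact hclose _ (hmem _ hi) _ (hmem _ hi) (hself _) x hx y hy hxy

/-- Cutting `[0, 1]` into short intervals makes consecutive maps close, so that the sum of their
prisms is a homotopy. -/
theorem homotopy_invariance {S T : Set X} {Φ : ℝ → X → X}
    (hΦ : UniformContinuousOn (fun p : ℝ × X => Φ p.1 p.2) (Set.Icc 0 1 ×ˢ S))
    (hm : ∀ t ∈ Set.Icc (0 : ℝ) 1, Set.MapsTo (Φ t) S T) {k : ℕ} {f : Cochain X M}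
    (hf : IsCocycle T k f) {Γ : Set (X → X)}
    (hΓ : ∀ γ ∈ Γ, ∀ t ∈ Set.Icc (0 : ℝ) 1, ∀ x ∈ S, Φ t (γ x) = γ (Φ t x))
    (hinv : InvariantGerm Γ T k f) :
    ∃ h : Cochain X M, h [] = 0 ∧ (∀ j, j + 1 = k → InvariantGerm Γ S j h) ∧
      pullback (Φ 1) f - pullback (Φ 0) f =ᶠ[nearDiag S k] δ h := by
  obtain ⟨V₁, hV₁, hf⟩ := hf
  obtain ⟨V₂, hV₂, hinv⟩ := hinv
  obtain ⟨N, hN, R, hR, hclose⟩ := exists_carriesClose_partition hΦ (inter_mem hV₁ hV₂)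
  have hN0 : (N : ℝ) ≠ 0 := Nat.cast_ne_zero.2 hN.ne'
  have hmem : ∀ j ≤ N, (j : ℝ) / N ∈ Set.Icc (0 : ℝ) 1 := fun j hj =>
    ⟨by positivity, (div_le_one (by positivity)).2 (Nat.cast_le.2 hj)⟩
  let P (i : ℕ) : Cochain X M := prism (Φ (i / N)) (Φ ((i + 1 : ℕ) / N)) f
  refine ⟨∑ i ∈ Finset.range N, P i, ?_, fun j hj => InvariantGerm.sum _ fun i hi => ?_,
    R, hR, fun l hlen hS hl => ?_⟩
  · rw [Finset.sum_apply]
    exact Finset.sum_eq_zero fun i _ => rfl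
  · rw [Finset.mem_range] at hi
    refine ⟨R, hR, fun l hlen hS hl γ hγ => ?_⟩
    have hmap : P i (l.map γ) = prism _ _ (pullback γ f) l :=
      prism_map f l (fun x hx => hΓ γ hγ _ (hmem i hi.le) x (hS x hx))
        (fun x hx => hΓ γ hγ _ (hmem _ hi) x (hS x hx))
    rw [hmap, ← sub_eq_zero, ← prism_sub]
    refine (hclose i hi).prism_eq_zero (hm _ (hmem i hi.le)) (hm _ (hmem _ hi))
      (fun l' hlen' hT hV => sub_eq_zero.2 ?_) hS hl
    exact hinv l' (by omega) hT (fun y hy y' hy' => (hV y hy y' hy').2) γ hγ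
  · have hstep : ∀ i ∈ Finset.range N, δ (P i) l =
        f (l.map (Φ ((i + 1 : ℕ) / N))) - f (l.map (Φ (i / N))) := fun i hi => by
      rw [Finset.mem_range] at hi
      rw [← δ_prism_add_prism_δ, (hclose i hi).prism_eq_zero (hm _ (hmem i hi.le))
        (hm _ (hmem _ hi)) (fun l' hlen' hT hV => hf l' (by omega) hT
          fun y hy y' hy' => (hV y hy y' hy').1) hS hl, add_zero]
    change f (l.map (Φ 1)) - f (l.map (Φ 0)) = δ (∑ i ∈ Finset.range N, P i) l
    rw [map_sum, Finset.sum_apply, Finset.sum_congr rfl hstep,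
      Finset.sum_range_sub fun i : ℕ => f (l.map (Φ (i / N))), div_self hN0, Nat.cast_zero,
      zero_div]

theorem deform {S T S' : Set X} {Φ : ℝ → X → X}
    (hΦ : UniformContinuousOn (fun p : ℝ × X => Φ p.1 p.2) (Set.Icc 0 1 ×ˢ S))
    (hm : ∀ t ∈ Set.Icc (0 : ℝ) 1, Set.MapsTo (Φ t) S T) (h0 : ∀ x ∈ S, Φ 0 x = x)
    (h1 : Set.MapsTo (Φ 1) S S') {k : ℕ} {f : Cochain X M}
    (hf : IsCocycle T k f) {Γ : Set (X → X)}
    (hΓ : ∀ γ ∈ Γ, ∀ t ∈ Set.Icc (0 : ℝ) 1, ∀ x ∈ S, Φ t (γ x) = γ (Φ t x))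
    (hinv : InvariantGerm Γ T k f) {g h : Cochain X M} (hgh : f =ᶠ[nearDiag S' k] g + δ h)
    (hh : ∀ j, j + 1 = k → InvariantGerm Γ S' j h) :
    ∃ h' : Cochain X M, h' [] = h [] ∧ (∀ j, j + 1 = k → InvariantGerm Γ S j h') ∧
      f =ᶠ[nearDiag S k] pullback (Φ 1) g + δ h' := by
  obtain ⟨h₁, h₁nil, h₁inv, h₁eq⟩ := homotopy_invariance hΦ hm hf hΓ hinv
  have hone : (1 : ℝ) ∈ Set.Icc (0 : ℝ) 1 := Set.right_mem_Icc.2 zero_le_one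
  have hu : UniformContinuousOn (Φ 1) S :=
    hΦ.comp (uniformContinuous_const.prodMk uniformContinuous_id).uniformContinuousOn
      fun x hx => ⟨hone, hx⟩
  refine ⟨pullback (Φ 1) h - h₁, ?_, fun j hj => ?_, ?_⟩
  · rw [Pi.sub_apply, h₁nil, sub_zero, pullback_apply, List.map_nil]
  · exact ((hh j hj).pullback_of_commute hu h1 fun γ hγ => hΓ γ hγ 1 hone).sub (h₁inv j hj)
  · filter_upwards [h₁eq, pullback_congr hu h1 hgh,
      eventually_nearDiag_of_forall fun l _ h => h] with l h₁l hghl hl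
    have hmap0 : l.map (Φ 0) = l := by
      rw [List.map_congr_left fun x hx => h0 x (hl x hx), List.map_id']
    rw [map_add, Pi.add_apply, ← δ_pullback] at hghl
    rw [Pi.sub_apply, pullback_apply (Φ 0), hmap0, hghl] at h₁l
    rw [map_sub, Pi.add_apply, Pi.sub_apply, ← h₁l]
    abel

end Homotopy

/-! ### Geometry of the sphere -/

section Sphere

variable {m : ℕ}

theorem Sph.neg_apply (u : Sph m) (l : Fin (m + 1)) : (-u).1 l = -u.1 l := rfl

theorem Sph.sum_sq (u : Sph m) : ∑ l, u.1 l ^ 2 = 1 := by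
  rw [← EuclideanSpace.real_norm_sq_eq, norm_eq_of_mem_sphere u, one_pow]

/-- The point `e_j` of the sphere. -/
def pole (j : Fin (m + 1)) : Sph m := ⟨EuclideanSpace.single j 1, by simp⟩

@[simp] theorem pole_apply (j l : Fin (m + 1)) : (pole j).1 l = if l = j then 1 else 0 := by
  simp [pole]

/-- The projection of nonzero vectors onto the sphere, with the arbitrary value `e_0` at `0`. -/
def toSph (v : EuclideanSpace ℝ (Fin (m + 1))) : Sph m :=
  if h : v = 0 then pole 0 else ⟨‖v‖⁻¹ • v, by
    have : ‖v‖ ≠ 0 := norm_ne_zero_iff.2 h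
    simp [norm_smul, this]⟩

theorem coe_toSph {v : EuclideanSpace ℝ (Fin (m + 1))} (h : v ≠ 0) :
    (toSph v).1 = ‖v‖⁻¹ • v := by
  rw [toSph, dif_neg h]

theorem toSph_apply {v : EuclideanSpace ℝ (Fin (m + 1))} (h : v ≠ 0) (l : Fin (m + 1)) :
    (toSph v).1 l = ‖v‖⁻¹ * v l := by
  rw [coe_toSph h]; rfl

theorem toSph_coe (u : Sph m) : toSph u.1 = u := by
  apply Subtype.ext
  rw [coe_toSph (ne_zero_of_mem_unit_sphere u), norm_eq_of_mem_sphere u, inv_one, one_smul]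

theorem toSph_neg {v : EuclideanSpace ℝ (Fin (m + 1))} (h : v ≠ 0) :
    toSph (-v) = -toSph v := by
  apply Subtype.ext
  rw [coe_toSph (neg_ne_zero.2 h), coe_neg_sphere, coe_toSph h, norm_neg, smul_neg]

theorem continuousOn_toSph : ContinuousOn (toSph (m := m)) {v | v ≠ 0} := by
  rw [Topology.IsInducing.subtypeVal.continuousOn_iff]
  refine ContinuousOn.congr (f := fun v => ‖v‖⁻¹ • v) ?_ fun v hv => coe_toSph hv
  exact (continuous_norm.continuousOn.inv₀ fun v hv => norm_ne_zero_iff.2 hv).smul continuousOn_id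

/-- The great subsphere on which only the first `j` coordinates may be nonzero. It has dimension
`j - 1` and is empty for `j = 0`. -/
def subsphere (m j : ℕ) : Set (Sph m) := {u | ∀ l : Fin (m + 1), j ≤ l → u.1 l = 0}

theorem subsphere_mono {i j : ℕ} (h : i ≤ j) : subsphere m i ⊆ subsphere m j :=
  fun _ hu l hl => hu l (h.trans hl)

theorem subsphere_zero : subsphere m 0 = ∅ := by
  refine Set.eq_empty_of_forall_notMem fun u hu => (ne_zero_of_mem_unit_sphere u) ?_
  ext l
  exact hu l l.1.zero_le

theorem subsphere_top : subsphere m (m + 1) = Set.univ :=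
  Set.eq_univ_of_forall fun _ l hl => absurd l.2 (by omega)

theorem neg_mem_subsphere {j : ℕ} {u : Sph m} (hu : u ∈ subsphere m j) : -u ∈ subsphere m j :=
  fun l hl => by rw [Sph.neg_apply, hu l hl, neg_zero]

theorem continuous_coord (l : Fin (m + 1)) : Continuous fun u : Sph m => u.1 l :=
  (EuclideanSpace.proj (𝕜 := ℝ) l).continuous.comp continuous_subtype_val

theorem isClosed_subsphere (j : ℕ) : IsClosed (subsphere m j) := by
  simp only [subsphere, Set.ofPred_forall]
  exact isClosed_iInter fun l => isClosed_iInter fun _ =>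
    isClosed_eq (continuous_coord l) continuous_const

theorem pole_mem_subsphere (j : Fin (m + 1)) : pole j ∈ subsphere m (j + 1) := fun l hl => by
  rw [pole_apply, if_neg (by rintro rfl; omega)]

/-- Contraction along great circles towards `v`, meaningful away from `-v`. -/
def contract (v : Sph m) (t : ℝ) (u : Sph m) : Sph m := toSph ((1 - t) • u.1 + t • v.1)

theorem contract_ne_zero {v u : Sph m} (h : u ≠ -v) {t : ℝ} (ht : t ∈ Set.Icc (0 : ℝ) 1) :
    (1 - t) • u.1 + t • v.1 ≠ 0 := by
  intro h0
  have hadd : (1 - t) • u.1 = -(t • v.1) := eq_neg_of_add_eq_zero_left h0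
  have hnorm : 1 - t = t := by
    have := congrArg norm hadd
    rwa [norm_neg, norm_smul, norm_smul, norm_eq_of_mem_sphere u, norm_eq_of_mem_sphere v,
      Real.norm_of_nonneg ht.1, Real.norm_of_nonneg (sub_nonneg.2 ht.2), mul_one, mul_one] at this
  have ht0 : t ≠ 0 := by rintro rfl; norm_num at hnorm
  rw [hnorm, ← smul_neg] at hadd
  exact h (Subtype.ext (smul_right_injective _ ht0 hadd))

theorem contract_zero (v u : Sph m) : contract v 0 u = u := by simp [contract, toSph_coe]

theorem contract_one (v u : Sph m) : contract v 1 u = v := by simp [contract, toSph_coe]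

theorem continuousOn_contract (v : Sph m) :
    ContinuousOn (fun p : ℝ × Sph m => contract v p.1 p.2) (Set.Icc 0 1 ×ˢ {u | u ≠ -v}) :=
  continuousOn_toSph.comp (Continuous.continuousOn (by fun_prop))
    fun p hp => contract_ne_zero hp.2 hp.1

theorem contract_mem_subsphere {v u : Sph m} {j : ℕ} (hv : v ∈ subsphere m j)
    (hu : u ∈ subsphere m j) (h : u ≠ -v) {t : ℝ} (ht : t ∈ Set.Icc (0 : ℝ) 1) :
    contract v t u ∈ subsphere m j := fun l hl => by
  rw [contract, toSph_apply (contract_ne_zero h ht)]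
  simp [hu l hl, hv l hl]

/-- Deformation onto the equator orthogonal to `e_j`, meaningful away from the poles `± e_j`. -/
def flatten (j : Fin (m + 1)) (t : ℝ) (u : Sph m) : Sph m :=
  toSph (u.1 - (t * u.1 j) • EuclideanSpace.single j 1)

theorem sub_smul_single_apply (j l : Fin (m + 1)) (t : ℝ) (u : Sph m) :
    (u.1 - (t * u.1 j) • (EuclideanSpace.single j (1 : ℝ))) l =
      if l = j then (1 - t) * u.1 j else u.1 l := by
  by_cases h : l = j
  · subst h; simp; ring
  · simp [h]

theorem norm_sub_smul_single_sq (j : Fin (m + 1)) (t : ℝ) (u : Sph m) :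
    ‖u.1 - (t * u.1 j) • (EuclideanSpace.single j (1 : ℝ))‖ ^ 2 =
      1 - u.1 j ^ 2 + ((1 - t) * u.1 j) ^ 2 := by
  have hu := u.sum_sq
  rw [EuclideanSpace.real_norm_sq_eq]
  simp only [sub_smul_single_apply]
  rw [← Finset.add_sum_erase _ _ (Finset.mem_univ j)] at hu ⊢
  rw [if_pos rfl, Finset.sum_congr rfl fun l hl => by rw [if_neg (Finset.ne_of_mem_erase hl)]]
  linarith

theorem flatten_ne_zero {j : Fin (m + 1)} {u : Sph m} (h : |u.1 j| ≤ 1 / 2) (t : ℝ) :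
    u.1 - (t * u.1 j) • (EuclideanSpace.single j (1 : ℝ)) ≠ 0 := by
  have hu : u.1 j ^ 2 ≤ (1 / 2) ^ 2 := sq_le_sq' (abs_le.1 h).1 (abs_le.1 h).2
  have hpos : 0 < ‖u.1 - (t * u.1 j) • (EuclideanSpace.single j (1 : ℝ))‖ ^ 2 := by
    rw [norm_sub_smul_single_sq]
    linarith [sq_nonneg ((1 - t) * u.1 j)]
  exact norm_ne_zero_iff.1 (pow_ne_zero_iff two_ne_zero |>.1 hpos.ne')

theorem flatten_zero (j : Fin (m + 1)) (u : Sph m) : flatten j 0 u = u := by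
  simp [flatten, toSph_coe]

theorem flatten_neg {j : Fin (m + 1)} {u : Sph m} (h : |u.1 j| ≤ 1 / 2) (t : ℝ) :
    flatten j t (-u) = -flatten j t u := by
  rw [flatten, flatten, ← toSph_neg (flatten_ne_zero h t)]
  congr 1
  rw [Sph.neg_apply, coe_neg_sphere, mul_neg, neg_smul]
  abel

theorem continuousOn_flatten (j : Fin (m + 1)) :
    ContinuousOn (fun p : ℝ × Sph m => flatten j p.1 p.2)
      (Set.Icc 0 1 ×ˢ {u | |u.1 j| ≤ 1 / 2}) := by
  have := continuous_coord j
  exact continuousOn_toSph.comp (Continuous.continuousOn (by fun_prop))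
    fun p hp => flatten_ne_zero hp.2 p.1

theorem abs_flatten_le {j : Fin (m + 1)} {u : Sph m} (h : |u.1 j| ≤ 1 / 2) {t : ℝ}
    (ht : t ∈ Set.Icc (0 : ℝ) 1) : |(flatten j t u).1 j| ≤ 1 / 2 := by
  have h0 := flatten_ne_zero h t
  have hn := norm_pos_iff.2 h0
  have hu : u.1 j ^ 2 ≤ (1 / 2) ^ 2 := sq_le_sq' (abs_le.1 h).1 (abs_le.1 h).2
  have hshrink : ((1 - t) * u.1 j) ^ 2 ≤ u.1 j ^ 2 := by
    rw [mul_pow]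
    exact mul_le_of_le_one_left (sq_nonneg _)
      (pow_le_one₀ (sub_nonneg.2 ht.2) (sub_le_self 1 ht.1))
  have hnorm : 2 * |(1 - t) * u.1 j| ≤
      ‖u.1 - (t * u.1 j) • (EuclideanSpace.single j (1 : ℝ))‖ := by
    refine (pow_le_pow_iff_left₀ (by positivity) hn.le two_ne_zero).1 ?_
    rw [norm_sub_smul_single_sq, mul_pow, sq_abs]
    linarith
  rw [flatten, toSph_apply h0, sub_smul_single_apply, if_pos rfl, abs_mul,
    abs_of_pos (inv_pos.2 hn), inv_mul_le_iff₀ hn]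
  linarith

theorem flatten_mem_subsphere {j : Fin (m + 1)} {i : ℕ} {u : Sph m} (hu : u ∈ subsphere m i)
    (h : |u.1 j| ≤ 1 / 2) (t : ℝ) : flatten j t u ∈ subsphere m i := fun l hl => by
  rw [flatten, toSph_apply (flatten_ne_zero h t), sub_smul_single_apply]
  split_ifs with hlj
  · subst hlj; simp [hu l hl]
  · simp [hu l hl]

theorem flatten_one_mem_subsphere {j : Fin (m + 1)} {u : Sph m} (hu : u ∈ subsphere m (j + 1))
    (h : |u.1 j| ≤ 1 / 2) : flatten j 1 u ∈ subsphere m j := fun l hl => by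
  rw [flatten, toSph_apply (flatten_ne_zero h 1), sub_smul_single_apply]
  split_ifs with hlj
  · simp
  · have : (l : ℕ) ≠ j := fun h => hlj (Fin.ext h)
    simp [hu l (by omega)]

/-- A neighbourhood of the equator `subsphere m j` in the next larger subsphere. -/
def equatorBand (j : Fin (m + 1)) : Set (Sph m) := subsphere m (j + 1) ∩ {u | |u.1 j| ≤ 1 / 2}

/-- A neighbourhood of the upper hemisphere of `subsphere m (j + 1)`. -/
def upperCap (j : Fin (m + 1)) : Set (Sph m) := subsphere m (j + 1) ∩ {u | -(1 / 2) ≤ u.1 j}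

/-- A neighbourhood of the lower hemisphere of `subsphere m (j + 1)`. -/
def lowerCap (j : Fin (m + 1)) : Set (Sph m) := subsphere m (j + 1) ∩ {u | u.1 j ≤ 1 / 2}

theorem isClosed_equatorBand (j : Fin (m + 1)) : IsClosed (equatorBand j) :=
  (isClosed_subsphere _).inter (isClosed_le (continuous_coord j).abs continuous_const)

theorem isClosed_upperCap (j : Fin (m + 1)) : IsClosed (upperCap j) :=
  (isClosed_subsphere _).inter (isClosed_le continuous_const (continuous_coord j))

theorem isClosed_lowerCap (j : Fin (m + 1)) : IsClosed (lowerCap j) :=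
  (isClosed_subsphere _).inter (isClosed_le (continuous_coord j) continuous_const)

theorem subsphere_subset_equatorBand (j : Fin (m + 1)) : subsphere m j ⊆ equatorBand j :=
  fun u hu => ⟨subsphere_mono (by omega) hu, by simp [hu j le_rfl]⟩

theorem equatorBand_subset_upperCap (j : Fin (m + 1)) : equatorBand j ⊆ upperCap j :=
  fun u hu => ⟨hu.1, show -(1 / 2) ≤ u.1 j from (abs_le.1 hu.2).1⟩

theorem equatorBand_subset_lowerCap (j : Fin (m + 1)) : equatorBand j ⊆ lowerCap j :=
  fun u hu => ⟨hu.1, show u.1 j ≤ 1 / 2 from (abs_le.1 hu.2).2⟩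

theorem neg_mem_equatorBand {j : Fin (m + 1)} {u : Sph m} (hu : u ∈ equatorBand j) :
    -u ∈ equatorBand j :=
  ⟨neg_mem_subsphere hu.1, by simpa using hu.2⟩

theorem neg_mem_lowerCap {j : Fin (m + 1)} {u : Sph m} (hu : u ∈ upperCap j) : -u ∈ lowerCap j :=
  ⟨neg_mem_subsphere hu.1, show -u.1 j ≤ 1 / 2 from neg_le.1 hu.2⟩

theorem neg_mem_upperCap {j : Fin (m + 1)} {u : Sph m} (hu : u ∈ lowerCap j) : -u ∈ upperCap j :=
  ⟨neg_mem_subsphere hu.1, show -(1 / 2) ≤ -u.1 j from neg_le_neg hu.2⟩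

theorem neg_pole_notMem_upperCap (j : Fin (m + 1)) : -pole j ∉ upperCap j := by
  rintro ⟨-, h⟩
  rw [Set.mem_ofPred_eq, Sph.neg_apply, pole_apply, if_pos rfl] at h
  norm_num at h

theorem pole_notMem_lowerCap (j : Fin (m + 1)) : pole j ∉ lowerCap j :=
  fun h => neg_pole_notMem_upperCap j (neg_mem_upperCap h)

theorem contract_mem_subsphere_of_mem_upperCap {j : Fin (m + 1)} {u : Sph m} (hu : u ∈ upperCap j)
    {t : ℝ} (ht : t ∈ Set.Icc (0 : ℝ) 1) : contract (pole j) t u ∈ subsphere m (j + 1) :=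
  contract_mem_subsphere (pole_mem_subsphere j) hu.1
    (fun e => neg_pole_notMem_upperCap j (e ▸ hu)) ht

theorem contract_neg_mem_subsphere_of_mem_lowerCap {j : Fin (m + 1)} {u : Sph m}
    (hu : u ∈ lowerCap j) {t : ℝ} (ht : t ∈ Set.Icc (0 : ℝ) 1) :
    contract (-pole j) t u ∈ subsphere m (j + 1) :=
  contract_mem_subsphere (neg_mem_subsphere (pole_mem_subsphere j)) hu.1
    (fun e => pole_notMem_lowerCap j (by rwa [e, neg_neg] at hu)) ht

theorem flatten_mem_equatorBand {j : Fin (m + 1)} {u : Sph m} (hu : u ∈ equatorBand j) {t : ℝ}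
    (ht : t ∈ Set.Icc (0 : ℝ) 1) : flatten j t u ∈ equatorBand j :=
  ⟨flatten_mem_subsphere hu.1 hu.2 t, abs_flatten_le hu.2 ht⟩

end Sphere

/-! ### The antipodal zigzag on the sphere -/

section Zigzag

variable {X M : Type*} [AddCommGroup M]

/-- The operator `f ↦ f ∘ z - (-1)^a f` on cochains. -/
def signedDiff (z : X → X) (a : ℕ) : Cochain X M →+ Cochain X M :=
  pullback z - (-1 : ℤ) ^ a • AddMonoidHom.id (Cochain X M)

theorem signedDiff_apply (z : X → X) (a : ℕ) (f : Cochain X M) (l : List X) :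
    signedDiff z a f l = f (l.map z) - (-1 : ℤ) ^ a • f l := rfl

theorem δ_signedDiff (z : X → X) (a : ℕ) (f : Cochain X M) :
    δ (signedDiff z a f) = signedDiff z a (δ f) := by
  simp only [signedDiff, AddMonoidHom.sub_apply, AddMonoidHom.smul_apply,
    AddMonoidHom.id_apply, map_sub, map_zsmul, δ_pullback]

/-- The zigzags of length `n` on `S`: sequences of cochains whose members `f a`, on lists of length
`a`, descend by `f (a + 1) ∘ z - (-1)^(a + 1) f (a + 1) = δ (f a)`. -/
def zigzags [UniformSpace X] (z : X → X) (S : Set X) (n : ℕ) :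
    AddSubgroup (ℕ → Cochain X M) where
  carrier := {f | ∀ a < n, signedDiff z (a + 1) (f (a + 1)) =ᶠ[nearDiag S (a + 1)] δ (f a)}
  zero_mem' a _ := by simp only [Pi.zero_apply, map_zero, EventuallyEq.rfl]
  add_mem' hf hg a ha := by
    rw [Pi.add_apply, Pi.add_apply, map_add, map_add]
    exact (hf a ha).add (hg a ha)
  neg_mem' hf a ha := by
    rw [Pi.neg_apply, Pi.neg_apply, map_neg, map_neg]
    exact (hf a ha).neg

end Zigzag

section ZigzagStep

variable {m : ℕ}

open Classical in
/-- Extension of a zigzag from the subsphere of index `j` to the next one: near the equator it is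
pulled back along `flatten`, on the upper hemisphere it is forced by the zigzag relation once it
vanishes on the lower one. -/
def zigzagStep (j : Fin (m + 1)) (g : ℕ → Cochain (Sph m) ℤ) : ℕ → Cochain (Sph m) ℤ
  | 0, _ => 1
  | a + 1, l =>
    if ∀ x ∈ l, |x.1 j| ≤ 1 / 2 then (if a + 1 ≤ j then g (a + 1) (l.map (flatten j 1)) else 0)
    else if ∀ x ∈ l, 0 ≤ x.1 j then (-1) ^ a * δ (zigzagStep j g a) l else 0

/-- The zigzag `1 = f₀, f₁, …` on the subsphere of index `j`. Its member `f_j` is a cocycle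
generating the top cohomology of that subsphere. -/
def zigzag (m : ℕ) : ℕ → ℕ → Cochain (Sph m) ℤ
  | 0 => fun _ _ => 1
  | j + 1 => zigzagStep (Fin.ofNat (m + 1) j) (zigzag m j)

variable {j : Fin (m + 1)} {g : ℕ → Cochain (Sph m) ℤ}

theorem zigzagStep_of_band {a : ℕ} (ha : a ≤ j) (hg : ∀ l, g 0 l = 1) {l : List (Sph m)}
    (hl : ∀ x ∈ l, |x.1 j| ≤ 1 / 2) : zigzagStep j g a l = pullback (flatten j 1) (g a) l := by
  cases a with
  | zero => rw [pullback_apply, hg]; rfl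
  | succ a => rw [zigzagStep, if_pos hl, if_pos ha, pullback_apply]

theorem zigzagStep_top_of_band {l : List (Sph m)} (hl : ∀ x ∈ l, |x.1 j| ≤ 1 / 2) :
    zigzagStep j g (j + 1) l = 0 := by
  rw [zigzagStep, if_pos hl, if_neg (by omega)]

theorem zigzagStep_of_pos {a : ℕ} {l : List (Sph m)} (h : ¬ ∀ x ∈ l, |x.1 j| ≤ 1 / 2)
    (hpos : ∀ x ∈ l, 0 < x.1 j) :
    zigzagStep j g (a + 1) l = (-1) ^ a * δ (zigzagStep j g a) l := by
  rw [zigzagStep, if_neg h, if_pos fun x hx => (hpos x hx).le]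

theorem zigzagStep_of_neg {a : ℕ} {l : List (Sph m)} (h : ¬ ∀ x ∈ l, |x.1 j| ≤ 1 / 2)
    (hneg : ∀ x ∈ l, x.1 j < 0) : zigzagStep j g (a + 1) l = 0 := by
  rw [zigzagStep, if_neg h, if_neg fun hnonneg => h fun x hx => ?_]
  exact absurd (hnonneg x hx) (hneg x hx).not_ge

theorem δ_zigzagStep_of_band {a : ℕ} (ha : a ≤ j) (hg : ∀ l, g 0 l = 1) {l : List (Sph m)}
    (hl : ∀ x ∈ l, |x.1 j| ≤ 1 / 2) :
    δ (zigzagStep j g a) l = δ (g a) (l.map (flatten j 1)) := by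
  rw [← pullback_apply (flatten j 1) (δ (g a)), ← δ_pullback]
  exact δ_congr_of_sublist l fun l' hsub _ =>
    zigzagStep_of_band ha hg fun x hx => hl x (hsub.subset hx)

theorem uniformContinuous_coord (j : Fin (m + 1)) : UniformContinuous fun u : Sph m => u.1 j :=
  CompactSpace.uniformContinuous_of_continuous (continuous_coord j)

theorem uniformContinuousOn_flatten_one (j : Fin (m + 1)) :
    UniformContinuousOn (flatten j 1) {u : Sph m | |u.1 j| ≤ 1 / 2} := by
  refine IsCompact.uniformContinuousOn_of_continuous (IsClosed.isCompact
    (isClosed_le (continuous_coord j).abs continuous_const)) ?_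
  exact (continuousOn_flatten j).comp (f := fun u : Sph m => ((1 : ℝ), u))
    (Continuous.continuousOn (by fun_prop))
    fun u hu => ⟨Set.right_mem_Icc.2 zero_le_one, hu⟩

theorem pullback_flatten_one_congr {f f' : Cochain (Sph m) ℤ} {k : ℕ}
    (h : f =ᶠ[nearDiag (subsphere m j) k] f') :
    pullback (flatten j 1) f =ᶠ[nearDiag (equatorBand j) k] pullback (flatten j 1) f' :=
  pullback_congr ((uniformContinuousOn_flatten_one j).mono Set.inter_subset_right)
    (fun _ hu => flatten_one_mem_subsphere hu.1 hu.2) h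

theorem nearDiag_trichotomy (S : Set (Sph m)) (k : ℕ) (j : Fin (m + 1)) :
    ∀ᶠ l in nearDiag S k, (∀ x ∈ l, |x.1 j| ≤ 1 / 2) ∨
      ((¬ ∀ x ∈ l, |x.1 j| ≤ 1 / 2) ∧ ∀ x ∈ l, 0 < x.1 j) ∨
      ((¬ ∀ x ∈ l, |x.1 j| ≤ 1 / 2) ∧ ∀ x ∈ l, x.1 j < 0) := by
  have hU : {p : Sph m × Sph m | |p.1.1 j - p.2.1 j| < 1 / 2} ∈ 𝓤 (Sph m) :=
    uniformContinuous_coord j (Metric.dist_mem_uniformity one_half_pos)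
  filter_upwards [eventually_nearDiag_close (S := S) (k := k) hU] with l hl
  refine or_iff_not_imp_left.2 fun h => ?_
  obtain ⟨y, hy, hylt⟩ : ∃ y ∈ l, 1 / 2 < |y.1 j| := by
    by_contra! hle
    exact h hle
  have hclose : ∀ x ∈ l, |y.1 j - x.1 j| < 1 / 2 := hl.2.2 y hy
  rcases lt_abs.1 hylt with hylt | hylt
  · exact .inl ⟨h, fun x hx => by linarith [(abs_lt.1 (hclose x hx)).2]⟩
  · exact .inr ⟨h, fun x hx => by linarith [(abs_lt.1 (hclose x hx)).1]⟩

theorem forall_mem_map_neg_abs_le {l : List (Sph m)} :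
    (∀ x ∈ l.map Neg.neg, |x.1 j| ≤ 1 / 2) ↔ ∀ x ∈ l, |x.1 j| ≤ 1 / 2 := by
  simp only [List.forall_mem_map, Sph.neg_apply, abs_neg]

theorem map_flatten_one_map_neg {l : List (Sph m)} (hl : ∀ x ∈ l, |x.1 j| ≤ 1 / 2) :
    (l.map Neg.neg).map (flatten j 1) = (l.map (flatten j 1)).map Neg.neg := by
  simp only [List.map_map]
  exact List.map_congr_left fun x hx => flatten_neg (hl x hx) 1

theorem signedDiff_zigzagStep_of_band (hg : ∀ l, g 0 l = 1)
    (hzig : g ∈ zigzags Neg.neg (subsphere m j) j) (hd : IsCocycle (subsphere m j) j (g j))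
    {a : ℕ} (ha : a ≤ j) :
    ∀ᶠ l in nearDiag (subsphere m (j + 1)) (a + 1), (∀ x ∈ l, |x.1 j| ≤ 1 / 2) →
      signedDiff Neg.neg (a + 1) (zigzagStep j g (a + 1)) l = δ (zigzagStep j g a) l := by
  rcases ha.lt_or_eq with hlt | rfl
  · filter_upwards [eventually_nearDiag_of_inter (pullback_flatten_one_congr (hzig a hlt))]
      with l hband hl
    have hgl := hband hl
    rw [pullback_apply, pullback_apply, signedDiff_apply] at hgl
    rw [δ_zigzagStep_of_band ha hg hl, signedDiff_apply,
      zigzagStep_of_band hlt hg (forall_mem_map_neg_abs_le.2 hl), zigzagStep_of_band hlt hg hl,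
      pullback_apply, pullback_apply, map_flatten_one_map_neg hl, hgl]
  · filter_upwards [eventually_nearDiag_of_inter (pullback_flatten_one_congr hd)] with l hband hl
    have hgl := hband hl
    rw [pullback_apply, pullback_apply, Pi.zero_apply] at hgl
    rw [δ_zigzagStep_of_band le_rfl hg hl, hgl, signedDiff_apply, zigzagStep_top_of_band hl,
      zigzagStep_top_of_band (forall_mem_map_neg_abs_le.2 hl), smul_zero, sub_zero]

theorem signedDiff_zigzagStep_of_pos {a : ℕ} {l : List (Sph m)}
    (h : ¬ ∀ x ∈ l, |x.1 j| ≤ 1 / 2) (hpos : ∀ x ∈ l, 0 < x.1 j) :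
    signedDiff Neg.neg (a + 1) (zigzagStep j g (a + 1)) l = δ (zigzagStep j g a) l := by
  have hneg : ∀ x ∈ l.map Neg.neg, x.1 j < 0 :=
    List.forall_mem_map.2 fun x hx => neg_neg_of_pos (hpos x hx)
  have hsign : (-1 : ℤ) ^ (a + 1) * (-1) ^ a = -1 := by
    rw [← pow_add, Odd.neg_one_pow ⟨a, by ring⟩]
  rw [signedDiff_apply, zigzagStep_of_pos h hpos,
    zigzagStep_of_neg (forall_mem_map_neg_abs_le.not.2 h) hneg, smul_eq_mul, ← mul_assoc, hsign,
    neg_one_mul, zero_sub, neg_neg]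

theorem signedDiff_zigzagStep_of_neg {a : ℕ} {l : List (Sph m)}
    (h : ¬ ∀ x ∈ l, |x.1 j| ≤ 1 / 2) (hneg : ∀ x ∈ l, x.1 j < 0)
    (hsym : δ (signedDiff Neg.neg a (zigzagStep j g a)) l = 0) :
    signedDiff Neg.neg (a + 1) (zigzagStep j g (a + 1)) l = δ (zigzagStep j g a) l := by
  have hpos : ∀ x ∈ l.map Neg.neg, 0 < x.1 j :=
    List.forall_mem_map.2 fun x hx => neg_pos_of_neg (hneg x hx)
  have hsign : (-1 : ℤ) ^ a * (-1) ^ a = 1 := by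
    rw [← pow_add, Even.neg_one_pow ⟨a, rfl⟩]
  rw [δ_signedDiff, signedDiff_apply, sub_eq_zero] at hsym
  rw [signedDiff_apply, zigzagStep_of_neg h hneg,
    zigzagStep_of_pos (forall_mem_map_neg_abs_le.not.2 h) hpos, hsym, smul_eq_mul, smul_zero,
    ← mul_assoc, hsign, one_mul, sub_zero]

theorem zigzagStep_mem_zigzags (hg : ∀ l, g 0 l = 1)
    (hzig : g ∈ zigzags Neg.neg (subsphere m j) j) (hd : IsCocycle (subsphere m j) j (g j)) :
    zigzagStep j g ∈ zigzags Neg.neg (subsphere m (j + 1)) (j + 1) := by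
  have step : ∀ a : ℕ, a < j + 1 →
      IsCocycle (subsphere m (j + 1)) a (signedDiff Neg.neg a (zigzagStep j g a)) →
      signedDiff Neg.neg (a + 1) (zigzagStep j g (a + 1))
        =ᶠ[nearDiag (subsphere m (j + 1)) (a + 1)] δ (zigzagStep j g a) := fun a ha hsym => by
    filter_upwards [signedDiff_zigzagStep_of_band hg hzig hd (Nat.lt_succ_iff.1 ha), hsym,
      nearDiag_trichotomy _ (a + 1) j] with l hband hsym hl
    rcases hl with hl | ⟨hl, hpos⟩ | ⟨hl, hneg⟩
    · exact hband hl
    · exact signedDiff_zigzagStep_of_pos hl hpos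
    · exact signedDiff_zigzagStep_of_neg hl hneg hsym
  intro a
  induction a with
  | zero =>
    refine fun h => step 0 h (Eventually.of_forall fun l => ?_)
    have hconst : signedDiff Neg.neg 0 (zigzagStep j g 0) = 0 := by
      funext l
      rw [signedDiff_apply, pow_zero, one_smul]
      exact sub_self 1
    rw [hconst, map_zero]
  | succ a ih => exact fun h => step _ h (isCocycle_of_eventuallyEq_δ (ih (by omega)))

theorem zigzagStep_top_eq_δ (hg : ∀ l, g 0 l = 1) (hd : IsCocycle (subsphere m j) j (g j)) :
    zigzagStep j g (j + 1) =ᶠ[nearDiag (upperCap j) (j + 1)]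
      δ ((-1 : ℤ) ^ (j : ℕ) • zigzagStep j g j) := by
  filter_upwards [nearDiag_trichotomy _ (j + 1) j, eventually_nearDiag_of_forall fun l _ h => h,
    nearDiag_mono Set.inter_subset_left _
      (eventually_nearDiag_of_inter (pullback_flatten_one_congr hd))] with l hl hmem hband
  rw [map_zsmul, Pi.smul_apply]
  rcases hl with hl | ⟨hl, hpos⟩ | ⟨hl, hneg⟩
  · have hgl := hband hl
    rw [pullback_apply, pullback_apply, Pi.zero_apply] at hgl
    rw [zigzagStep_top_of_band hl, δ_zigzagStep_of_band le_rfl hg hl, hgl, smul_zero]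
  · rw [zigzagStep_of_pos hl hpos, smul_eq_mul]
  · exact absurd (fun x hx => abs_le.2 ⟨(hmem x hx).2, by linarith [hneg x hx]⟩) hl

theorem zigzagStep_top_eq_zero :
    zigzagStep j g (j + 1) =ᶠ[nearDiag (lowerCap j) (j + 1)] 0 := by
  filter_upwards [nearDiag_trichotomy _ (j + 1) j,
    eventually_nearDiag_of_forall fun l _ h => h] with l hl hmem
  rcases hl with hl | ⟨hl, hpos⟩ | ⟨hl, hneg⟩
  · exact zigzagStep_top_of_band hl
  · exact absurd (fun x hx => abs_le.2 ⟨by linarith [hpos x hx], (hmem x hx).2⟩) hl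
  · exact zigzagStep_of_neg hl hneg

theorem isCocycle_zigzagStep_top (hg : ∀ l, g 0 l = 1)
    (hd : IsCocycle (subsphere m j) j (g j)) :
    IsCocycle (subsphere m (j + 1)) (j + 1) (zigzagStep j g (j + 1)) := by
  refine nearDiag_le_sup_halfspaces _ _ (uniformContinuous_coord j)
    ⟨isCocycle_of_eventuallyEq_δ (zigzagStep_top_eq_δ hg hd), ?_⟩
  have := δ_congr (zigzagStep_top_eq_zero (j := j) (g := g))
  rwa [map_zero] at this

theorem zigzag_zero_right (j : ℕ) (l : List (Sph m)) : zigzag m j 0 l = 1 := by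
  cases j <;> rfl

theorem zigzag_succ (j : Fin (m + 1)) : zigzag m (j + 1) = zigzagStep j (zigzag m j) := by
  rw [zigzag, Fin.ofNat_val_eq_self]

theorem zigzag_mem_zigzags_and_isCocycle (j : ℕ) (hj : j ≤ m + 1) :
    zigzag m j ∈ zigzags Neg.neg (subsphere m j) j ∧
      IsCocycle (subsphere m j) j (zigzag m j j) := by
  induction j with
  | zero =>
    refine ⟨fun a ha => absurd ha a.not_lt_zero,
      eventually_nearDiag_of_forall fun l hlen hl => ?_⟩
    obtain ⟨x, hx⟩ := List.exists_mem_of_length_pos (l := l) (by omega)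
    exact absurd (hl x hx) (subsphere_zero ▸ Set.notMem_empty x)
  | succ j ih =>
    obtain ⟨hzig, hd⟩ := ih (by omega)
    lift j to Fin (m + 1) using hj
    rw [zigzag_succ]
    exact ⟨zigzagStep_mem_zigzags (zigzag_zero_right _) hzig hd,
      isCocycle_zigzagStep_top (zigzag_zero_right _) hd⟩

end ZigzagStep

/-! ### Products of spheres -/

section Product

variable {m : ℕ} {ι : Type*}

/-- Change the sign of a point of the sphere by an element of `ℤ/2`. -/
@[simp] def Sph.signSMul (t : ZMod 2) (u : Sph m) : Sph m := if t = 0 then u else -u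

theorem Sph.signSMul_eq_or_eq_neg (t : ZMod 2) (u : Sph m) :
    signSMul t u = u ∨ signSMul t u = -u := ite_eq_or_eq _ _ _

theorem Sph.signSMul_apply_mul_apply (t : ZMod 2) (u : Sph m) (p q : Fin (m + 1)) :
    (signSMul t u).1 p * (signSMul t u).1 q = u.1 p * u.1 q := by
  rcases signSMul_eq_or_eq_neg t u with e | e <;> rw [e]
  exact neg_mul_neg _ _

/-- The action of the sign group `(ℤ/2)^ι` on a product of spheres. -/
def signAct (a : ι → ZMod 2) (x : ι → Sph m) : ι → Sph m :=
  fun i => Sph.signSMul (a i) (x i)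

theorem signAct_zero (x : ι → Sph m) : signAct 0 x = x := by
  funext i
  simp [signAct]

theorem signAct_add (a b : ι → ZMod 2) (x : ι → Sph m) :
    signAct (a + b) x = signAct a (signAct b x) := by
  funext i
  have hadd : ∀ z w : ZMod 2, (z + w = 0 ↔ (z = 0 ↔ w = 0)) := by decide
  by_cases ha : a i = 0 <;> by_cases hb : b i = 0 <;> simp [signAct, ha, hb, hadd]

theorem signAct_signAct (a : ι → ZMod 2) (x : ι → Sph m) : signAct a (signAct a x) = x := by
  have ha : a + a = 0 := funext fun i => CharTwo.add_self_eq_zero (a i)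
  rw [← signAct_add, ha, signAct_zero]

theorem signAct_comm (a b : ι → ZMod 2) (x : ι → Sph m) :
    signAct a (signAct b x) = signAct b (signAct a x) := by
  rw [← signAct_add, ← signAct_add, add_comm]

theorem eq_zero_of_signAct_eq_self {a : ι → ZMod 2} {x : ι → Sph m} (h : signAct a x = x) :
    a = 0 := by
  funext i
  by_contra hi
  have hx : signAct a x i = x i := congrFun h i
  rw [signAct, Sph.signSMul, if_neg (by simpa using hi)] at hx
  exact ne_neg_of_mem_unit_sphere ℝ (x i) hx.symm

theorem eq_of_signAct_eq {a b : ι → ZMod 2} {x : ι → Sph m} (h : signAct a x = signAct b x) :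
    a = b := by
  have hadd : a + b = 0 := eq_zero_of_signAct_eq_self (x := x) (by
    rw [signAct_add, ← h, signAct_signAct])
  exact funext fun i => CharTwo.add_eq_zero.1 (congrFun hadd i)

theorem continuous_signAct (a : ι → ZMod 2) : Continuous (signAct (m := m) a) := by
  refine continuous_pi fun i => ?_
  by_cases h : a i = 0
  · simpa [signAct, h] using continuous_apply i
  · simp only [signAct, Sph.signSMul, h, if_false]
    exact continuous_neg.comp (continuous_apply i)

theorem uniformContinuousOn_signAct (a : ι → ZMod 2) (S : Set (ι → Sph m)) :
    UniformContinuousOn (signAct a) S :=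
  (CompactSpace.uniformContinuous_of_continuous (continuous_signAct a)).uniformContinuousOn

/-- The elements of the sign group supported on `I`, as maps. -/
def signGroup (I : Finset ι) : Set ((ι → Sph m) → (ι → Sph m)) :=
  {γ | ∃ a : ι → ZMod 2, (∀ i, i ∉ I → a i = 0) ∧ γ = signAct a}

theorem signGroup_mono {I J : Finset ι} (h : I ⊆ J) : signGroup (m := m) I ⊆ signGroup J :=
  fun _ ⟨a, ha, e⟩ => ⟨a, fun i hi => ha i fun hI => hi (h hI), e⟩

theorem signGroup_finite [Finite ι] (I : Finset ι) : (signGroup (m := m) I).Finite :=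
  (Set.finite_range fun a : ι → ZMod 2 => signAct (m := m) a).subset fun _ ⟨a, _, e⟩ => ⟨a, e.symm⟩

/-- The points that agree with `y` outside `I ∪ {i}` and have `i`-th coordinate in `K`. -/
def strip (I : Finset ι) (y : ι → Sph m) (i : ι) (K : Set (Sph m)) : Set (ι → Sph m) :=
  {x | x i ∈ K ∧ ∀ l, l ∉ I → l ≠ i → x l = y l}

/-- The points that agree with `y` outside `I`. -/
def box (I : Finset ι) (y : ι → Sph m) : Set (ι → Sph m) :=
  {x | ∀ l, l ∉ I → x l = y l}

variable {I : Finset ι} {y : ι → Sph m} {i : ι} {K L : Set (Sph m)}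

theorem strip_mono (h : K ⊆ L) : strip I y i K ⊆ strip I y i L := fun _ hx => ⟨h hx.1, hx.2⟩

theorem box_univ [Fintype ι] (y : ι → Sph m) : box Finset.univ y = Set.univ :=
  Set.eq_univ_of_forall fun _ l hl => absurd (Finset.mem_univ l) hl

theorem box_empty (y : ι → Sph m) : box ∅ y = {y} := by
  ext x
  simp [box, funext_iff]

theorem isClosed_strip (I : Finset ι) (y : ι → Sph m) (i : ι) (hK : IsClosed K) :
    IsClosed (strip I y i K) := by
  have hstrip : strip I y i K =
      (fun x => x i) ⁻¹' K ∩ ⋂ l, ⋂ _ : l ∉ I, ⋂ _ : l ≠ i, {x | x l = y l} := by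
    ext x
    simp [strip]
  rw [hstrip]
  exact (hK.preimage (continuous_apply i)).inter (isClosed_iInter fun l => isClosed_iInter fun _ =>
    isClosed_iInter fun _ => isClosed_eq (continuous_apply l) continuous_const)

theorem pullback_eval_congr {M : Type*} [AddCommGroup M] {k : ℕ} {f g : Cochain (Sph m) M}
    (h : f =ᶠ[nearDiag K k] g) :
    pullback (fun x : ι → Sph m => x i) f =ᶠ[nearDiag (strip I y i K) k]
      pullback (fun x => x i) g :=
  pullback_congr (Pi.uniformContinuous_proj _ i).uniformContinuousOn (fun _ hx => hx.1) h

variable [DecidableEq ι]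

theorem strip_univ (I : Finset ι) (y : ι → Sph m) (i : ι) :
    strip I y i Set.univ = box (insert i I) y := by
  ext x
  simp only [strip, box, Set.mem_ofPred_eq, Set.mem_univ, true_and, Finset.mem_insert, not_or]
  exact ⟨fun h l hl => h l hl.2 hl.1, fun h l hI hi => h l ⟨hi, hI⟩⟩

theorem strip_singleton (y : ι → Sph m) (hi : i ∉ I) (u : Sph m) :
    strip I y i {u} = box I (Function.update y i u) := by
  ext x
  simp only [strip, box, Set.mem_ofPred_eq, Set.mem_singleton_iff]
  constructor
  · rintro ⟨hxi, hx⟩ l hl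
    by_cases h : l = i
    · subst h
      simpa using hxi
    · rw [Function.update_of_ne h, hx l hl h]
  · intro h
    refine ⟨by simpa using h i hi, fun l hl hli => ?_⟩
    rw [h l hl, Function.update_of_ne hli]

/-- The antipodal map of the `i`-th factor. -/
abbrev antipodeAt (i : ι) : (ι → Sph m) → ι → Sph m := signAct (Pi.single i 1)

theorem antipodeAt_mem_signGroup (h : i ∈ I) : antipodeAt (m := m) i ∈ signGroup I :=
  ⟨_, fun _ hl => Pi.single_eq_of_ne (ne_of_mem_of_not_mem h hl).symm 1, rfl⟩

theorem antipodeAt_mapsTo_strip (h : ∀ u ∈ K, -u ∈ L) :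
    Set.MapsTo (antipodeAt i) (strip I y i K) (strip I y i L) := by
  rintro x ⟨hxi, hx⟩
  exact ⟨by simpa [signAct] using h _ hxi, fun l hl hli => by simp [signAct, hli, hx l hl hli]⟩

theorem signAct_mem_strip_iff (hK : ∀ u ∈ K, -u ∈ K) {b : ι → ZMod 2}
    (hb : ∀ l, l ∉ insert i I → b l = 0) (x : ι → Sph m) :
    signAct b x ∈ strip I y i K ↔ x ∈ strip I y i K := by
  have hmaps : Set.MapsTo (signAct b) (strip I y i K) (strip I y i K) := by
    rintro x ⟨hxi, hx⟩
    refine ⟨?_, fun l hl hli => by simp [signAct, hb l (by simp [hl, hli]), hx l hl hli]⟩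
    rw [signAct, Sph.signSMul]
    split_ifs
    · exact hxi
    · exact hK _ hxi
  exact ⟨fun h => signAct_signAct b x ▸ hmaps h, fun h => hmaps h⟩

/-- Apply a map of the sphere to one coordinate. -/
def mapCoord (i : ι) (H : Sph m → Sph m) (x : ι → Sph m) : ι → Sph m :=
  Function.update x i (H (x i))

theorem uniformContinuousOn_mapCoord (hK : IsClosed K) {H : ℝ → Sph m → Sph m}
    (hH : ContinuousOn (fun p : ℝ × Sph m => H p.1 p.2) (Set.Icc 0 1 ×ˢ K)) :
    UniformContinuousOn (fun p : ℝ × (ι → Sph m) => mapCoord i (H p.1) p.2)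
      (Set.Icc 0 1 ×ˢ strip I y i K) := by
  refine IsCompact.uniformContinuousOn_of_continuous
    (isCompact_Icc.prod (isClosed_strip I y i hK).isCompact) (continuousOn_pi.2 fun l => ?_)
  by_cases h : l = i
  · subst h
    simp only [mapCoord, Function.update_self]
    exact hH.comp (f := fun p : ℝ × (ι → Sph m) => (p.1, p.2 l))
      (Continuous.continuousOn (by fun_prop)) fun p hp => ⟨hp.1, hp.2.1⟩
  · simp only [mapCoord, Function.update_of_ne h]
    exact Continuous.continuousOn (by fun_prop)

theorem mapCoord_mapsTo {H : Sph m → Sph m} (h : Set.MapsTo H K L) :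
    Set.MapsTo (mapCoord i H) (strip I y i K) (strip I y i L) := by
  rintro x ⟨hxi, hx⟩
  refine ⟨by simpa [mapCoord] using h hxi, fun l hl hli => ?_⟩
  rw [mapCoord, Function.update_of_ne hli, hx l hl hli]

theorem mapCoord_eq_self {H : Sph m → Sph m} {x : ι → Sph m} (h : H (x i) = x i) :
    mapCoord i H x = x := by
  rw [mapCoord, h, Function.update_eq_self]

theorem mapCoord_signAct_of_eq_zero {a : ι → ZMod 2} (ha : a i = 0) (H : Sph m → Sph m)
    (x : ι → Sph m) : mapCoord i H (signAct a x) = signAct a (mapCoord i H x) := by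
  funext l
  by_cases h : l = i
  · subst h
    simp [mapCoord, signAct, ha]
  · simp [mapCoord, signAct, Function.update_of_ne h]

theorem mapCoord_signAct_of_odd (a : ι → ZMod 2) {H : Sph m → Sph m} {x : ι → Sph m}
    (hH : H (-x i) = -H (x i)) : mapCoord i H (signAct a x) = signAct a (mapCoord i H x) := by
  funext l
  by_cases h : l = i
  · subst h
    by_cases ha : a l = 0 <;> simp [mapCoord, signAct, ha, hH]
  · simp [mapCoord, signAct, Function.update_of_ne h]

end Product

/-! ### Mayer–Vietoris gluing -/

section MayerVietoris

variable {X M : Type*} [UniformSpace X] [AddCommGroup M]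

/-- The germ of `f` along the diagonal of `S` is the coboundary of a germ. -/
def IsCoboundary (S : Set X) (k : ℕ) (f : Cochain X M) : Prop :=
  ∃ h : Cochain X M, f =ᶠ[nearDiag S k] δ h

/-- Every cocycle of arity `k` on `S` with values in `M` is a coboundary: the reduced
Alexander–Spanier cohomology of `S` in degree `k - 1` vanishes. -/
def IsAcyclic (M : Type*) [AddCommGroup M] (S : Set X) (k : ℕ) : Prop :=
  ∀ f : Cochain X M, IsCocycle S k f → IsCoboundary S k f

theorem isCocycle_sub_of_eq_δ {S : Set X} {k : ℕ} {f p q : Cochain X M}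
    (hp : f =ᶠ[nearDiag S (k + 1)] δ p) (hq : f =ᶠ[nearDiag S (k + 1)] δ q) :
    IsCocycle S k (p - q) := by
  filter_upwards [hp, hq] with l hp hq
  rw [map_sub, Pi.sub_apply, ← hp, ← hq, sub_self, Pi.zero_apply]

theorem mayer_vietoris {S A B : Set X} {k : ℕ}
    (hcov : nearDiag S (k + 1) ≤ nearDiag A (k + 1) ⊔ nearDiag B (k + 1))
    {f L E p q h : Cochain X M} (hp : f =ᶠ[nearDiag A (k + 1)] δ p)
    (hq : f =ᶠ[nearDiag B (k + 1)] δ q) (hLA : L =ᶠ[nearDiag A (k + 1)] δ E)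
    (hLB : L =ᶠ[nearDiag B (k + 1)] 0) (hpq : p - q =ᶠ[nearDiag (A ∩ B) k] E + δ h) :
    ∃ H : Cochain X M, f =ᶠ[nearDiag S (k + 1)] L + δ H := by
  refine ⟨glue A (p - E) (q + δ h), hcov ⟨?_, ?_⟩⟩
  · filter_upwards [δ_congr (glue_left A (p - E) (q + δ h) k), hp, hLA] with l hglue hp hL
    rw [Pi.add_apply, hglue, hp, hL, map_sub, Pi.sub_apply]
    abel
  · have hB : glue A (p - E) (q + δ h) =ᶠ[nearDiag B k] q + δ h := glue_right <| by
      filter_upwards [hpq] with l hl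
      rw [Pi.sub_apply, Pi.add_apply, sub_eq_iff_eq_add] at hl
      rw [Pi.sub_apply, Pi.add_apply, hl]
      abel
    filter_upwards [δ_congr hB, hq, hLB] with l hglue hq hL
    rw [Pi.add_apply, hglue, hq, hL, map_add, δ_δ, Pi.zero_apply, add_zero, zero_add]

end MayerVietoris

section SmulConst

variable {X M : Type*} [AddCommGroup M]

/-- Multiplication of an integral cochain by a constant coefficient. -/
def smulConst (c : M) (f : Cochain X ℤ) : Cochain X M := fun l => f l • c

theorem smulConst_apply (c : M) (f : Cochain X ℤ) (l : List X) : smulConst c f l = f l • c := rfl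

theorem smulConst_zero (f : Cochain X ℤ) : smulConst (0 : M) f = 0 :=
  funext fun _ => smul_zero _

theorem smulConst_zsmul (c : M) (z : ℤ) (f : Cochain X ℤ) :
    smulConst c (z • f) = smulConst (z • c) f := by
  funext l
  rw [smulConst_apply, smulConst_apply, Pi.smul_apply, smul_eq_mul, mul_comm, mul_smul]

theorem δ_smulConst (c : M) (f : Cochain X ℤ) : δ (smulConst c f) = smulConst c (δ f) :=
  δ_map_coeff (zmultiplesHom M c) f

end SmulConst

section Strip

variable {m : ℕ} {ι M : Type*} [AddCommGroup M] {I : Finset ι} {y : ι → Sph m} {i : ι}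

theorem nearDiag_strip_le (I : Finset ι) (y : ι → Sph m) (i : ι) (j : Fin (m + 1)) (k : ℕ) :
    nearDiag (strip I y i (subsphere m (j + 1))) k ≤
      nearDiag (strip I y i (upperCap j)) k ⊔ nearDiag (strip I y i (lowerCap j)) k :=
  (nearDiag_le_sup_halfspaces (strip I y i (subsphere m (j + 1))) k
    (u := fun x => (x i).1 j)
    ((uniformContinuous_coord j).comp (Pi.uniformContinuous_proj _ i))).trans
    (sup_le_sup (nearDiag_mono (T := strip I y i (upperCap j))
      (fun _ hx => ⟨⟨hx.1.1, hx.2⟩, hx.1.2⟩) k) (nearDiag_mono (T := strip I y i (lowerCap j))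
      (fun _ hx => ⟨⟨hx.1.1, hx.2⟩, hx.1.2⟩) k))

theorem strip_upperCap_inter_strip_lowerCap_subset (j : Fin (m + 1)) :
    strip I y i (upperCap j) ∩ strip I y i (lowerCap j) ⊆ strip I y i (equatorBand j) :=
  fun x hx => ⟨⟨hx.1.1.1, show |(x i).1 j| ≤ 1 / 2 from abs_le.2 ⟨hx.1.1.2, hx.2.1.2⟩⟩, hx.1.2⟩

/-- The generator of the top cohomology of the subsphere of index `j` in the `i`-th factor. -/
def sphereCocycle (m j : ℕ) (i : ι) : Cochain (ι → Sph m) ℤ :=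
  pullback (fun x => x i) (zigzag m j j)

theorem sphereCocycle_succ_eq_δ (j : Fin (m + 1)) :
    (-1 : ℤ) ^ (j : ℕ) • sphereCocycle m (j + 1) i =ᶠ[nearDiag (strip I y i (upperCap j)) (j + 1)]
      δ (pullback (fun x => x i) (zigzag m (j + 1) j)) := by
  have hd := (zigzag_mem_zigzags_and_isCocycle (m := m) j (by omega)).2
  have hsign : (-1 : ℤ) ^ (j : ℕ) * (-1) ^ (j : ℕ) = 1 := by rw [← mul_pow]; simp
  rw [sphereCocycle, zigzag_succ, δ_pullback]
  filter_upwards [pullback_eval_congr (zigzagStep_top_eq_δ (zigzag_zero_right j) hd)] with l hl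
  rw [Pi.smul_apply, hl, map_zsmul, map_zsmul, Pi.smul_apply, smul_smul, hsign, one_smul]

theorem sphereCocycle_succ_eq_zero (j : Fin (m + 1)) :
    sphereCocycle m (j + 1) i =ᶠ[nearDiag (strip I y i (lowerCap j)) (j + 1)] 0 := by
  rw [sphereCocycle, zigzag_succ]
  have := pullback_eval_congr (I := I) (y := y) (i := i)
    (zigzagStep_top_eq_zero (j := j) (g := zigzag m j))
  rwa [map_zero] at this

theorem deform_cap {J K : Set (Sph m)} {v : Sph m} (hK : IsClosed K) (hvK : -v ∉ K)
    (hJ : ∀ t ∈ Set.Icc (0 : ℝ) 1, Set.MapsTo (contract v t) K J) {k : ℕ}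
    {f : Cochain (ι → Sph m) M} (hf : IsCocycle (strip I y i J) k f)
    {Γ : Set ((ι → Sph m) → (ι → Sph m))} (hΓ : Γ ⊆ signGroup I) (hi : i ∉ I)
    (hinv : InvariantGerm Γ (strip I y i J) k f) {h : Cochain (ι → Sph m) M}
    (hfh : f =ᶠ[nearDiag (strip I y i {v}) k] δ h)
    (hh : ∀ j, j + 1 = k → InvariantGerm Γ (strip I y i {v}) j h) :
    ∃ h' : Cochain (ι → Sph m) M, h' [] = h [] ∧
      (∀ j, j + 1 = k → InvariantGerm Γ (strip I y i K) j h') ∧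
      f =ᶠ[nearDiag (strip I y i K) k] δ h' := by
  classical
  have hcomm : ∀ γ ∈ Γ, ∀ t ∈ Set.Icc (0 : ℝ) 1, ∀ x ∈ strip I y i K,
      mapCoord i (contract v t) (γ x) = γ (mapCoord i (contract v t) x) := fun γ hγ t _ x _ => by
    obtain ⟨a, ha, rfl⟩ := hΓ hγ
    exact mapCoord_signAct_of_eq_zero (ha i hi) _ _
  have hcont : ContinuousOn (fun p : ℝ × Sph m => contract v p.1 p.2) (Set.Icc 0 1 ×ˢ K) :=
    (continuousOn_contract v).mono (Set.prod_mono_right fun u hu huv => hvK (huv ▸ hu))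
  obtain ⟨h', hnil, hinv', heq⟩ := deform (Φ := fun t => mapCoord i (contract v t))
    (S' := strip I y i {v})
    (uniformContinuousOn_mapCoord hK hcont) (fun t ht => mapCoord_mapsTo (hJ t ht))
    (fun x _ => mapCoord_eq_self (contract_zero v _))
    (mapCoord_mapsTo fun u _ => contract_one v u) hf hcomm hinv (g := 0) (by rwa [zero_add]) hh
  exact ⟨h', hnil, hinv', by rwa [map_zero, zero_add] at heq⟩

theorem deform_equatorBand [DecidableEq ι] (j : Fin (m + 1)) {k : ℕ} {f : Cochain (ι → Sph m) M}
    (hf : IsCocycle (strip I y i (equatorBand j)) k f)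
    {Γ : Set ((ι → Sph m) → (ι → Sph m))} {J : Finset ι} (hΓ : Γ ⊆ signGroup J)
    (hinv : InvariantGerm Γ (strip I y i (equatorBand j)) k f) {g h : Cochain (ι → Sph m) M}
    (hgh : f =ᶠ[nearDiag (strip I y i (subsphere m j)) k] g + δ h)
    (hh : ∀ j', j' + 1 = k → InvariantGerm Γ (strip I y i (subsphere m j)) j' h) :
    ∃ h' : Cochain (ι → Sph m) M, h' [] = h [] ∧
      (∀ j', j' + 1 = k → InvariantGerm Γ (strip I y i (equatorBand j)) j' h') ∧
      f =ᶠ[nearDiag (strip I y i (equatorBand j)) k]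
        pullback (mapCoord i (flatten j 1)) g + δ h' := by
  have hcomm : ∀ γ ∈ Γ, ∀ t ∈ Set.Icc (0 : ℝ) 1, ∀ x ∈ strip I y i (equatorBand j),
      mapCoord i (flatten j t) (γ x) = γ (mapCoord i (flatten j t) x) := fun γ hγ t _ x hx => by
    obtain ⟨a, -, rfl⟩ := hΓ hγ
    exact mapCoord_signAct_of_odd _ (flatten_neg hx.1.2 t)
  exact deform (Φ := fun t => mapCoord i (flatten j t))
    (uniformContinuousOn_mapCoord (isClosed_equatorBand j)
    ((continuousOn_flatten j).mono (Set.prod_mono_right Set.inter_subset_right)))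
    (fun t ht => mapCoord_mapsTo fun u hu => flatten_mem_equatorBand hu ht)
    (fun x _ => mapCoord_eq_self (flatten_zero j _))
    (mapCoord_mapsTo fun u hu => flatten_one_mem_subsphere hu.1 hu.2) hf hcomm hinv hgh hh

theorem IsCoboundary.strip_of_singleton {J K : Set (Sph m)} {v : Sph m} {k : ℕ}
    {f : Cochain (ι → Sph m) M} (h : IsCoboundary (strip I y i {v}) k f)
    (hf : IsCocycle (strip I y i J) k f) (hi : i ∉ I) (hK : IsClosed K) (hvK : -v ∉ K)
    (hJ : ∀ t ∈ Set.Icc (0 : ℝ) 1, Set.MapsTo (contract v t) K J) :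
    IsCoboundary (strip I y i K) k f := by
  obtain ⟨h, hfh⟩ := h
  obtain ⟨h', -, -, heq⟩ := deform_cap hK hvK hJ hf (Set.empty_subset _) hi
    (InvariantGerm.empty _ _ _) hfh fun _ _ => InvariantGerm.empty _ _ _
  exact ⟨h', heq⟩

theorem mayer_vietoris_strip [DecidableEq ι] (j : Fin (m + 1)) {k : ℕ}
    {f p q L E g h : Cochain (ι → Sph m) M}
    (hp : f =ᶠ[nearDiag (strip I y i (upperCap j)) (k + 1)] δ p)
    (hq : f =ᶠ[nearDiag (strip I y i (lowerCap j)) (k + 1)] δ q)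
    (hLupper : L =ᶠ[nearDiag (strip I y i (upperCap j)) (k + 1)] δ E)
    (hLlower : L =ᶠ[nearDiag (strip I y i (lowerCap j)) (k + 1)] 0)
    (hpq : p - q =ᶠ[nearDiag (strip I y i (subsphere m j)) k] g + δ h)
    (hgE : pullback (mapCoord i (flatten j 1)) g =ᶠ[nearDiag (strip I y i (equatorBand j)) k] E) :
    ∃ H : Cochain (ι → Sph m) M,
      f =ᶠ[nearDiag (strip I y i (subsphere m (j + 1))) (k + 1)] L + δ H := by
  have hcocycle : IsCocycle (strip I y i (equatorBand j)) k (p - q) := isCocycle_sub_of_eq_δ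
    (nearDiag_mono (strip_mono (equatorBand_subset_upperCap j)) _ hp)
    (nearDiag_mono (strip_mono (equatorBand_subset_lowerCap j)) _ hq)
  obtain ⟨h', -, -, heq⟩ := deform_equatorBand j hcocycle (Set.empty_subset (signGroup ∅))
    (InvariantGerm.empty _ _ _) hpq fun _ _ => InvariantGerm.empty _ _ _
  exact mayer_vietoris (nearDiag_strip_le I y i j (k + 1)) hp hq hLupper hLlower
    (nearDiag_mono (strip_upperCap_inter_strip_lowerCap_subset j) _
      (heq.trans (hgE.add EventuallyEq.rfl)))

theorem pullback_flatten_sphereCocycle [DecidableEq ι] (j : Fin (m + 1)) (k : ℕ) :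
    pullback (mapCoord i (flatten j 1)) (sphereCocycle m j i)
      =ᶠ[nearDiag (strip I y i (equatorBand j)) k] pullback (fun x => x i) (zigzag m (j + 1) j) :=
  eventually_nearDiag_of_forall fun l _ hl => by
    have hband : ∀ u ∈ l.map fun x => x i, |u.1 j| ≤ 1 / 2 :=
      List.forall_mem_map.2 fun x hx => (hl x hx).1.2
    rw [zigzag_succ, pullback_apply _ (zigzagStep _ _ _),
      zigzagStep_of_band le_rfl (zigzag_zero_right j) hband]
    simp [sphereCocycle, pullback_apply, mapCoord, Function.comp_def]

theorem mayer_vietoris_sphereCocycle (j : Fin (m + 1)) {f p q h : Cochain (ι → Sph m) M} {c : M}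
    (hp : f =ᶠ[nearDiag (strip I y i (upperCap j)) (j + 1)] δ p)
    (hq : f =ᶠ[nearDiag (strip I y i (lowerCap j)) (j + 1)] δ q)
    (hpq : p - q =ᶠ[nearDiag (strip I y i (subsphere m j)) j]
      smulConst c (sphereCocycle m j i) + δ h) :
    ∃ H : Cochain (ι → Sph m) M, f =ᶠ[nearDiag (strip I y i (subsphere m (j + 1))) (j + 1)]
      smulConst ((-1 : ℤ) ^ (j : ℕ) • c) (sphereCocycle m (j + 1) i) + δ H := by
  classical
  rw [← smulConst_zsmul]
  have hupper : smulConst c ((-1 : ℤ) ^ (j : ℕ) • sphereCocycle m (j + 1) i)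
      =ᶠ[nearDiag (strip I y i (upperCap j)) (j + 1)]
        δ (smulConst c (pullback (fun x => x i) (zigzag m (j + 1) j))) := by
    rw [δ_smulConst]
    exact (sphereCocycle_succ_eq_δ j).fun_comp (· • c)
  have hlower : smulConst c ((-1 : ℤ) ^ (j : ℕ) • sphereCocycle m (j + 1) i)
      =ᶠ[nearDiag (strip I y i (lowerCap j)) (j + 1)] 0 := by
    filter_upwards [sphereCocycle_succ_eq_zero j] with l hl
    rw [smulConst_apply, Pi.smul_apply, hl, Pi.zero_apply, smul_zero, zero_smul, Pi.zero_apply]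
  exact mayer_vietoris_strip j hp hq hupper hlower hpq
    ((pullback_flatten_sphereCocycle j j).fun_comp (· • c))

theorem exists_primitives_sub_eq {k : ℕ} (hi : i ∉ I)
    (hI : ∀ y, IsAcyclic M (box I y : Set (ι → Sph m)) k) (j : Fin (m + 1))
    {f : Cochain (ι → Sph m) M} (hf : IsCocycle (strip I y i (subsphere m (j + 1))) (k + 1) f)
    (hfu : ∀ u ∈ subsphere m (j + 1), IsCoboundary (strip I y i {u}) (k + 1) f) :
    ∃ p q : Cochain (ι → Sph m) M,
      f =ᶠ[nearDiag (strip I y i (upperCap j)) (k + 1)] δ p ∧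
      f =ᶠ[nearDiag (strip I y i (lowerCap j)) (k + 1)] δ q ∧
      IsCocycle (strip I y i (subsphere m j)) k (p - q) ∧
      ∀ u ∈ subsphere m j, IsCoboundary (strip I y i {u}) k (p - q) := by
  classical
  obtain ⟨p, hp⟩ := (hfu _ (pole_mem_subsphere j)).strip_of_singleton hf hi (isClosed_upperCap j)
    (neg_pole_notMem_upperCap j) fun t ht u hu => contract_mem_subsphere_of_mem_upperCap hu ht
  obtain ⟨q, hq⟩ := (hfu _ (neg_mem_subsphere (pole_mem_subsphere j))).strip_of_singleton hf hi
    (isClosed_lowerCap j) (by rw [neg_neg]; exact pole_notMem_lowerCap j)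
    fun t ht u hu => contract_neg_mem_subsphere_of_mem_lowerCap hu ht
  have hequator := subsphere_subset_equatorBand (m := m) j
  have hpq : IsCocycle (strip I y i (subsphere m j)) k (p - q) := isCocycle_sub_of_eq_δ
    (nearDiag_mono (strip_mono (hequator.trans (equatorBand_subset_upperCap j))) _ hp)
    (nearDiag_mono (strip_mono (hequator.trans (equatorBand_subset_lowerCap j))) _ hq)
  refine ⟨p, q, hp, hq, hpq, fun u hu => ?_⟩
  have hslice := hpq.mono (strip_mono (Set.singleton_subset_iff.2 hu))
  rw [strip_singleton y hi] at hslice ⊢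
  exact hI _ _ hslice

theorem exists_strip_class (hi : i ∉ I) {j : ℕ} (hj : j ≤ m + 1)
    (hI : ∀ k < j, ∀ y, IsAcyclic M (box I y : Set (ι → Sph m)) k) {k : ℕ} (hk : k ≤ j)
    {f : Cochain (ι → Sph m) M} (hf : IsCocycle (strip I y i (subsphere m j)) k f)
    (hfu : ∀ u ∈ subsphere m j, IsCoboundary (strip I y i {u}) k f) :
    ∃ (c : M) (h : Cochain (ι → Sph m) M), (k < j → c = 0) ∧
      f =ᶠ[nearDiag (strip I y i (subsphere m j)) k]
        smulConst c (sphereCocycle m j i) + δ h := by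
  classical
  induction j generalizing k f with
  | zero =>
    obtain rfl : k = 0 := by omega
    refine ⟨f [], 0, fun h => absurd h (lt_irrefl _), eventually_nearDiag_zero.2 ?_⟩
    simp [smulConst_apply, sphereCocycle, pullback_apply, zigzag]
  | succ j ih =>
    lift j to Fin (m + 1) using hj
    cases k with
    | zero =>
      obtain ⟨h, hfh⟩ := hfu (pole j) (pole_mem_subsphere j)
      refine ⟨0, 0, fun _ => rfl, eventually_nearDiag_zero.2 ?_⟩
      simpa [smulConst_apply] using eventually_nearDiag_zero.1 hfh
    | succ k =>
      obtain ⟨p, q, hp, hq, hpq, hpqu⟩ := exists_primitives_sub_eq hi (hI k (by omega)) j hf hfu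
      obtain ⟨c, h, hc, hch⟩ :=
        ih j.2.le (fun k hk => hI k (by omega)) (by omega) hpq hpqu
      rcases (Nat.succ_le_succ_iff.1 hk).lt_or_eq with hkj | rfl
      · rw [hc hkj, smulConst_zero] at hch
        obtain ⟨H, hH⟩ := mayer_vietoris_strip j hp hq (L := 0) (E := 0)
          (by rw [map_zero]) .rfl hch .rfl
        exact ⟨0, H, fun _ => rfl, by rwa [smulConst_zero]⟩
      · obtain ⟨H, hH⟩ := mayer_vietoris_sphereCocycle j hp hq hch
        exact ⟨_, H, fun h => absurd h (lt_irrefl _), hH⟩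

end Strip

/-! ### Top cohomology of a product of spheres -/

section TopClass

variable {m : ℕ} {ι M : Type*} [AddCommGroup M]

theorem isAcyclic_singleton {X : Type*} [UniformSpace X] (y : X) (k : ℕ) : IsAcyclic M {y} k := by
  rintro f ⟨V, hV, hf⟩
  refine ⟨fun l => f (y :: l), V, hV, fun l hlen hl _ => ?_⟩
  have hy : ∀ x ∈ y :: l, x = y := List.forall_mem_cons.2 ⟨rfl, hl⟩
  have hcons : δ f (y :: l) = 0 := hf (y :: l) (by rw [List.length_cons, hlen]) hy
    fun x hx x' hx' => by rw [hy x hx, hy x' hx']; exact refl_mem_uniformity hV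
  exact sub_eq_zero.1 hcons

theorem isCocycle_sphereCocycle (i : ι) (S : Set (ι → Sph m)) :
    IsCocycle S (m + 1) (sphereCocycle m (m + 1) i) := by
  have hz := (zigzag_mem_zigzags_and_isCocycle (m := m) (m + 1) le_rfl).2
  rw [subsphere_top] at hz
  have := pullback_congr (Pi.uniformContinuous_proj (fun _ : ι => Sph m) i).uniformContinuousOn
    (Set.mapsTo_univ _ S) hz
  rwa [map_zero, ← δ_pullback] at this

theorem isCocycle_sum_sphereCocycle (s : Finset ι) (c : ι → ℤ) (S : Set (ι → Sph m)) :
    IsCocycle S (m + 1) (∑ i ∈ s, c i • sphereCocycle m (m + 1) i) := by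
  have hcocycle : ∀ᶠ l in nearDiag S (m + 1 + 1), ∀ i ∈ s, δ (sphereCocycle m (m + 1) i) l = 0 :=
    (eventually_all_finset s).2 fun i _ => isCocycle_sphereCocycle i S
  filter_upwards [hcocycle] with l hl
  rw [map_sum, Finset.sum_apply, Pi.zero_apply]
  exact Finset.sum_eq_zero fun i hi => by rw [map_zsmul, Pi.smul_apply, hl i hi, smul_zero]

/-- The integral combination of the top classes of the factors with coefficients `c`. -/
def topCocycle [Fintype ι] (m : ℕ) : (ι → ℤ) →+ Cochain (ι → Sph m) ℤ :=
  AddMonoidHom.mk' (fun c => ∑ i, c i • sphereCocycle m (m + 1) i) fun c d => by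
    simp only [Pi.add_apply, add_smul, Finset.sum_add_distrib]

theorem topCocycle_apply [Fintype ι] (c : ι → ℤ) :
    topCocycle m c = ∑ i, c i • sphereCocycle m (m + 1) i := rfl

theorem isCocycle_topCocycle [Fintype ι] (c : ι → ℤ) :
    IsCocycle Set.univ (m + 1) (topCocycle m c) :=
  isCocycle_sum_sphereCocycle _ c _

section Box

variable {I : Finset ι} {y : ι → Sph m} {i : ι}

theorem strip_subsphere_top [DecidableEq ι] (I : Finset ι) (y : ι → Sph m) (i : ι) :
    strip I y i (subsphere m (m + 1)) = box (insert i I) y := by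
  rw [subsphere_top, strip_univ]

theorem isAcyclic_box (I : Finset ι) (y : ι → Sph m) {k : ℕ} (hk : k ≤ m) :
    IsAcyclic M (box I y) k := by
  classical
  induction I using Finset.induction_on generalizing y k with
  | empty => rw [box_empty]; exact isAcyclic_singleton y k
  | insert i I hi ih =>
    intro f hf
    rw [← strip_subsphere_top] at hf ⊢
    obtain ⟨c, h, hc, hh⟩ := exists_strip_class hi le_rfl (fun k hk y => ih y (by omega))
      (by omega) hf fun u hu => by
        have hslice := hf.mono (strip_mono (Set.singleton_subset_iff.2 hu))
        rw [strip_singleton y hi] at hslice ⊢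
        exact ih _ hk _ hslice
    rw [hc (by omega), smulConst_zero, zero_add] at hh
    exact ⟨h, hh⟩

theorem IsCoboundary.strip_singleton_of_pole (hm : 1 ≤ m) (hi : i ∉ I) {k : ℕ}
    {f : Cochain (ι → Sph m) M} (hf : IsCocycle (strip I y i Set.univ) k f)
    (h : IsCoboundary (strip I y i {pole 0}) k f) (u : Sph m) :
    IsCoboundary (strip I y i {u}) k f := by
  have move : ∀ v w : Sph m, -v ≠ w → IsCoboundary (strip I y i {v}) k f →
      IsCoboundary (strip I y i {w}) k f := fun v w hvw hv =>
    hv.strip_of_singleton hf hi isClosed_singleton hvw fun _ _ => Set.mapsTo_univ _ _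
  have hlast : (0 : Fin (m + 1)) ≠ Fin.last m := Fin.ne_of_val_ne (by simp; omega)
  by_cases hu : -pole 0 = u
  · refine move (pole (Fin.last m)) u ?_ (move (pole 0) _ ?_ h)
    · rw [← hu]
      intro h
      simpa [pole_apply, hlast.symm] using congrArg (fun v : Sph m => v.1 (Fin.last m)) h
    · intro h
      simpa [pole_apply, hlast.symm] using congrArg (fun v : Sph m => v.1 (Fin.last m)) h
  · exact move _ u hu h

theorem exists_box_class (hm : 1 ≤ m) (I : Finset ι) (y : ι → Sph m)
    {f : Cochain (ι → Sph m) ℤ} (hf : IsCocycle (box I y) (m + 1) f) :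
    ∃ (c : ι → ℤ) (h : Cochain (ι → Sph m) ℤ),
      f =ᶠ[nearDiag (box I y) (m + 1)] (∑ i ∈ I, c i • sphereCocycle m (m + 1) i) + δ h := by
  classical
  induction I using Finset.induction_on generalizing y f with
  | empty =>
    rw [box_empty] at hf ⊢
    obtain ⟨h, hh⟩ := isAcyclic_singleton y (m + 1) f hf
    exact ⟨0, h, by rwa [Finset.sum_empty, zero_add]⟩
  | insert i I hi ih =>
    rw [← strip_univ] at hf
    have hslice := hf.mono (strip_mono (Set.subset_univ {pole (0 : Fin (m + 1))}))
    rw [strip_singleton y hi] at hslice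
    obtain ⟨c, h, hch⟩ := ih _ hslice
    set f' := f - ∑ i ∈ I, c i • sphereCocycle m (m + 1) i with hf'
    have hcocycle : IsCocycle (strip I y i Set.univ) (m + 1) f' :=
      hf.sub (isCocycle_sum_sphereCocycle I c _)
    have hpole : IsCoboundary (strip I y i {pole 0}) (m + 1) f' := by
      rw [strip_singleton y hi]
      refine ⟨h, ?_⟩
      filter_upwards [hch] with l hl
      rw [hf', Pi.sub_apply, hl, Pi.add_apply, add_sub_cancel_left]
    obtain ⟨c', h', -, hh'⟩ := exists_strip_class hi le_rfl
      (fun k hk y => isAcyclic_box I y (by omega)) le_rfl (by rwa [subsphere_top])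
      fun u _ => hpole.strip_singleton_of_pole hm hi hcocycle u
    refine ⟨Function.update c i c', h', ?_⟩
    rw [← strip_subsphere_top]
    filter_upwards [hh'] with l hl
    have hsum : ∑ l ∈ I, Function.update c i c' l • sphereCocycle m (m + 1) l =
        ∑ l ∈ I, c l • sphereCocycle m (m + 1) l := Finset.sum_congr rfl fun l hlI => by
      rw [Function.update_of_ne (ne_of_mem_of_not_mem hlI hi)]
    rw [hf', Pi.sub_apply, sub_eq_iff_eq_add, Pi.add_apply, smulConst_apply] at hl
    rw [Finset.sum_insert hi, hsum, Function.update_self, hl, Pi.add_apply, Pi.add_apply,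
      Pi.smul_apply, smul_eq_mul, smul_eq_mul]
    ring

end Box

theorem isAcyclic_univ [Finite ι] {k : ℕ} (hk : k ≤ m) :
    IsAcyclic M (Set.univ : Set (ι → Sph m)) k := by
  have := Fintype.ofFinite ι
  exact box_univ (fun _ : ι => pole (0 : Fin (m + 1))) ▸ isAcyclic_box Finset.univ _ hk

theorem exists_topCocycle_class [Fintype ι] (hm : 1 ≤ m) {f : Cochain (ι → Sph m) ℤ}
    (hf : IsCocycle Set.univ (m + 1) f) :
    ∃ (c : ι → ℤ) (h : Cochain (ι → Sph m) ℤ),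
      f =ᶠ[nearDiag Set.univ (m + 1)] topCocycle m c + δ h := by
  rw [← box_univ fun _ => pole 0] at hf ⊢
  exact exists_box_class hm Finset.univ _ hf

end TopClass

/-! ### Products of germs -/

section MulHead

variable {X R : Type*} [Ring R]

/-- Multiplication of a cochain by a function of the first point of a list, which is the cup
product with a cochain of degree `0`; the empty list, which has no first point, is sent to `0`. -/
def mulHead (D : X → R) : Cochain X R →+ Cochain X R :=
  AddMonoidHom.mk' (fun f l => l.head?.elim 0 D * f l) fun f g => by
    funext l
    simp [mul_add]

@[simp] theorem mulHead_nil (D : X → R) (f : Cochain X R) : mulHead D f [] = 0 :=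
  zero_mul _

theorem mulHead_cons (D : X → R) (f : Cochain X R) (x : X) (l : List X) :
    mulHead D f (x :: l) = D x * f (x :: l) := rfl

theorem δ_mulHead_cons (D : X → R) (f : Cochain X R) (x : X) (l : List X) :
    δ (mulHead D f) (x :: l) = mulHead D f l - D x * (f l - δ f (x :: l)) := by
  rw [δ_cons, δ_cons, sub_sub_cancel]
  exact congrArg (mulHead D f l - ·)
    (congrFun (δ_map_coeff (AddMonoidHom.mulLeft (D x)) fun l' => f (x :: l')) l)

theorem mulHead_map {D : X → R} {γ : X → X} {c : R} (hD : ∀ x, D (γ x) = D x + c)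
    {f : Cochain X R} {l : List X} (hf : f (l.map γ) = f l) (hnil : l ≠ [] ∨ f [] = 0) :
    mulHead D f (l.map γ) = mulHead D f l + c * f l := by
  cases l with
  | nil =>
    have hnil : f [] = 0 := hnil.resolve_left (not_not.2 rfl)
    simp [hnil]
  | cons x l =>
    rw [List.map_cons] at hf ⊢
    rw [mulHead_cons, mulHead_cons, hf, hD, add_mul]

/-- Every map in `Γ` changes `D` by an additive constant. -/
def ShiftedBy (Γ : Set (X → X)) (D : X → R) : Prop :=
  ∀ γ ∈ Γ, ∃ c, ∀ x, D (γ x) = D x + c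

end MulHead

section InvariantCocycle

variable {X M R : Type*} [UniformSpace X] [AddCommGroup M] [Ring R] {Γ : Set (X → X)} {k : ℕ}

theorem InvariantGerm.pullback_eq {S : Set X} {f : Cochain X M} (h : InvariantGerm Γ S k f)
    {γ : X → X} (hγ : γ ∈ Γ) : pullback γ f =ᶠ[nearDiag S k] f := by
  filter_upwards [h] with l hl using hl γ hγ

theorem InvariantGerm.mulHead {S : Set X} {f : Cochain X R} (hf : InvariantGerm Γ S k f)
    {D : X → R} (hD : ∀ γ ∈ Γ, ∀ x, D (γ x) = D x) : InvariantGerm Γ S k (mulHead D f) := by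
  filter_upwards [hf] with l hl γ hγ
  cases l with
  | nil => rfl
  | cons x l =>
    have hfl := hl γ hγ
    rw [List.map_cons] at hfl ⊢
    rw [mulHead_cons, mulHead_cons, hfl, hD γ hγ]

/-- A cocycle on the whole space that is invariant under `Γ`. -/
def InvariantCocycle (Γ : Set (X → X)) (k : ℕ) (P : Cochain X M) : Prop :=
  IsCocycle Set.univ k P ∧ InvariantGerm Γ Set.univ k P

theorem InvariantCocycle.add {P Q : Cochain X M} (hP : InvariantCocycle Γ k P)
    (hQ : InvariantCocycle Γ k Q) : InvariantCocycle Γ k (P + Q) :=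
  ⟨hP.1.add hQ.1, hP.2.add hQ.2⟩

theorem InvariantCocycle.isCocycle {P : Cochain X M} (hP : InvariantCocycle Γ k P) (S : Set X) :
    IsCocycle S k P :=
  hP.1.mono (Set.subset_univ S)

theorem InvariantCocycle.invariantGerm {Γ' : Set (X → X)} {P : Cochain X M}
    (hP : InvariantCocycle Γ k P) (hΓ : Γ' ⊆ Γ) (S : Set X) : InvariantGerm Γ' S k P :=
  hP.2.mono hΓ (Set.subset_univ S)

theorem InvariantCocycle.δ_mulHead {P : Cochain X R} (hP : InvariantCocycle Γ (k + 1) P)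
    {D : X → R} (hD : ShiftedBy Γ D) : InvariantCocycle Γ (k + 2) (δ (mulHead D P)) := by
  refine ⟨by simp [IsCocycle, δ_δ], ?_⟩
  obtain ⟨⟨V, hV, hcocycle⟩, ⟨W, hW, hinv⟩⟩ := hP
  refine ⟨V ∩ W, inter_mem hV hW, fun l hlen hS hl γ hγ => ?_⟩
  obtain ⟨c, hc⟩ := hD γ hγ
  have hδP : δ P l = 0 := hcocycle l hlen hS fun x hx y hy => (hl x hx y hy).1
  have hshift : δ (pullback γ (mulHead D P)) l = δ (mulHead D P + fun l => c * P l) l :=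
    δ_congr_of_sublist l fun l' hsub hlen' =>
      mulHead_map hc (hinv l' (by omega) (fun x hx => hS x (hsub.subset hx))
        (fun x hx y hy => (hl x (hsub.subset hx) y (hsub.subset hy)).2) γ hγ)
        (Or.inl (List.ne_nil_of_length_pos (by omega)))
  have hδc : δ (fun l => c * P l) l = c * δ P l :=
    congrFun (δ_map_coeff (AddMonoidHom.mulLeft c) P) l
  change pullback γ (δ (mulHead D P)) l = _
  rw [← δ_pullback, hshift, map_add, Pi.add_apply, hδc, hδP, mul_zero, add_zero]

end InvariantCocycle

section Involution

variable {X M : Type*} [UniformSpace X] [AddCommGroup M] {S U N : Set X} {τ : X → X} {k : ℕ}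

theorem eventuallyEq_of_involution (hcov : nearDiag S k ≤ nearDiag U k ⊔ nearDiag N k)
    (hτ : UniformContinuous τ) (hNS : N ⊆ S) (hNU : Set.MapsTo τ N U) {f g : Cochain X M}
    (hf : pullback τ f =ᶠ[nearDiag S k] f) (hg : pullback τ g =ᶠ[nearDiag S k] g)
    (hfg : f =ᶠ[nearDiag U k] g) : f =ᶠ[nearDiag S k] g :=
  hcov ⟨hfg, (EventuallyEq.symm (hf.filter_mono (nearDiag_mono hNS k))).trans
    ((pullback_congr hτ.uniformContinuousOn hNU hfg).trans (hg.filter_mono (nearDiag_mono hNS k)))⟩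

theorem exists_invariant_glue (hcov : nearDiag S k ≤ nearDiag U k ⊔ nearDiag N k)
    (hτ : UniformContinuous τ) (hττ : ∀ x, τ (τ x) = x) (hUN : Set.MapsTo τ U N)
    (hNU : Set.MapsTo τ N U) {h : Cochain X M}
    (hh : pullback τ h =ᶠ[nearDiag (U ∩ N) k] h) :
    ∃ h' : Cochain X M, h' [] = h [] ∧ h' =ᶠ[nearDiag U k] h ∧
      h' =ᶠ[nearDiag N k] pullback τ h ∧ pullback τ h' =ᶠ[nearDiag S k] h' := by
  have hU : glue U h (pullback τ h) =ᶠ[nearDiag U k] h := glue_left U _ _ k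
  have hN : glue U h (pullback τ h) =ᶠ[nearDiag N k] pullback τ h := glue_right hh.symm
  refine ⟨_, by simp [glue], hU, hN, hcov ⟨?_, ?_⟩⟩
  · have := pullback_congr hτ.uniformContinuousOn hUN hN
    simp only [pullback_pullback, hττ, pullback_id] at this
    exact this.trans hU.symm
  · exact (pullback_congr hτ.uniformContinuousOn hNU hU).trans hN.symm

theorem pullback_mulHead {D : X → ZMod 2} (hD : ∀ x, D (τ x) = D x + 1)
    {f : Cochain X (ZMod 2)} (hf : pullback τ f =ᶠ[nearDiag S k] f) (hnil : k ≠ 0 ∨ f [] = 0) :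
    pullback τ (mulHead D f) =ᶠ[nearDiag S k] mulHead D f + f := by
  filter_upwards [hf, eventually_nearDiag_of_forall fun l hl _ => hl] with l hfl hlen
  rw [pullback_apply, mulHead_map hD hfl, one_mul, Pi.add_apply]
  exact hnil.imp_left fun hk hl => hk (by rw [← hlen, hl, List.length_nil])

/-- Multiplication by `D` turns the norm `h + τ^* h` of `h` into a correction of `h`. -/
theorem pullback_sub_mulHead_sub_eq {D : X → ZMod 2} (hD : ∀ x, D (τ x) = D x + 1)
    {h P q : Cochain X (ZMod 2)} (hP : pullback τ P =ᶠ[nearDiag S (k + 1)] P)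
    (hq : pullback τ q =ᶠ[nearDiag S k] q) (hqnil : q [] = 0)
    (hh : h + pullback τ h =ᶠ[nearDiag S (k + 1)] P + δ q) :
    pullback τ (h - mulHead D P - δ (mulHead D q)) =ᶠ[nearDiag S (k + 1)]
      h - mulHead D P - δ (mulHead D q) := by
  filter_upwards [hh, pullback_mulHead hD hP (Or.inl k.succ_ne_zero),
    δ_congr (pullback_mulHead hD hq (Or.inr hqnil))] with l hhl hPl hql
  rw [map_sub, map_sub, ← δ_pullback, Pi.sub_apply, Pi.sub_apply, hPl, hql, map_add]
  simp only [Pi.add_apply, Pi.sub_apply] at hhl ⊢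
  rw [CharTwo.sub_eq_add, CharTwo.sub_eq_add, CharTwo.sub_eq_add, CharTwo.sub_eq_add]
  linear_combination hhl - CharTwo.add_self_eq_zero (h l) +
    CharTwo.add_self_eq_zero (P l) + CharTwo.add_self_eq_zero (δ q l)

end Involution

/-! ### Extending invariant cocycles from a strip to the whole product -/

section Extends

variable {X M : Type*} [UniformSpace X] [AddCommGroup M]

/-- Up to the coboundary of a germ invariant under `Δ`, the germ of arity `k + 1` of `f` along the
diagonal of `S` is the restriction of a cocycle on the whole space invariant under `Γ`. -/
def Extends (Γ Δ : Set (X → X)) (S : Set X) (k : ℕ) (f : Cochain X M) : Prop :=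
  ∃ P h : Cochain X M, InvariantCocycle Γ (k + 1) P ∧ h [] = 0 ∧ InvariantGerm Δ S k h ∧
    f =ᶠ[nearDiag S (k + 1)] P + δ h

theorem extends_empty (Γ Δ : Set (X → X)) (k : ℕ) (f : Cochain X M) : Extends Γ Δ ∅ k f := by
  refine ⟨0, 0, ⟨by simp [IsCocycle], Eventually.of_forall fun _ _ _ => rfl⟩, rfl,
    Eventually.of_forall fun _ _ _ => rfl, eventually_nearDiag_of_forall fun l hlen hl => ?_⟩
  obtain ⟨x, l, rfl⟩ := List.exists_cons_of_length_eq_add_one hlen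
  exact absurd (hl x (by simp)) (Set.notMem_empty x)

theorem extends_singleton (Γ Δ : Set (X → X)) (x : X) {k : ℕ} {f : Cochain X M}
    (hf : IsCocycle {x} (k + 1) f) : Extends Γ Δ {x} k f := by
  refine ⟨pullback (fun _ => x) f, 0, ⟨?_, Eventually.of_forall fun l γ _ => ?_⟩, rfl,
    Eventually.of_forall fun _ _ _ => rfl, eventually_nearDiag_of_forall fun l _ hl => ?_⟩
  · rw [IsCocycle, δ_pullback]
    exact pullback_congr uniformContinuous_const.uniformContinuousOn
      (fun _ _ => Set.mem_singleton x) hf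
  · rw [pullback_apply, pullback_apply, List.map_map]
    rfl
  · have hmap : l.map (fun _ => x) = l := by
      rw [List.map_congr_left fun y hy => (hl y hy).symm, List.map_id']
    simp [hmap]

end Extends

theorem InvariantGerm.congr_strip {m : ℕ} {ι M : Type*} [Finite ι] {I : Finset ι} {y : ι → Sph m}
    {i : ι} {K : Set (Sph m)} {k : ℕ} {f g : Cochain (ι → Sph m) M} (hi : i ∉ I)
    (h : InvariantGerm (signGroup I) (strip I y i K) k f)
    (hfg : f =ᶠ[nearDiag (strip I y i K) k] g) :
    InvariantGerm (signGroup I) (strip I y i K) k g := by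
  refine h.congr (signGroup_finite I) ?_ ?_ hfg
  · rintro γ ⟨b, -, rfl⟩
    exact uniformContinuousOn_signAct b _
  · rintro γ ⟨b, hb, rfl⟩ x ⟨hxi, hx⟩
    exact ⟨by simpa [signAct, hb i hi] using hxi,
      fun l hl hli => by simp [signAct, hb l hl, hx l hl hli]⟩

section StripExtends

variable {m : ℕ} {ι M : Type*} [AddCommGroup M] {I : Finset ι} {y : ι → Sph m} {i : ι}

theorem extends_upperCap {Γ : Set ((ι → Sph m) → (ι → Sph m))} (hΓ : signGroup I ⊆ Γ)
    (hi : i ∉ I) {k : ℕ} (j : Fin (m + 1)) {f : Cochain (ι → Sph m) M}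
    (hf : IsCocycle (strip I y i (subsphere m (j + 1))) (k + 1) f)
    (hinv : InvariantGerm (signGroup I) (strip I y i (subsphere m (j + 1))) (k + 1) f)
    (hpole : Extends Γ (signGroup I) (strip I y i {pole j}) k f) :
    Extends Γ (signGroup I) (strip I y i (upperCap j)) k f := by
  obtain ⟨P, h, hP, hnil, hinvh, hfh⟩ := hpole
  obtain ⟨h', hnil', hinvh', hfh'⟩ := deform_cap (f := f - P) (h := h)
    (isClosed_upperCap j) (neg_pole_notMem_upperCap j)
    (fun t ht u hu => contract_mem_subsphere_of_mem_upperCap hu ht)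
    (hf.sub (hP.isCocycle _)) subset_rfl hi (hinv.sub (hP.invariantGerm hΓ _))
    (by filter_upwards [hfh] with l hl; rw [Pi.sub_apply, hl, Pi.add_apply, add_sub_cancel_left])
    fun j hj => Nat.succ.inj hj ▸ hinvh
  refine ⟨P, h', hP, hnil'.trans hnil, hinvh' k rfl, ?_⟩
  filter_upwards [hfh'] with l hl
  rw [Pi.add_apply, ← hl, Pi.sub_apply, add_sub_cancel]

variable [DecidableEq ι]

theorem uniformContinuous_antipodeAt (i : ι) : UniformContinuous (antipodeAt (m := m) i) :=
  CompactSpace.uniformContinuous_of_continuous (continuous_signAct _)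

theorem invariantGerm_insert {S : Set (ι → Sph m)} {k : ℕ} {f : Cochain (ι → Sph m) M}
    (hS : Set.MapsTo (antipodeAt i) S S) (hf : InvariantGerm (signGroup I) S k f)
    (hi : pullback (antipodeAt i) f =ᶠ[nearDiag S k] f) :
    InvariantGerm (signGroup (insert i I)) S k f := by
  have hmap := (tendsto_map_nearDiag (uniformContinuousOn_signAct _ S) hS k).eventually hf
  filter_upwards [hf, hmap, hi] with l hfl hmapl hil
  rintro γ ⟨b, hb, rfl⟩
  have hbI : ∀ l, l ∉ I → l ≠ i → b l = 0 := fun l hl hli => hb l (by simp [hli, hl])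
  obtain hbi | hbi : b i = 0 ∨ b i = 1 := by
    generalize b i = z
    decide +revert
  · refine hfl _ ⟨b, fun l hl => ?_, rfl⟩
    obtain rfl | hli := eq_or_ne l i
    exacts [hbi, hbI l hl hli]
  · have hsplit : l.map (signAct b) =
        (l.map (antipodeAt i)).map (signAct (b - Pi.single i 1)) := by
      rw [List.map_map]
      refine List.map_congr_left fun x _ => ?_
      rw [Function.comp_apply, ← signAct_add, sub_add_cancel]
    rw [hsplit, hmapl _ ⟨_, fun l hl => ?_, rfl⟩]
    · exact hil
    · obtain rfl | hli := eq_or_ne l i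
      · simp [hbi]
      · simp [hli, hbI l hl hli]

theorem InvariantGerm.pullback_antipodeAt {S T : Set (ι → Sph m)} {k : ℕ}
    {f : Cochain (ι → Sph m) M} (hf : InvariantGerm (signGroup I) T k f)
    (hS : Set.MapsTo (antipodeAt i) S T) :
    InvariantGerm (signGroup I) S k (pullback (antipodeAt i) f) :=
  hf.pullback_of_commute (uniformContinuousOn_signAct _ S) hS fun _ ⟨_, _, hγ⟩ x _ =>
    hγ ▸ signAct_comm _ _ x

theorem InvariantGerm.norm {S : Set (ι → Sph m)} (hS : Set.MapsTo (antipodeAt i) S S) {k : ℕ}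
    {h : Cochain (ι → Sph m) M} (hh : InvariantGerm (signGroup I) S k h) :
    InvariantGerm (signGroup (insert i I)) S k (h + pullback (antipodeAt i) h) := by
  refine invariantGerm_insert hS (hh.add (hh.pullback_antipodeAt hS)) (.of_eq ?_)
  simp only [map_add, pullback_pullback, signAct_signAct, pullback_id, add_comm]

theorem extends_equatorBand {Γ : Set ((ι → Sph m) → (ι → Sph m))}
    (hΓ : signGroup (insert i I) ⊆ Γ) {k : ℕ} (j : Fin (m + 1)) {f : Cochain (ι → Sph m) M}
    (h : Extends Γ (signGroup (insert i I)) (strip I y i (subsphere m j)) k f)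
    (hf : IsCocycle (strip I y i (equatorBand j)) (k + 1) f)
    (hinv : InvariantGerm (signGroup (insert i I)) (strip I y i (equatorBand j)) (k + 1) f) :
    ∃ P q : Cochain (ι → Sph m) M, InvariantCocycle Γ (k + 1) P ∧ q [] = 0 ∧
      InvariantGerm (signGroup (insert i I)) Set.univ k q ∧
      f =ᶠ[nearDiag (strip I y i (equatorBand j)) (k + 1)] P + δ q := by
  obtain ⟨P, h, hP, hnil, hinvh, hfh⟩ := h
  obtain ⟨h', hnil', hinvh', hfh'⟩ := deform_equatorBand (f := f - P) (g := 0) (h := h) j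
    (hf.sub (hP.isCocycle _)) subset_rfl (hinv.sub (hP.invariantGerm hΓ _))
    (by filter_upwards [hfh] with l hl; simp [hl])
    fun j hj => Nat.succ.inj hj ▸ hinvh
  refine ⟨P, glue (strip I y i (equatorBand j)) h' fun _ => 0, hP, ?_,
    (hinvh' k rfl).extend_zero ?_, ?_⟩
  · simp [glue, hnil', hnil]
  · rintro γ ⟨b, hb, rfl⟩ x
    exact signAct_mem_strip_iff (fun u => neg_mem_equatorBand) hb x
  · filter_upwards [hfh', δ_congr (glue_left _ h' (fun _ => 0) k)] with l hl hgluel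
    rw [Pi.add_apply, hgluel, ← sub_eq_iff_eq_add', ← Pi.sub_apply, hl, map_zero, zero_add]

theorem Extends.strip_of_upperCap_zero {Γ : Set ((ι → Sph m) → (ι → Sph m))}
    (hΓ : signGroup (insert i I) ⊆ Γ) (j : Fin (m + 1)) {f : Cochain (ι → Sph m) M}
    (hinv : InvariantGerm (signGroup (insert i I)) (strip I y i (subsphere m (j + 1))) 1 f)
    {Δ : Set ((ι → Sph m) → (ι → Sph m))} (h : Extends Γ Δ (strip I y i (upperCap j)) 0 f) :
    Extends Γ (signGroup (insert i I)) (strip I y i (subsphere m (j + 1))) 0 f := by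
  obtain ⟨P, h, hP, hnil, -, hfh⟩ := h
  have hi : antipodeAt (m := m) i ∈ signGroup (insert i I) :=
    antipodeAt_mem_signGroup (Finset.mem_insert_self i I)
  refine ⟨P, 0, hP, rfl, Eventually.of_forall fun _ _ _ => rfl, ?_⟩
  rw [map_zero, add_zero]
  refine eventuallyEq_of_involution (nearDiag_strip_le I y i j 1) (uniformContinuous_antipodeAt i)
    (strip_mono Set.inter_subset_left) (antipodeAt_mapsTo_strip fun u => neg_mem_upperCap)
    (hinv.pullback_eq hi) ((hP.invariantGerm hΓ _).pullback_eq hi) ?_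
  filter_upwards [hfh, eventually_nearDiag_of_forall fun l hl _ => hl] with l hl hlen
  obtain ⟨x, rfl⟩ := List.length_eq_one_iff.1 hlen
  simpa [δ_cons, hnil] using hl

theorem isCocycle_add_pullback {X : Type*} [UniformSpace X] {S : Set X} {τ : X → X}
    (hτ : UniformContinuousOn τ S) (hS : Set.MapsTo τ S S) {k : ℕ} {f h : Cochain X (ZMod 2)}
    (hf : pullback τ f =ᶠ[nearDiag S (k + 1)] f) (hfh : f =ᶠ[nearDiag S (k + 1)] δ h) :
    IsCocycle S k (h + pullback τ h) := by
  filter_upwards [hf, hfh, pullback_congr hτ hS hfh] with l hfl hfhl hτl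
  rw [map_add, δ_pullback, Pi.add_apply, ← hfhl, ← hτl, hfl, CharTwo.add_self_eq_zero]
  rfl

end StripExtends

section ExtendsStrip

variable {m : ℕ} {ι : Type*} [Finite ι] [DecidableEq ι] {I : Finset ι} {y : ι → Sph m} {i : ι}
  {Γ : Set ((ι → Sph m) → (ι → Sph m))} {D : (ι → Sph m) → ZMod 2}

theorem extends_of_norm_eq (hΓ : signGroup (insert i I) ⊆ Γ)
    (hDi : ∀ a x, D (signAct a x) = D x + a i) (hD : ShiftedBy Γ D) (hi : i ∉ I) {k : ℕ}
    (j : Fin (m + 1)) {f P P' h q : Cochain (ι → Sph m) (ZMod 2)}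
    (hinv : InvariantGerm (signGroup (insert i I)) (strip I y i (subsphere m (j + 1))) (k + 2) f)
    (hP : InvariantCocycle Γ (k + 2) P) (hnil : h [] = 0)
    (hinvh : InvariantGerm (signGroup I) (strip I y i (upperCap j)) (k + 1) h)
    (hfh : f =ᶠ[nearDiag (strip I y i (upperCap j)) (k + 2)] P + δ h)
    (hP' : InvariantCocycle Γ (k + 1) P') (hqnil : q [] = 0)
    (hinvq : InvariantGerm (signGroup (insert i I)) Set.univ k q)
    (hnorm : h + pullback (antipodeAt i) h
      =ᶠ[nearDiag (strip I y i (equatorBand j)) (k + 1)] P' + δ q) :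
    Extends Γ (signGroup (insert i I)) (strip I y i (subsphere m (j + 1))) (k + 1) f := by
  have hII : signGroup (m := m) I ⊆ signGroup (insert i I) :=
    signGroup_mono (Finset.subset_insert i I)
  have hτ : antipodeAt (m := m) i ∈ signGroup (insert i I) :=
    antipodeAt_mem_signGroup (Finset.mem_insert_self i I)
  have hDτ : ∀ x, D (antipodeAt i x) = D x + 1 := fun x => by rw [hDi, Pi.single_eq_same]
  have hDI : ∀ γ ∈ signGroup (m := m) I, ∀ x, D (γ x) = D x := by
    rintro γ ⟨b, hb, rfl⟩ x
    rw [hDi, hb i hi, add_zero]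
  set h₁ := h - mulHead D P' - δ (mulHead D q) with hh₁
  have hinvh₁ : InvariantGerm (signGroup I) (strip I y i (upperCap j)) (k + 1) h₁ :=
    (hinvh.sub ((hP'.invariantGerm (hII.trans hΓ) _).mulHead hDI)).sub
      ((hinvq.mono hII (Set.subset_univ _)).mulHead hDI).δ
  have hband : pullback (antipodeAt i) h₁ =ᶠ[nearDiag (strip I y i (equatorBand j)) (k + 1)] h₁ :=
    pullback_sub_mulHead_sub_eq hDτ ((hP'.invariantGerm hΓ _).pullback_eq hτ)
      ((hinvq.mono subset_rfl (Set.subset_univ _)).pullback_eq hτ) hqnil hnorm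
  have hlower : Set.MapsTo (antipodeAt i) (strip I y i (lowerCap j)) (strip I y i (upperCap j)) :=
    antipodeAt_mapsTo_strip fun u => neg_mem_upperCap
  obtain ⟨h₂, hnil₂, hupper₂, hlower₂, hinv₂⟩ := exists_invariant_glue (h := h₁)
    (nearDiag_strip_le I y i j (k + 1)) (uniformContinuous_antipodeAt i)
    (signAct_signAct _) (antipodeAt_mapsTo_strip fun u => neg_mem_lowerCap) hlower
    (hband.filter_mono (nearDiag_mono (strip_upperCap_inter_strip_lowerCap_subset j) _))
  have hQ : InvariantCocycle Γ (k + 2) (P + δ (mulHead D P')) := hP.add (hP'.δ_mulHead hD)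
  have hinvh₂ : InvariantGerm (signGroup (insert i I)) (strip I y i (subsphere m (j + 1))) (k + 1)
      h₂ :=
    invariantGerm_insert (antipodeAt_mapsTo_strip fun u => neg_mem_subsphere)
      (nearDiag_strip_le I y i j (k + 1) ⟨hinvh₁.congr_strip hi hupper₂.symm,
        (hinvh₁.pullback_antipodeAt hlower).congr_strip hi hlower₂.symm⟩) hinv₂
  refine ⟨P + δ (mulHead D P'), h₂, hQ, by simp [hnil₂, hh₁, hnil], hinvh₂, ?_⟩
  refine eventuallyEq_of_involution (nearDiag_strip_le I y i j (k + 2))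
    (uniformContinuous_antipodeAt i) (strip_mono Set.inter_subset_left) hlower
    (hinv.pullback_eq hτ) (((hQ.invariantGerm hΓ _).add hinvh₂.δ).pullback_eq hτ) ?_
  filter_upwards [hfh, δ_congr hupper₂] with l hfl hδl
  rw [hfl, Pi.add_apply, Pi.add_apply, hδl, hh₁, map_sub, map_sub, δ_δ]
  simp only [Pi.add_apply, Pi.sub_apply, Pi.zero_apply]
  abel

theorem Extends.strip_of_upperCap_succ (hΓ : signGroup (insert i I) ⊆ Γ)
    (hDi : ∀ a x, D (signAct a x) = D x + a i) (hD : ShiftedBy Γ D) (hi : i ∉ I) {k : ℕ}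
    (j : Fin (m + 1)) {f : Cochain (ι → Sph m) (ZMod 2)}
    (hinv : InvariantGerm (signGroup (insert i I)) (strip I y i (subsphere m (j + 1))) (k + 2) f)
    (hcap : Extends Γ (signGroup I) (strip I y i (upperCap j)) (k + 1) f)
    (hlower : ∀ s : Cochain (ι → Sph m) (ZMod 2),
      IsCocycle (strip I y i (subsphere m j)) (k + 1) s →
      InvariantGerm (signGroup (insert i I)) (strip I y i (subsphere m j)) (k + 1) s →
      Extends Γ (signGroup (insert i I)) (strip I y i (subsphere m j)) k s) :
    Extends Γ (signGroup (insert i I)) (strip I y i (subsphere m (j + 1))) (k + 1) f := by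
  obtain ⟨P, h, hP, hnil, hinvh, hfh⟩ := hcap
  have hτ : antipodeAt (m := m) i ∈ signGroup (insert i I) :=
    antipodeAt_mem_signGroup (Finset.mem_insert_self i I)
  have hband : strip I y i (equatorBand j) ⊆ strip I y i (upperCap j) :=
    strip_mono (equatorBand_subset_upperCap j)
  have hsub : strip I y i (subsphere m j) ⊆ strip I y i (equatorBand j) :=
    strip_mono (subsphere_subset_equatorBand j)
  have hmaps : Set.MapsTo (antipodeAt i) (strip I y i (equatorBand j))
      (strip I y i (equatorBand j)) := antipodeAt_mapsTo_strip fun u => neg_mem_equatorBand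
  have hcocycle : IsCocycle (strip I y i (equatorBand j)) (k + 1)
      (h + pullback (antipodeAt i) h) := by
    refine isCocycle_add_pullback (f := f - P) (uniformContinuousOn_signAct _ _) hmaps
      (((hinv.mono subset_rfl (hband.trans (strip_mono Set.inter_subset_left))).sub
        (hP.invariantGerm hΓ _)).pullback_eq hτ) ?_
    filter_upwards [hfh.filter_mono (nearDiag_mono hband _)] with l hl
    rw [Pi.sub_apply, hl, Pi.add_apply, add_sub_cancel_left]
  have hnorm := (hinvh.mono subset_rfl hband).norm hmaps
  obtain ⟨P', q, hP', hqnil, hinvq, heq⟩ := extends_equatorBand hΓ j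
    (hlower _ (hcocycle.mono hsub) (hnorm.mono subset_rfl hsub)) hcocycle hnorm
  exact extends_of_norm_eq hΓ hDi hD hi j hinv hP hnil hinvh hfh hP' hqnil hinvq heq

theorem extends_strip (hΓ : signGroup (insert i I) ⊆ Γ)
    (hDi : ∀ a x, D (signAct a x) = D x + a i) (hD : ShiftedBy Γ D) (hi : i ∉ I)
    (hbox : ∀ y k, ∀ f : Cochain (ι → Sph m) (ZMod 2), IsCocycle (box I y) (k + 1) f →
      InvariantGerm (signGroup I) (box I y) (k + 1) f → Extends Γ (signGroup I) (box I y) k f)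
    {j : ℕ} (hj : j ≤ m + 1) {k : ℕ} {f : Cochain (ι → Sph m) (ZMod 2)}
    (hf : IsCocycle (strip I y i (subsphere m j)) (k + 1) f)
    (hinv : InvariantGerm (signGroup (insert i I)) (strip I y i (subsphere m j)) (k + 1) f) :
    Extends Γ (signGroup (insert i I)) (strip I y i (subsphere m j)) k f := by
  induction j generalizing k f with
  | zero =>
    have hempty : strip I y i (subsphere m 0) = ∅ := by
      rw [subsphere_zero]
      exact Set.eq_empty_of_forall_notMem fun x hx => hx.1
    rw [hempty]
    exact extends_empty _ _ _ _
  | succ j ihj =>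
    lift j to Fin (m + 1) using hj
    have hII : signGroup (m := m) I ⊆ signGroup (insert i I) :=
      signGroup_mono (Finset.subset_insert i I)
    have hpole : strip I y i {pole j} ⊆ strip I y i (subsphere m (j + 1)) :=
      strip_mono (Set.singleton_subset_iff.2 (pole_mem_subsphere j))
    have hcap : Extends Γ (signGroup I) (strip I y i (upperCap j)) k f := by
      refine extends_upperCap (hII.trans hΓ) hi j hf (hinv.mono hII subset_rfl) ?_
      rw [strip_singleton y hi] at hpole ⊢
      exact hbox _ k f (hf.mono hpole) (hinv.mono hII hpole)
    cases k with
    | zero => exact hcap.strip_of_upperCap_zero hΓ j hinv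
    | succ k => exact hcap.strip_of_upperCap_succ hΓ hDi hD hi j hinv fun s => ihj j.2.le

end ExtendsStrip

theorem extends_univ {m : ℕ} {ι : Type*} [Fintype ι]
    {Γ : Set ((ι → Sph m) → (ι → Sph m))} (hΓ : signGroup Finset.univ ⊆ Γ)
    (hD : ∀ i, ∃ D : (ι → Sph m) → ZMod 2,
      (∀ a x, D (signAct a x) = D x + a i) ∧ ShiftedBy Γ D) {k : ℕ}
    {f : Cochain (ι → Sph m) (ZMod 2)} (hf : IsCocycle Set.univ (k + 1) f)
    (hinv : InvariantGerm (signGroup Finset.univ) Set.univ (k + 1) f) :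
    Extends Γ (signGroup Finset.univ) Set.univ k f := by
  classical
  suffices h : ∀ (I : Finset ι) y k, ∀ f : Cochain (ι → Sph m) (ZMod 2),
      IsCocycle (box I y) (k + 1) f → InvariantGerm (signGroup I) (box I y) (k + 1) f →
      Extends Γ (signGroup I) (box I y) k f by
    have := h Finset.univ (fun _ => pole 0) k f
    rw [box_univ] at this
    exact this hf hinv
  intro I
  induction I using Finset.induction_on with
  | empty =>
    intro y k f hf _
    rw [box_empty] at hf ⊢
    exact extends_singleton _ _ _ hf
  | insert i I hi ih =>
    intro y k f hf hinv
    obtain ⟨D, hDi, hDΓ⟩ := hD i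
    rw [← strip_univ, ← subsphere_top] at hf hinv ⊢
    exact extends_strip ((signGroup_mono (Finset.subset_univ _)).trans hΓ) hDi hDΓ hi ih le_rfl
      hf hinv

/-! ### Free actions extending the sign group -/

theorem exists_map_vadd_eq_add {E X A : Type*} [AddGroup E] [AddAction E X] [AddCommGroup A]
    (hfree : ∀ (g : E) (x : X), g +ᵥ x = x → g = 0) (χ : E →+ A) :
    ∃ D : X → A, ∀ g x, D (g +ᵥ x) = D x + χ g := by
  have hrep : ∀ x : X, ∃ g : E, g +ᵥ (Quotient.mk (AddAction.orbitRel E X) x).out = x := fun x =>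
    (AddAction.orbitRel E X).symm (Quotient.mk_out (s := AddAction.orbitRel E X) x)
  choose e he using hrep
  refine ⟨fun x => χ (e x), fun g x => ?_⟩
  have horbit : Quotient.mk (AddAction.orbitRel E X) (g +ᵥ x) = Quotient.mk _ x :=
    Quotient.sound (s := AddAction.orbitRel E X) ⟨g, rfl⟩
  have hgx : e (g +ᵥ x) +ᵥ (Quotient.mk (AddAction.orbitRel E X) x).out = g +ᵥ x := by
    rw [← horbit, he]
  have heq : -(g + e x) + e (g +ᵥ x) = 0 := by
    refine hfree _ (Quotient.mk (AddAction.orbitRel E X) x).out ?_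
    rw [add_vadd, hgx, neg_add_rev, add_vadd, neg_vadd_vadd, neg_vadd_eq_iff, he]
  change χ (e (g +ᵥ x)) = χ (e x) + χ g
  rw [← neg_add_eq_zero.1 heq, map_add, add_comm]

section SignProd

variable {X R : Type*} [Ring R]

/-- The product of the classes of degree one attached to a list of functions, each of which is the
coboundary of a function on `X`. -/
def signProd : List (X → R) → Cochain X R
  | [] => fun _ => 1
  | D :: L => δ (mulHead D (signProd L))

variable [UniformSpace X]

theorem invariantCocycle_signProd {Γ : Set (X → X)} {L : List (X → R)}
    (hL : ∀ D ∈ L, ShiftedBy Γ D) : InvariantCocycle Γ (L.length + 1) (signProd L) := by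
  induction L with
  | nil =>
    refine ⟨eventually_nearDiag_of_forall fun l hl _ => ?_, Eventually.of_forall fun _ _ _ => rfl⟩
    obtain ⟨x, y, rfl⟩ := List.length_eq_two.1 hl
    simp [δ_cons, signProd]
  | cons D L ih =>
    exact (ih fun D hD => hL D (List.mem_cons_of_mem _ hD)).δ_mulHead (hL D List.mem_cons_self)

theorem eventually_nearDiag_tail {k : ℕ} {p : List X → Prop}
    (h : ∀ᶠ l in nearDiag Set.univ k, p l) : ∀ᶠ l in nearDiag Set.univ (k + 1), p l.tail := by
  obtain ⟨V, hV, h⟩ := h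
  exact ⟨V, hV, fun l hlen _ hl => h _ (by simp [hlen]) (by simp)
    fun x hx y hy => hl x (List.mem_of_mem_tail hx) y (List.mem_of_mem_tail hy)⟩

theorem eventually_signProd_eq_zero (L : List (X → R)) :
    ∀ᶠ l in nearDiag Set.univ (L.length + 1),
      (∃ D ∈ L, ∃ c, ∀ x ∈ l, D x = c) → signProd L l = 0 := by
  induction L with
  | nil => exact Eventually.of_forall fun l ⟨D, hD, _⟩ => absurd hD List.not_mem_nil
  | cons D L ih =>
    have hcocycle := (invariantCocycle_signProd (Γ := ∅) (L := L)
      fun _ _ _ h => absurd h (Set.notMem_empty _)).1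
    filter_upwards [eventually_nearDiag_tail ih, hcocycle,
      eventually_nearDiag_of_forall fun l hl _ => hl] with l htail hδl hlen
    rintro ⟨D', hD', c, hc⟩
    obtain ⟨x, z, l, rfl⟩ : ∃ x z l', l = x :: z :: l' := by
      match l, hlen with
      | x :: z :: l', _ => exact ⟨x, z, l', rfl⟩
    have hprod : signProd (D :: L) (x :: z :: l) = (D z - D x) * signProd L (z :: l) := by
      rw [signProd, δ_mulHead_cons, hδl, mulHead_cons, Pi.zero_apply, sub_zero, sub_mul]
    rw [hprod]
    rcases List.mem_cons.1 hD' with rfl | hD'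
    · rw [hc z (by simp), hc x (by simp), sub_self, zero_mul]
    · have hzero : signProd L (z :: l) = 0 :=
        htail ⟨D', hD', c, fun y hy => hc y (List.mem_of_mem_tail hy)⟩
      rw [hzero, mul_zero]

end SignProd

section SignOf

variable {X : Type*} {D₀ : X → ZMod 2} {s : X → ℝ}

open Classical in
/-- The sign of a real function as a function to `ZMod 2`, with the value of `D₀` on its zeros. -/
def signOf (D₀ : X → ZMod 2) (s : X → ℝ) (x : X) : ZMod 2 :=
  if 0 < s x then 1 else if s x < 0 then 0 else D₀ x

theorem signOf_eq_of_eq {x y : X} (hs : s x = s y) (hD : D₀ x = D₀ y) :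
    signOf D₀ s x = signOf D₀ s y := by
  rw [signOf, signOf, hs, hD]

theorem signOf_eq_add_one_of_eq_neg {x y : X} (hs : s x = -s y) (hD : D₀ x = D₀ y + 1) :
    signOf D₀ s x = signOf D₀ s y + 1 := by
  rw [signOf, signOf, hs, hD]
  rcases lt_trichotomy (s y) 0 with h | h | h
  · simp [h, h.not_gt]
  · simp [h]
  · simp [h, h.not_gt, CharTwo.add_self_eq_zero]

theorem signProd_signOf_eq_zero [UniformSpace X] [CompactSpace X] {κ : Type*} [Fintype κ]
    {s : κ → X → ℝ} (hs : ∀ k, Continuous (s k)) (hs0 : ∀ x, ∃ k, s k x ≠ 0) {D₀ : X → ZMod 2} :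
    signProd (Finset.univ.toList.map fun k => signOf D₀ (s k))
      =ᶠ[nearDiag Set.univ ((Finset.univ.toList.map fun k => signOf D₀ (s k)).length + 1)] 0 := by
  obtain ⟨V, hV, hVU⟩ := lebesgue_number_lemma (isCompact_univ (X := X))
    (U := fun k : κ × Bool => if k.2 then {x | 0 < s k.1 x} else {x | s k.1 x < 0})
    (by
      rintro ⟨k, b⟩
      cases b
      · exact isOpen_lt (hs k) continuous_const
      · exact isOpen_lt continuous_const (hs k))
    (fun x _ => by
      obtain ⟨k, hk⟩ := hs0 x
      rcases lt_or_gt_of_ne hk with h | h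
      · exact Set.mem_iUnion.2 ⟨(k, false), by simpa using h⟩
      · exact Set.mem_iUnion.2 ⟨(k, true), by simpa using h⟩)
  filter_upwards [eventually_signProd_eq_zero (Finset.univ.toList.map fun k => signOf D₀ (s k)),
    eventually_nearDiag_close hV] with l hprod ⟨hlen, _, hclose⟩
  refine hprod ?_
  obtain ⟨x, l, rfl⟩ := List.exists_cons_of_length_eq_add_one hlen
  obtain ⟨⟨k, b⟩, hk⟩ := hVU x (Set.mem_univ x)
  refine ⟨signOf D₀ (s k), List.mem_map.2 ⟨k, by simp, rfl⟩, if b then 1 else 0, fun y hy => ?_⟩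
  have hy : y ∈ _ := hk (hclose x (by simp) y hy)
  cases b
  · have hy : s k y < 0 := by simpa using hy
    simp [signOf, hy, hy.not_gt]
  · have hy : 0 < s k y := by simpa using hy
    simp [signOf, hy]

end SignOf

theorem eventuallyEq_δ_add_pullback {X : Type*} [UniformSpace X] {τ : X → X}
    (hτ : UniformContinuous τ) {D : X → ZMod 2} (hD : ∀ x, D (τ x) = D x + 1) {k : ℕ}
    {u g P h : Cochain X (ZMod 2)} (hu : pullback τ u =ᶠ[nearDiag Set.univ (k + 1)] u)
    (hg : pullback τ g =ᶠ[nearDiag Set.univ (k + 1)] g)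
    (hP : pullback τ P =ᶠ[nearDiag Set.univ (k + 1)] P)
    (heq : mulHead D u - g =ᶠ[nearDiag Set.univ (k + 1)] P + δ h) :
    u =ᶠ[nearDiag Set.univ (k + 1)] δ (h + pullback τ h) := by
  filter_upwards [heq, pullback_congr_univ hτ heq, pullback_mulHead hD hu (Or.inl k.succ_ne_zero),
    hg, hP] with l hl hτl hul hgl hPl
  rw [map_sub, map_add, Pi.sub_apply, Pi.add_apply, hul, hgl, hPl] at hτl
  rw [map_add, δ_pullback]
  simp only [Pi.add_apply, Pi.sub_apply] at hl hτl ⊢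
  linear_combination hl + hτl - CharTwo.add_self_eq_zero (mulHead D u l) +
    CharTwo.add_self_eq_zero (g l) + CharTwo.add_self_eq_zero (P l)

section CommutingInvolution

variable {m : ℕ} {ι : Type*} {F : (ι → Sph m) → (ι → Sph m)}

/-- The sign group together with its composites with `F`. -/
def extendedSignGroup (F : (ι → Sph m) → (ι → Sph m)) : Set ((ι → Sph m) → (ι → Sph m)) :=
  {γ | ∃ a, γ = signAct a ∨ γ = fun x => F (signAct a x)}

theorem signGroup_subset_extendedSignGroup (I : Finset ι) :
    signGroup I ⊆ extendedSignGroup F := fun _ ⟨a, _, ha⟩ => ⟨a, Or.inl ha⟩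

theorem mem_extendedSignGroup : F ∈ extendedSignGroup F :=
  ⟨0, Or.inr (funext fun x => by rw [signAct_zero])⟩

theorem shiftedBy_extendedSignGroup {D : (ι → Sph m) → ZMod 2} {c : (ι → ZMod 2) → ZMod 2}
    (hsign : ∀ a x, D (signAct a x) = D x + c a) {d : ZMod 2} (hF : ∀ x, D (F x) = D x + d) :
    ShiftedBy (extendedSignGroup F) D := by
  rintro γ ⟨a, rfl | rfl⟩
  · exact ⟨c a, hsign a⟩
  · exact ⟨c a + d, fun x => by rw [hF, hsign, add_assoc]⟩

/-- The action generated by the sign group and a commuting involution. -/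
abbrev addActionOfCommutingInvolution (hFF : ∀ x, F (F x) = x)
    (hc : ∀ a x, F (signAct a x) = signAct a (F x)) :
    AddAction ((ι → ZMod 2) × ZMod 2) (ι → Sph m) where
  vadd g x := if g.2 = 0 then signAct g.1 x else F (signAct g.1 x)
  zero_vadd x := (if_pos rfl).trans (signAct_zero x)
  add_vadd g h x := by
    have hzero : ∀ s t : ZMod 2, (s + t = 0 ↔ (s = 0 ↔ t = 0)) := by decide
    by_cases hg : g.2 = 0 <;> by_cases hh : h.2 = 0 <;>
      simp [HVAdd.hVAdd, hg, hh, hzero, signAct_add, hc, hFF]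

theorem exists_extendedSignGroup_flip (hFF : ∀ x, F (F x) = x)
    (hc : ∀ a x, F (signAct a x) = signAct a (F x)) (hfree : ∀ a x, F (signAct a x) ≠ x)
    (χ : (ι → ZMod 2) × ZMod 2 →+ ZMod 2) : ∃ D : (ι → Sph m) → ZMod 2,
      (∀ a x, D (signAct a x) = D x + χ (a, 0)) ∧ ∀ x, D (F x) = D x + χ (0, 1) := by
  let := addActionOfCommutingInvolution hFF hc
  have hsign : ∀ a (x : ι → Sph m), ((a, 0) : (ι → ZMod 2) × ZMod 2) +ᵥ x = signAct a x :=
    fun a x => if_pos rfl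
  have hF : ∀ x : ι → Sph m, ((0, 1) : (ι → ZMod 2) × ZMod 2) +ᵥ x = F x := fun x =>
    (if_neg one_ne_zero).trans (congrArg F (signAct_zero x))
  obtain ⟨D, hD⟩ := exists_map_vadd_eq_add (X := ι → Sph m) (fun g x h => by
    by_cases hg : g.2 = 0
    · have h : signAct g.1 x = x := (if_pos hg).symm.trans h
      exact Prod.ext (eq_zero_of_signAct_eq_self h) hg
    · exact absurd ((if_neg hg).symm.trans h) (hfree _ _)) χ
  exact ⟨D, fun a x => by rw [← hsign, hD], fun x => by rw [← hD, hF]⟩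

theorem InvariantGerm.extended_of_pullback_eq [Fintype ι] (hF : UniformContinuous F)
    (hc : ∀ a x, F (signAct a x) = signAct a (F x)) {k : ℕ} {M : Type*} [AddCommGroup M]
    {f : Cochain (ι → Sph m) M} (hf : InvariantGerm (signGroup Finset.univ) Set.univ k f)
    (hFf : pullback F f =ᶠ[nearDiag Set.univ k] f) :
    InvariantGerm (extendedSignGroup F) Set.univ k f := by
  have hmap := (tendsto_map_nearDiag hF.uniformContinuousOn
    (Set.mapsTo_univ F Set.univ) k).eventually hf
  filter_upwards [hf, hmap, hFf] with l hfl hmapl hFl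
  rintro γ ⟨a, rfl | rfl⟩
  · exact hfl _ ⟨a, by simp, rfl⟩
  · have hcomm : l.map (fun x => F (signAct a x)) = (l.map F).map (signAct a) := by
      rw [List.map_map]
      exact List.map_congr_left fun x _ => hc a x
    rw [hcomm, hmapl _ ⟨a, by simp, rfl⟩]
    exact hFl

theorem InvariantGerm.add_pullback_involution [Fintype ι] (hF : UniformContinuous F)
    (hFF : ∀ x, F (F x) = x) (hc : ∀ a x, F (signAct a x) = signAct a (F x)) {k : ℕ} {M : Type*}
    [AddCommGroup M] {h : Cochain (ι → Sph m) M}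
    (hh : InvariantGerm (signGroup Finset.univ) Set.univ k h) :
    InvariantGerm (extendedSignGroup F) Set.univ k (h + pullback F h) := by
  refine InvariantGerm.extended_of_pullback_eq hF hc (hh.add (hh.pullback_of_commute
    hF.uniformContinuousOn (Set.mapsTo_univ _ _) ?_)) (.of_eq ?_)
  · rintro γ ⟨a, -, rfl⟩ x -
    exact hc a x
  · simp only [map_add, pullback_pullback, hFF, pullback_id, add_comm]

theorem signProd_ne_δ [Finite ι] (hF : UniformContinuous F) (hFF : ∀ x, F (F x) = x)
    (hc : ∀ a x, F (signAct a x) = signAct a (F x))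
    (hD : ∀ i, ∃ D : (ι → Sph m) → ZMod 2,
      (∀ a x, D (signAct a x) = D x + a i) ∧ ShiftedBy (extendedSignGroup F) D)
    {L : List ((ι → Sph m) → ZMod 2)}
    (hL : ∀ D ∈ L, (∀ a x, D (signAct a x) = D x) ∧ ∀ x, D (F x) = D x + 1)
    {g : Cochain (ι → Sph m) (ZMod 2)}
    (hg : InvariantGerm (extendedSignGroup F) Set.univ L.length g) (hg0 : g [] = 0) :
    ¬ signProd L =ᶠ[nearDiag Set.univ (L.length + 1)] δ g := by
  have := Fintype.ofFinite ι
  induction L generalizing g with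
  | nil =>
    rintro ⟨V, hV, h⟩
    have := h [fun _ => pole 0] rfl (by simp) (by simpa using refl_mem_uniformity hV)
    simp [signProd, δ_cons, hg0] at this
  | cons D L ih =>
    intro h
    obtain ⟨hDsign, hDF⟩ := hL D List.mem_cons_self
    have hL' : ∀ D ∈ L, (∀ a x, D (signAct a x) = D x) ∧ ∀ x, D (F x) = D x + 1 := fun D hD =>
      hL D (List.mem_cons_of_mem _ hD)
    have hprod : InvariantCocycle (extendedSignGroup F) (L.length + 1) (signProd L) :=
      invariantCocycle_signProd fun D hD =>
        shiftedBy_extendedSignGroup (c := 0) (by simpa using (hL' D hD).1) (hL' D hD).2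
    have hsub := signGroup_subset_extendedSignGroup (F := F) (Finset.univ (α := ι))
    have hcocycle : IsCocycle Set.univ (L.length + 1) (mulHead D (signProd L) - g) := by
      filter_upwards [h] with l hl
      rw [map_sub, Pi.sub_apply, ← hl, signProd, sub_self]
      rfl
    have hinv : InvariantGerm (signGroup Finset.univ) Set.univ (L.length + 1)
        (mulHead D (signProd L) - g) := by
      refine ((hprod.invariantGerm hsub _).mulHead ?_).sub (hg.mono hsub subset_rfl)
      rintro γ ⟨a, -, rfl⟩
      exact hDsign a
    obtain ⟨P, h', hP, hnil, hinvh, heq⟩ := extends_univ hsub hD hcocycle hinv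
    exact ih hL' (hinvh.add_pullback_involution hF hFF hc) (by simp [hnil])
      (eventuallyEq_δ_add_pullback hF hDF (hprod.2.pullback_eq mem_extendedSignGroup)
        (hg.pullback_eq mem_extendedSignGroup) (hP.2.pullback_eq mem_extendedSignGroup) heq)

end CommutingInvolution

theorem Sph.eq_or_eq_neg {m : ℕ} {u v : Sph m} (h : ∀ p q, v.1 p * v.1 q = u.1 p * u.1 q) :
    v = u ∨ v = -u := by
  obtain ⟨p, hp⟩ : ∃ p, u.1 p ≠ 0 := by
    by_contra! hu
    simpa [hu] using u.sum_sq
  rcases mul_self_eq_mul_self_iff.1 (h p p) with hv | hv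
  · refine Or.inl (Subtype.ext (PiLp.ext fun q => ?_))
    have hpq := h p q
    rw [hv] at hpq
    exact mul_left_cancel₀ hp hpq
  · refine Or.inr (Subtype.ext (PiLp.ext fun q => ?_))
    have hpq := h p q
    rw [hv, neg_mul, ← mul_neg] at hpq
    exact neg_eq_iff_eq_neg.1 (mul_left_cancel₀ hp (by simpa using hpq))

section OddFunctions

variable {m : ℕ} {ι : Type*}

theorem exists_eq_signAct {x y : ι → Sph m}
    (h : ∀ i p q, (y i).1 p * (y i).1 q = (x i).1 p * (x i).1 q) : ∃ a, y = signAct a x := by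
  choose a ha using fun i => show ∃ t : ZMod 2, y i = Sph.signSMul t (x i) from
    (Sph.eq_or_eq_neg (h i)).elim (fun h => ⟨0, by simp [h]⟩) fun h => ⟨1, by simp [h]⟩
  exact ⟨a, funext ha⟩

/-- For a map `F` commuting with the sign group, these functions are invariant under the sign
group, and they are odd under `F` if `F` is an involution. -/
def coordMulSub (F : (ι → Sph m) → (ι → Sph m)) (k : ι × Fin (m + 1) × Fin (m + 1))
    (x : ι → Sph m) : ℝ :=
  (x k.1).1 k.2.1 * (x k.1).1 k.2.2 - (F x k.1).1 k.2.1 * (F x k.1).1 k.2.2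

theorem continuous_coordMulSub {F : (ι → Sph m) → (ι → Sph m)} (hF : Continuous F)
    (k : ι × Fin (m + 1) × Fin (m + 1)) : Continuous (coordMulSub F k) := by
  have hcoord : ∀ p, Continuous fun x : ι → Sph m => (x k.1).1 p := fun p =>
    (continuous_coord p).comp (continuous_apply k.1)
  exact ((hcoord _).mul (hcoord _)).sub (((hcoord _).comp hF).mul ((hcoord _).comp hF))

theorem exists_signAct_fixed_of_commuting_involution [Finite ι]
    {F : (ι → Sph m) → (ι → Sph m)} (hF : Continuous F) (hFF : ∀ x, F (F x) = x)
    (hc : ∀ a x, F (signAct a x) = signAct a (F x)) : ∃ a x, F (signAct a x) = x := by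
  have := Fintype.ofFinite ι
  by_contra! hfree
  have hflip := exists_extendedSignGroup_flip hFF hc hfree
  obtain ⟨D₀, hD₀sign, hD₀F⟩ := hflip (AddMonoidHom.snd _ _)
  have hD : ∀ i, ∃ D : (ι → Sph m) → ZMod 2,
      (∀ a x, D (signAct a x) = D x + a i) ∧ ShiftedBy (extendedSignGroup F) D := fun i =>
    (hflip ((Pi.evalAddMonoidHom _ i).comp (AddMonoidHom.fst _ _))).imp fun D hD =>
      ⟨hD.1, shiftedBy_extendedSignGroup hD.1 hD.2⟩
  have hne : ∀ x, ∃ k, coordMulSub F k x ≠ 0 := by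
    intro x
    by_contra! h
    obtain ⟨a, ha⟩ := exists_eq_signAct fun i p q => (sub_eq_zero.1 (h (i, p, q))).symm
    exact hfree a x (by rw [hc, ha, signAct_signAct])
  refine signProd_ne_δ (CompactSpace.uniformContinuous_of_continuous hF) hFF hc hD (g := 0) ?_
    (Eventually.of_forall fun _ _ _ => rfl) rfl
    ((signProd_signOf_eq_zero (continuous_coordMulSub hF) hne (D₀ := D₀)).trans
      (.of_eq (map_zero δ).symm))
  intro D hDL
  obtain ⟨k, -, rfl⟩ := List.mem_map.1 hDL
  refine ⟨fun a x => signOf_eq_of_eq ?_ ((hD₀sign a x).trans (add_zero _)), fun x =>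
    signOf_eq_add_one_of_eq_neg ?_ (hD₀F x)⟩
  · simp only [coordMulSub, hc, signAct, Sph.signSMul_apply_mul_apply]
  · simp only [coordMulSub, hFF, neg_sub]

end OddFunctions

/-! ### Zigzags over an involution -/

section Zigzags

variable {X Y M : Type*} [AddCommGroup M] {z : X → X}

theorem signedDiff_signedDiff (hz : Function.Involutive z) (a : ℕ) (f : Cochain X M) :
    signedDiff z a (signedDiff z (a + 1) f) = 0 := by
  funext l
  have hl : (l.map z).map z = l := by rw [List.map_map, hz.comp_self, List.map_id]
  simp only [signedDiff_apply, hl, pow_succ, Pi.zero_apply]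
  rcases neg_one_pow_eq_or ℤ a with ha | ha <;>
  · simp only [ha, mul_neg, mul_one, neg_neg, neg_smul, one_smul]
    abel

variable [UniformSpace X] [UniformSpace Y]

theorem signedDiff_congr (hz : UniformContinuous z) (a : ℕ) {k : ℕ} {f g : Cochain X M}
    (h : f =ᶠ[nearDiag Set.univ k] g) :
    signedDiff z a f =ᶠ[nearDiag Set.univ k] signedDiff z a g :=
  (pullback_congr_univ hz h).sub (h.const_smul ((-1 : ℤ) ^ a))

theorem pullback_mem_zigzags {F : X → Y} (hF : UniformContinuous F) {w : Y → Y}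
    (hzw : ∀ x, F (z x) = w (F x)) {n : ℕ} {f : ℕ → Cochain Y M}
    (hf : f ∈ zigzags w Set.univ n) :
    (fun b => pullback F (f b)) ∈ zigzags z Set.univ n := by
  intro b hb
  have hcomm : signedDiff z (b + 1) (pullback F (f (b + 1))) =
      pullback F (signedDiff w (b + 1) (f (b + 1))) := by
    simp only [signedDiff, AddMonoidHom.sub_apply, AddMonoidHom.smul_apply,
      AddMonoidHom.id_apply, map_sub, map_zsmul, pullback_pullback, hzw]
  rw [hcomm, δ_pullback]
  exact pullback_congr_univ hF (hf b hb)

theorem exists_zigzag_bottom_eq (hz : UniformContinuous z) (hzz : Function.Involutive z)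
    {n : ℕ} (hX : ∀ k < n, IsAcyclic M (Set.univ : Set X) k) {f : ℕ → Cochain X M}
    (hf : f ∈ zigzags z Set.univ n) {h g : Cochain X M}
    (hn : f n =ᶠ[nearDiag Set.univ n] signedDiff z (n + 1) h + δ g) :
    ∃ h g : Cochain X M, f 0 =ᶠ[nearDiag Set.univ 0] signedDiff z 1 h + δ g := by
  induction n generalizing h g with
  | zero => exact ⟨h, g, hn⟩
  | succ n ih =>
    have hcocycle : IsCocycle Set.univ n (f n - signedDiff z (n + 1) g) := by
      filter_upwards [hf n n.lt_succ_self, signedDiff_congr hz (n + 1) hn] with l hfl hnl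
      rw [map_sub, Pi.sub_apply, ← hfl, hnl, map_add, signedDiff_signedDiff hzz, δ_signedDiff,
        zero_add, sub_self, Pi.zero_apply]
    obtain ⟨g', hg'⟩ := hX n n.lt_succ_self _ hcocycle
    refine ih (fun k hk => hX k (by omega)) (fun b hb => hf b (by omega)) (h := g) (g := g') ?_
    filter_upwards [hg'] with l hl
    rw [Pi.add_apply, ← hl, Pi.sub_apply, add_sub_cancel]

theorem even_of_mem_zigzags (hz : UniformContinuous z) (hzz : Function.Involutive z)
    {n : ℕ} (hX : ∀ k < n, IsAcyclic ℤ (Set.univ : Set X) k) {f : ℕ → Cochain X ℤ}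
    (hf : f ∈ zigzags z Set.univ n) (hn : IsCoboundary Set.univ n (f n)) : Even (f 0 []) := by
  obtain ⟨g, hg⟩ := hn
  obtain ⟨h, g, hbot⟩ := exists_zigzag_bottom_eq hz hzz hX hf (h := 0) (g := g)
    (by rwa [map_zero, zero_add])
  have hnil := eventually_nearDiag_zero.1 hbot
  rw [Pi.add_apply, δ_nil, signedDiff_apply] at hnil
  exact ⟨h [], by simpa using hnil⟩

end Zigzags

/-! ### Zigzags over a map of order four -/

section SignedSum

variable {X : Type*} {z : X → X}

/-- The operators `1 + z` (`b` even) and `(z - 1)(z² + 1)` (`b` odd) on cochains. For a map of order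
four two consecutive ones compose to `z⁴ - 1 = 0`. -/
def signedSum (z : X → X) (b : ℕ) : Cochain X ℤ →+ Cochain X ℤ :=
  if Even b then signedDiff z 1 else (signedDiff z 0).comp (signedDiff (fun x => z (z x)) 1)

theorem signedSum_of_even {b : ℕ} (hb : Even b) : signedSum z b = signedDiff z 1 := if_pos hb

theorem signedSum_of_odd {b : ℕ} (hb : Odd b) :
    signedSum z b = (signedDiff z 0).comp (signedDiff (fun x => z (z x)) 1) :=
  if_neg (Nat.not_even_iff_odd.2 hb)

theorem δ_signedSum (z : X → X) (b : ℕ) (f : Cochain X ℤ) :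
    δ (signedSum z b f) = signedSum z b (δ f) := by
  rcases b.even_or_odd with hb | hb
  · rw [signedSum_of_even hb, δ_signedDiff]
  · rw [signedSum_of_odd hb, AddMonoidHom.comp_apply, AddMonoidHom.comp_apply, δ_signedDiff,
      δ_signedDiff]

theorem signedDiff_of_even (z : X → X) {a : ℕ} (ha : Even a) :
    signedDiff (M := ℤ) z a = signedDiff z 0 := by
  rw [signedDiff, signedDiff, ha.neg_one_pow, pow_zero]

theorem signedDiff_of_odd (z : X → X) {a : ℕ} (ha : Odd a) :
    signedDiff (M := ℤ) z a = signedDiff z 1 := by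
  rw [signedDiff, signedDiff, ha.neg_one_pow, pow_one]

theorem signedDiff_comm {w : X → X} (hzw : ∀ x, z (w x) = w (z x)) (a b : ℕ) (f : Cochain X ℤ) :
    signedDiff z a (signedDiff w b f) = signedDiff w b (signedDiff z a f) := by
  funext l
  have hl : (l.map z).map w = (l.map w).map z := by
    simp only [List.map_map, Function.comp_def, hzw]
  simp only [signedDiff_apply, hl, smul_eq_mul]
  ring

theorem signedDiff_zero_signedDiff_one (z : X → X) (f : Cochain X ℤ) :
    signedDiff z 0 (signedDiff z 1 f) = signedDiff (fun x => z (z x)) 0 f := by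
  funext l
  have hl : l.map (fun x => z (z x)) = (l.map z).map z := by rw [List.map_map]; rfl
  simp only [signedDiff_apply, hl, smul_eq_mul]
  ring

theorem signedSum_signedSum (hz : ∀ x, z (z (z (z x))) = x) (a : ℕ) (f : Cochain X ℤ) :
    signedSum z a (signedSum z (a + 1) f) = 0 := by
  have hsq : signedDiff (fun x => z (z x)) 0 (signedDiff (fun x => z (z x)) 1 f) = 0 :=
    signedDiff_signedDiff (z := fun x => z (z x)) hz 0 f
  rcases a.even_or_odd with ha | ha
  · rw [signedSum_of_even ha, signedSum_of_odd ha.add_one, AddMonoidHom.comp_apply,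
      signedDiff_comm (w := z) fun _ => rfl, signedDiff_zero_signedDiff_one, hsq]
  · rw [signedSum_of_odd ha, signedSum_of_even ha.add_one, AddMonoidHom.comp_apply,
      signedDiff_comm (z := fun x => z (z x)) (w := z) fun _ => rfl,
      signedDiff_zero_signedDiff_one, hsq]

variable [UniformSpace X]

theorem signedSum_congr (hz : UniformContinuous z) (a : ℕ) {k : ℕ} {f g : Cochain X ℤ}
    (h : f =ᶠ[nearDiag Set.univ k] g) :
    signedSum z a f =ᶠ[nearDiag Set.univ k] signedSum z a g := by
  rcases a.even_or_odd with ha | ha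
  · rw [signedSum_of_even ha]
    exact signedDiff_congr hz 1 h
  · rw [signedSum_of_odd ha]
    exact signedDiff_congr hz 0 (signedDiff_congr (hz.comp hz) 1 h)

theorem exists_signedSum_zigzag (hz : UniformContinuous z) (hz4 : ∀ x, z (z (z (z x))) = x)
    {n : ℕ} (hX : ∀ k < n, IsAcyclic ℤ (Set.univ : Set X) k) {f : Cochain X ℤ}
    (hf : IsCoboundary Set.univ n (signedSum z n f)) :
    ∃ g : ℕ → Cochain X ℤ, g n = f ∧ IsCoboundary Set.univ 0 (signedSum z 0 (g 0)) ∧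
      ∀ b < n, signedSum z (b + 1) (g (b + 1)) =ᶠ[nearDiag Set.univ (b + 1)] δ (g b) := by
  induction n generalizing f with
  | zero => exact ⟨fun _ => f, rfl, hf, fun b hb => absurd hb b.not_lt_zero⟩
  | succ n ih =>
    obtain ⟨h, hh⟩ := hf
    have hcocycle : IsCocycle Set.univ n (signedSum z n h) := by
      rw [IsCocycle, δ_signedSum]
      filter_upwards [signedSum_congr hz n hh] with l hl
      rw [← hl, signedSum_signedSum hz4]
    obtain ⟨g, hgn, hg0, hg⟩ := ih (fun k hk => hX k (by omega)) (hX n n.lt_succ_self _ hcocycle)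
    refine ⟨Function.update g (n + 1) f, Function.update_self .., ?_, fun b hb => ?_⟩
    · rwa [Function.update_of_ne (by omega)]
    · rcases (Nat.lt_succ_iff.1 hb).lt_or_eq with hbn | rfl
      · rw [Function.update_of_ne (by omega), Function.update_of_ne (by omega)]
        exact hg b hbn
      · rwa [Function.update_self, Function.update_of_ne (by omega), hgn]

/-- Applying `z - 1` to the members of odd arity turns a sequence descending along `signedSum z`
into a zigzag over `z²`. -/
theorem ite_signedDiff_mem_zigzags (hz : UniformContinuous z) {n : ℕ} {g : ℕ → Cochain X ℤ}
    (hg : ∀ b < n, signedSum z (b + 1) (g (b + 1)) =ᶠ[nearDiag Set.univ (b + 1)] δ (g b)) :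
    (fun b => if Even b then g b else signedDiff z 0 (g b)) ∈
      zigzags (fun x => z (z x)) Set.univ n := by
  intro b hb
  dsimp only
  rcases b.even_or_odd with he | ho
  · have hstep := hg b hb
    rw [signedSum_of_odd he.add_one, AddMonoidHom.comp_apply] at hstep
    rwa [if_pos he, if_neg (Nat.not_even_iff_odd.2 he.add_one), signedDiff_of_odd _ he.add_one,
      signedDiff_comm (z := fun x => z (z x)) (w := z) fun _ => rfl]
  · have hstep := signedDiff_congr hz 0 (hg b hb)
    rw [signedSum_of_even ho.add_one, signedDiff_zero_signedDiff_one, ← δ_signedDiff] at hstep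
    rwa [if_neg (Nat.not_even_iff_odd.2 ho), if_pos ho.add_one, signedDiff_of_even _ ho.add_one]

theorem exists_zigzag_sq (hz : UniformContinuous z) (hz4 : ∀ x, z (z (z (z x))) = x)
    {n : ℕ} (hn : Even n) (hX : ∀ k < n, IsAcyclic ℤ (Set.univ : Set X) k) {f : Cochain X ℤ}
    (hf : IsCoboundary Set.univ n (signedDiff z 1 f)) :
    ∃ g ∈ zigzags (fun x => z (z x)) Set.univ n, g n = f ∧ g 0 [] = 0 := by
  obtain ⟨g, hgn, hg0, hg⟩ := exists_signedSum_zigzag hz hz4 hX (by rwa [signedSum_of_even hn])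
  refine ⟨_, ite_signedDiff_mem_zigzags hz hg, by rw [if_pos hn, hgn], ?_⟩
  obtain ⟨h, hh⟩ := hg0
  have hnil := eventually_nearDiag_zero.1 hh
  rw [signedSum_of_even Even.zero, signedDiff_apply, List.map_nil, δ_nil, pow_one,
    neg_one_smul] at hnil
  rw [if_pos Even.zero]
  omega

end SignedSum

/-! ### Degrees modulo two -/

section Pairing

variable {m : ℕ} {ι : Type*}

/-- The zigzag over `signAct a` that starts at the top class of the `i`-th factor: the antipodal
zigzag if `a i = 1`, and the one that vanishes below the top if `a i = 0`. -/
def factorZigzag (m : ℕ) (a : ι → ZMod 2) (i : ι) : ℕ → Cochain (ι → Sph m) ℤ := fun b =>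
  if a i = 0 then (if b = m + 1 then sphereCocycle m (m + 1) i else 0)
  else pullback (fun x => x i) (zigzag m (m + 1) b)

theorem factorZigzag_top (a : ι → ZMod 2) (i : ι) :
    factorZigzag m a i (m + 1) = sphereCocycle m (m + 1) i := by
  rw [factorZigzag, if_pos rfl, sphereCocycle, ite_self]

theorem factorZigzag_zero (a : ι → ZMod 2) (i : ι) :
    ((factorZigzag m a i 0 [] : ℤ) : ZMod 2) = a i := by
  have hone : ∀ t : ZMod 2, t ≠ 0 → 1 = t := by decide
  by_cases ha : a i = 0
  · simp [factorZigzag, ha]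
  · simp [factorZigzag, ha, zigzag_zero_right, hone _ ha]

theorem factorZigzag_mem (hm : Odd m) (a : ι → ZMod 2) (i : ι) :
    factorZigzag m a i ∈ zigzags (signAct a) Set.univ (m + 1) := by
  by_cases ha : a i = 0
  · intro b hb
    have hbot : factorZigzag m a i b = 0 := by rw [factorZigzag, if_pos ha, if_neg hb.ne]
    rw [hbot, map_zero]
    rcases (Nat.lt_succ_iff.1 hb).lt_or_eq with hbm | rfl
    · rw [factorZigzag, if_pos ha, if_neg (by omega), map_zero]
    · have hfix : ∀ x : ι → Sph b, signAct a x i = x i := fun x => by simp [signAct, ha]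
      rw [factorZigzag_top, signedDiff, AddMonoidHom.sub_apply, sphereCocycle, pullback_pullback]
      simp only [hfix, hm.add_one.neg_one_pow, one_smul, AddMonoidHom.id_apply, sub_self,
        EventuallyEq.rfl]
  · have hneg : ∀ x : ι → Sph m, signAct a x i = -x i := fun x => by simp [signAct, ha]
    have hzig := (zigzag_mem_zigzags_and_isCocycle (m := m) (m + 1) le_rfl).1
    rw [subsphere_top] at hzig
    have hfun : factorZigzag m a i = fun b => pullback (fun x => x i) (zigzag m (m + 1) b) :=
      funext fun b => if_neg ha
    rw [hfun]
    exact pullback_mem_zigzags (Pi.uniformContinuous_proj _ i) hneg hzig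

/-- Reduction modulo two of an integral vector. -/
def modTwo : (ι → ℤ) →+ (ι → ZMod 2) := (Int.castAddHom (ZMod 2)).compLeft ι

theorem modTwo_apply (c : ι → ℤ) (i : ι) : modTwo c i = (c i : ZMod 2) := rfl

theorem modTwo_neg (c : ι → ℤ) : modTwo (-c) = modTwo c := by
  rw [map_neg, ZModModule.neg_eq_self]

variable [Fintype ι]

theorem sum_factorZigzag_mem (hm : Odd m) (a : ι → ZMod 2) (c : ι → ℤ) :
    ∑ i, c i • factorZigzag m a i ∈ zigzags (signAct a) Set.univ (m + 1) :=
  sum_mem fun i _ => zsmul_mem (factorZigzag_mem hm a i) _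

theorem sum_factorZigzag_top (a : ι → ZMod 2) (c : ι → ℤ) :
    (∑ i, c i • factorZigzag m a i) (m + 1) = topCocycle m c := by
  simp only [Finset.sum_apply, Pi.smul_apply, factorZigzag_top, topCocycle_apply]

theorem sum_factorZigzag_zero (a : ι → ZMod 2) (c : ι → ℤ) :
    (((∑ i, c i • factorZigzag m a i) 0 [] : ℤ) : ZMod 2) = modTwo c ⬝ᵥ a := by
  simp only [Finset.sum_apply, Pi.smul_apply, smul_eq_mul, Int.cast_sum, Int.cast_mul,
    factorZigzag_zero, dotProduct, modTwo_apply]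

theorem zigzag_bottom_eq_modTwo_dotProduct (hm : Odd m) {a : ι → ZMod 2}
    {f : ℕ → Cochain (ι → Sph m) ℤ} (hf : f ∈ zigzags (signAct a) Set.univ (m + 1)) {c : ι → ℤ}
    (hc : IsCoboundary Set.univ (m + 1) (f (m + 1) - topCocycle m c)) :
    ((f 0 [] : ℤ) : ZMod 2) = modTwo c ⬝ᵥ a := by
  have heven := even_of_mem_zigzags (CompactSpace.uniformContinuous_of_continuous
    (continuous_signAct a)) (signAct_signAct a) (fun k hk => isAcyclic_univ (by omega))
    (sub_mem hf (sum_factorZigzag_mem hm a c)) (by rwa [Pi.sub_apply, sum_factorZigzag_top])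
  rw [← ZMod.intCast_eq_zero_iff_even, Pi.sub_apply, Pi.sub_apply, Int.cast_sub,
    sum_factorZigzag_zero] at heven
  exact sub_eq_zero.1 heven

/-- `F` pulls the top class with coefficients `c` back to the one with coefficients `c'`. -/
def DegreeRel (F : (ι → Sph m) → ι → Sph m) (c c' : ι → ℤ) : Prop :=
  IsCoboundary Set.univ (m + 1) (pullback F (topCocycle m c) - topCocycle m c')

variable {F G : (ι → Sph m) → ι → Sph m} {c c' d d' : ι → ℤ}

theorem DegreeRel.modTwo_dotProduct_eq (hm : Odd m) (hF : Continuous F) {a b : ι → ZMod 2}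
    (hab : ∀ x, F (signAct a x) = signAct b (F x)) (hc : DegreeRel F c c') :
    modTwo c ⬝ᵥ b = modTwo c' ⬝ᵥ a := by
  rw [← sum_factorZigzag_zero (m := m) b c]
  refine zigzag_bottom_eq_modTwo_dotProduct hm (f := fun k =>
    pullback F ((∑ i, c i • factorZigzag m b i) k)) (pullback_mem_zigzags
      (CompactSpace.uniformContinuous_of_continuous hF) hab (sum_factorZigzag_mem hm b c)) ?_
  rwa [sum_factorZigzag_top]

/-- The class `c` lifts to a zigzag over `z² = signAct a` whose bottom is zero, while the bottom of
any such zigzag is `modTwo c ⬝ᵥ a` modulo two. -/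
theorem DegreeRel.modTwo_dotProduct_eq_zero (hm : Odd m) (hF : Continuous F) {a : ι → ZMod 2}
    (hFF : ∀ x, F (F x) = signAct a x) (hc : DegreeRel F c (-c)) : modTwo c ⬝ᵥ a = 0 := by
  have hFu := CompactSpace.uniformContinuous_of_continuous hF
  obtain ⟨g, hg, hgtop, hgbot⟩ := exists_zigzag_sq hFu
    (fun x => by rw [hFF, hFF, signAct_signAct]) hm.add_one
    (fun k hk => isAcyclic_univ (by omega)) (f := topCocycle m c) (by
      rw [signedDiff, pow_one, neg_one_zsmul, sub_neg_eq_add]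
      rwa [DegreeRel, map_neg, sub_neg_eq_add] at hc)
  rw [funext hFF] at hg
  rw [← zigzag_bottom_eq_modTwo_dotProduct hm hg ⟨0, by rw [hgtop, sub_self, map_zero]⟩, hgbot,
    Int.cast_zero]

theorem modTwo_eq_zero_of_isCoboundary (hm : Odd m)
    (hc : IsCoboundary Set.univ (m + 1) (topCocycle m c)) : modTwo c = 0 := by
  refine dotProduct_eq_zero _ fun a => ?_
  have hrel : DegreeRel (m := m) (fun x => x) c 0 := by
    rwa [DegreeRel, pullback_id, map_zero, sub_zero]
  rw [hrel.modTwo_dotProduct_eq hm continuous_id (a := a) fun _ => rfl, map_zero, zero_dotProduct]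

end Pairing

/-! ### The degree homomorphism -/

section Degree

theorem isCoboundary_of_zsmul {X : Type*} [UniformSpace X] {S : Set X} {k : ℕ} (n : ℕ) [NeZero n]
    (hS : IsAcyclic (ZMod n) S k) {f : Cochain X ℤ}
    (hf : IsCoboundary S (k + 1) ((n : ℤ) • f)) : IsCoboundary S (k + 1) f := by
  obtain ⟨h, hh⟩ := hf
  let φ : ℤ →+ ZMod n := Int.castAddHom (ZMod n)
  obtain ⟨p, hp⟩ := hS (fun l => φ (h l)) (by
    filter_upwards [hh] with l hl
    rw [δ_map_coeff]
    change φ (δ h l) = 0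
    rw [← hl]
    simp [φ])
  let q : Cochain X ℤ := fun l => (p l).cast
  have hpq : p = fun l => φ (q l) := funext fun l => (ZMod.intCast_zmod_cast (p l)).symm
  rw [hpq, δ_map_coeff] at hp
  have hdiv : (n : ℤ) • (fun l => (h l - δ q l) / n) =ᶠ[nearDiag S k] h - δ q := by
    filter_upwards [hp] with l hl
    exact Int.mul_ediv_cancel' ((ZMod.intCast_eq_intCast_iff_dvd_sub _ _ n).1 hl.symm)
  refine ⟨fun l => (h l - δ q l) / n, ?_⟩
  filter_upwards [hh, δ_congr hdiv] with l hl hdl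
  rw [map_zsmul, map_sub, δ_δ, sub_zero, ← hl] at hdl
  exact (mul_left_cancel₀ (Nat.cast_ne_zero.2 (NeZero.ne n)) hdl).symm

variable {m : ℕ} {ι : Type*} [Fintype ι] {F G : (ι → Sph m) → ι → Sph m} {c c' d d' e : ι → ℤ}

theorem two_pow_dvd_of_isCoboundary (hm : Odd m) (N : ℕ)
    (hc : IsCoboundary Set.univ (m + 1) (topCocycle m c)) (i : ι) : (2 : ℤ) ^ N ∣ c i := by
  induction N generalizing c with
  | zero => exact one_dvd _
  | succ N ih =>
    choose d hd using fun i => (ZMod.intCast_zmod_eq_zero_iff_dvd (c i) 2).1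
      (congrFun (modTwo_eq_zero_of_isCoboundary hm hc) i)
    obtain rfl : c = (2 : ℤ) • d := funext hd
    rw [map_zsmul] at hc
    exact pow_succ' (2 : ℤ) N ▸
      mul_dvd_mul_left 2 (ih (isCoboundary_of_zsmul 2 (isAcyclic_univ le_rfl) hc))

theorem eq_zero_of_isCoboundary (hm : Odd m)
    (hc : IsCoboundary Set.univ (m + 1) (topCocycle m c)) : c = 0 := by
  funext i
  refine Int.eq_zero_of_abs_lt_dvd (two_pow_dvd_of_isCoboundary hm (c i).natAbs hc i) ?_
  rw [Int.abs_eq_natAbs]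
  exact_mod_cast Nat.lt_two_pow_self

theorem DegreeRel.exists (hm : 1 ≤ m) (hF : Continuous F) (c : ι → ℤ) :
    ∃ c', DegreeRel F c c' := by
  have hcocycle : IsCocycle Set.univ (m + 1) (pullback F (topCocycle m c)) := by
    rw [IsCocycle, δ_pullback, ← map_zero (pullback F)]
    exact pullback_congr_univ (CompactSpace.uniformContinuous_of_continuous hF)
      (isCocycle_topCocycle c)
  obtain ⟨c', h, hh⟩ := exists_topCocycle_class hm hcocycle
  refine ⟨c', h, ?_⟩
  filter_upwards [hh] with l hl
  rw [Pi.sub_apply, hl, Pi.add_apply, add_sub_cancel_left]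

theorem IsCoboundary.add {X M : Type*} [UniformSpace X] [AddCommGroup M] {S : Set X} {k : ℕ}
    {f g : Cochain X M} (hf : IsCoboundary S k f) (hg : IsCoboundary S k g) :
    IsCoboundary S k (f + g) := by
  obtain ⟨h, hh⟩ := hf
  obtain ⟨h', hh'⟩ := hg
  exact ⟨h + h', by rw [map_add]; exact hh.add hh'⟩

theorem IsCoboundary.neg {X M : Type*} [UniformSpace X] [AddCommGroup M] {S : Set X} {k : ℕ}
    {f : Cochain X M} (hf : IsCoboundary S k f) : IsCoboundary S k (-f) := by
  obtain ⟨h, hh⟩ := hf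
  exact ⟨-h, by rw [map_neg]; exact hh.neg⟩

theorem isCoboundary_pullback {X Y M : Type*} [UniformSpace X] [UniformSpace Y] [AddCommGroup M]
    {φ : X → Y} (hφ : UniformContinuous φ) {k : ℕ} {f : Cochain Y M}
    (hf : IsCoboundary Set.univ k f) : IsCoboundary Set.univ k (pullback φ f) := by
  obtain ⟨h, hh⟩ := hf
  exact ⟨pullback φ h, by rw [δ_pullback]; exact pullback_congr_univ hφ hh⟩

theorem DegreeRel.unique (hm : Odd m) (h : DegreeRel F c d) (h' : DegreeRel F c d') : d = d' := by
  refine sub_eq_zero.1 (eq_zero_of_isCoboundary hm ?_)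
  rw [map_sub, ← sub_sub_sub_cancel_left]
  simpa only [sub_eq_add_neg] using IsCoboundary.add h' h.neg

theorem DegreeRel.add (h : DegreeRel F c d) (h' : DegreeRel F c' d') :
    DegreeRel F (c + c') (d + d') := by
  rw [DegreeRel, map_add, map_add, map_add, add_sub_add_comm]
  exact IsCoboundary.add h h'

theorem DegreeRel.comp (hG : Continuous G) (h : DegreeRel F c d) (h' : DegreeRel G d e) :
    DegreeRel (fun x => F (G x)) c e := by
  have hpull := isCoboundary_pullback (CompactSpace.uniformContinuous_of_continuous hG) h
  rw [map_sub, pullback_pullback] at hpull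
  rw [DegreeRel, ← sub_add_sub_cancel _ (pullback G (topCocycle m d))]
  exact hpull.add h'

theorem degreeRel_signAct (hm : Odd m) (a : ι → ZMod 2) (c : ι → ℤ) :
    DegreeRel (signAct (m := m) a) c c := by
  refine ⟨(∑ i, c i • factorZigzag m a i) m, ?_⟩
  have hzig := sum_factorZigzag_mem hm a c m m.lt_succ_self
  rwa [sum_factorZigzag_top, signedDiff, hm.add_one.neg_one_pow, one_smul] at hzig

/-- The endomorphism `c ↦ c'` of the top cohomology `ℤ^ι` induced by `F`. -/
def degreeMap (hm : Odd m) (hF : Continuous F) : (ι → ℤ) →+ (ι → ℤ) :=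
  AddMonoidHom.mk' (fun c => (DegreeRel.exists hm.pos hF c).choose) fun c d =>
    (DegreeRel.exists hm.pos hF (c + d)).choose_spec.unique hm
      ((DegreeRel.exists hm.pos hF c).choose_spec.add (DegreeRel.exists hm.pos hF d).choose_spec)

theorem degreeRel_degreeMap (hm : Odd m) (hF : Continuous F) (c : ι → ℤ) :
    DegreeRel F c (degreeMap hm hF c) :=
  (DegreeRel.exists hm.pos hF c).choose_spec

theorem DegreeRel.degreeMap_eq (hm : Odd m) (hF : Continuous F) (h : DegreeRel F c d) :
    degreeMap hm hF c = d :=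
  (degreeRel_degreeMap hm hF c).unique hm h

end Degree

/-! ### Zeros of quadratic maps over finite fields -/

section Quadratic

open MvPolynomial Module

variable {K V W U : Type*} [Field K] [AddCommGroup V] [Module K V] [AddCommGroup W] [Module K W]
  [AddCommGroup U] [Module K U]

theorem exists_isHomogeneous_two_eval_eq {κ : Type*} [Fintype κ] (Q : QuadraticForm K V)
    (e : κ → V) : ∃ P : MvPolynomial κ K, P.IsHomogeneous 2 ∧
      ∀ x : κ → K, eval x P = Q (∑ i, x i • e i) := by
  obtain ⟨B, rfl⟩ := LinearMap.BilinMap.toQuadraticMap_surjective Q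
  refine ⟨∑ i, ∑ j, C (B (e i) (e j)) * (X i * X j), ?_, fun x => ?_⟩
  · exact IsHomogeneous.sum _ _ _ fun i _ => IsHomogeneous.sum _ _ _ fun j _ =>
      (isHomogeneous_C _ _).mul ((isHomogeneous_X K i).mul (isHomogeneous_X K j))
  · simp only [map_sum, map_mul, eval_C, eval_X, LinearMap.BilinMap.toQuadraticMap_apply,
      map_smul, LinearMap.sum_apply, LinearMap.smul_apply, smul_eq_mul, Finset.mul_sum]
    rw [Finset.sum_comm]
    exact Finset.sum_congr rfl fun i _ => Finset.sum_congr rfl fun j _ => by ring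

theorem exists_ne_zero_quadraticMap_eq_zero [Finite K] [FiniteDimensional K V]
    [FiniteDimensional K W] (Q : QuadraticMap K V W) (hQ : 2 * finrank K W < finrank K V) :
    ∃ v ≠ 0, Q v = 0 := by
  classical
  have := Fintype.ofFinite K
  obtain ⟨p, hp⟩ := CharP.exists K
  have hprime : p.Prime := CharP.char_is_prime K p
  have b := finBasis K V
  have w := finBasis K W
  choose P hP hPe using fun j =>
    exists_isHomogeneous_two_eval_eq ((w.coord j).compQuadraticMap Q) b
  have hsol : ∀ x : Fin (finrank K V) → K,
      (∀ j, eval x (P j) = 0) ↔ Q (∑ i, x i • b i) = 0 := fun x => by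
    rw [← w.forall_coord_eq_zero_iff]
    simp only [hPe, LinearMap.compQuadraticMap_apply]
  have hzero : ∀ j, eval (0 : Fin (finrank K V) → K) (P j) = 0 := (hsol 0).2 (by simp)
  have hdvd := char_dvd_card_solutions_of_fintype_sum_lt p (f := P) <| by
    refine (Finset.sum_le_sum fun j _ => (hP j).totalDegree_le).trans_lt ?_
    simpa [mul_comm] using hQ
  let zero : {x // ∀ j, eval x (P j) = 0} := ⟨0, hzero⟩
  rw [Fintype.card_eq_nat_card] at hdvd
  have hcard := Nat.le_of_dvd (Nat.card_pos_iff.2 ⟨⟨zero⟩, inferInstance⟩) hdvd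
  have := Finite.one_lt_card_iff_nontrivial.1 (hprime.one_lt.trans_le hcard)
  obtain ⟨x, hx⟩ := exists_ne zero
  refine ⟨∑ i, x.1 i • b i, fun h => hx (Subtype.ext (funext fun i => ?_)), (hsol x.1).1 x.2⟩
  exact Fintype.linearIndependent_iff.1 b.linearIndependent x.1 h i

/-- On `ker ℓ` the map `Q` takes its values in `ker C`: every component of `Q` on which it is linear
saves one quadratic equation, at the price of one dimension of `V`. -/
theorem exists_ne_zero_quadraticMap_eq_zero_of_comp_eq [Finite K] [FiniteDimensional K V]
    [FiniteDimensional K W] (Q : QuadraticMap K V W) (C : W →ₗ[K] U) (ℓ : V →ₗ[K] U)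
    (hCQ : ∀ v, C (Q v) = ℓ v) (hQ : 2 * finrank K W < finrank K C.range + finrank K V) :
    ∃ v ≠ 0, Q v = 0 := by
  obtain ⟨π, hπ⟩ := (LinearMap.ker C).subtype.exists_leftInverse_of_injective
    (LinearMap.ker_eq_bot.2 Subtype.val_injective)
  have hrange : finrank K ℓ.range ≤ finrank K C.range := by
    refine Submodule.finrank_mono ?_
    rintro _ ⟨v, rfl⟩
    exact ⟨Q v, hCQ v⟩
  have hC := C.finrank_range_add_finrank_ker
  have hℓ := ℓ.finrank_range_add_finrank_ker
  obtain ⟨v, hv, hv0⟩ := exists_ne_zero_quadraticMap_eq_zero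
    (π.compQuadraticMap (Q.comp (LinearMap.ker ℓ).subtype)) (by omega)
  have hmem : Q v ∈ LinearMap.ker C := (hCQ v).trans v.2
  refine ⟨v, by simpa using hv, ?_⟩
  have hfix : π (Q v) = ⟨Q v, hmem⟩ := LinearMap.congr_fun hπ ⟨Q v, hmem⟩
  exact congrArg Subtype.val (hfix.symm.trans hv0)

end Quadratic

section ZModTwo

variable {V W : Type*} [AddCommGroup V] [Module (ZMod 2) V] [AddCommGroup W] [Module (ZMod 2) W]

/-- The quadratic map over `ℤ/2` given by a function whose deviation from additivity is additive in
its first argument. -/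
def quadraticMapModTwo (q : V → W) (β : V → V → W) (hq : ∀ x y, q (x + y) = q x + q y + β x y)
    (hβ : ∀ x x' y, β (x + x') y = β x y + β x' y) : QuadraticMap (ZMod 2) V W := by
  have hβ0 : ∀ y, β 0 y = 0 := fun y => by simpa using hβ 0 0 y
  have hq0 : q 0 = 0 := by simpa [hβ0] using hq 0 0
  have hpolar : ∀ x y, QuadraticMap.polar q x y = β x y := fun x y => by
    rw [QuadraticMap.polar, hq]
    abel
  have htwo : ∀ t : ZMod 2, t = 0 ∨ t = 1 := by decide
  refine QuadraticMap.ofPolar q (fun t x => ?_) (fun x x' y => ?_) fun t x y => ?_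
  · rcases htwo t with rfl | rfl <;> simp [hq0]
  · simp only [hpolar, hβ]
  · rcases htwo t with rfl | rfl <;> simp [hpolar, hβ0]

end ZModTwo

/-! ### Simultaneous eigenvectors of commuting involutions -/

section Eigenvectors

open Module

theorem exists_forall_apply_eq_of_linearIndependent {K V κ : Type*} [Field K] [AddCommGroup V]
    [Module K V] [FiniteDimensional K V] {χ : κ → Dual K V} (hχ : LinearIndependent K χ)
    (y : κ → K) : ∃ g, ∀ i, χ i g = y i := by
  obtain ⟨f, hf⟩ := ((Basis.span hχ).constr K y).exists_extend
  refine ⟨(evalEquiv K V).symm f, fun i => ?_⟩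
  rw [apply_evalEquiv_symm_apply, ← (Basis.span hχ).constr_basis K y i, ← hf, Basis.span_apply]
  rfl

variable {R A V : Type*} [CommRing R] [AddCommGroup A] [Module R A]
  [AddCommGroup V] [Module (ZMod 2) V] {μ : V → End R A}

theorem apply_apply_self (h0 : μ 0 = 1) (hadd : ∀ g h, μ (g + h) = μ g * μ h) (g : V) (c : A) :
    μ g (μ g c) = c := by
  rw [← End.mul_apply, ← hadd, ZModModule.add_self, h0, End.one_apply]

theorem exists_eigenvector_forall_mem_finset (h0 : μ 0 = 1)
    (hadd : ∀ g h, μ (g + h) = μ g * μ h) {h : V} (hh : μ h ≠ 1) (T : Finset V) :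
    ∃ v ≠ 0, μ h v = -v ∧ ∀ g ∈ T, μ g v = v ∨ μ g v = -v := by
  classical
  have hcomm : ∀ g g' c, μ g (μ g' c) = μ g' (μ g c) := fun g g' c => by
    rw [← End.mul_apply, ← End.mul_apply, ← hadd, ← hadd, add_comm]
  induction T using Finset.induction_on with
  | empty =>
    obtain ⟨c, hc⟩ : ∃ c, μ h c ≠ c := by
      by_contra! hid
      exact hh (LinearMap.ext hid)
    exact ⟨μ h c - c, sub_ne_zero.2 hc, by rw [map_sub, apply_apply_self h0 hadd, neg_sub],
      by simp⟩
  | insert g T _ ih =>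
    obtain ⟨v, hv0, hvh, hvT⟩ := ih
    by_cases hg : v + μ g v = 0
    · exact ⟨v, hv0, hvh, Finset.forall_mem_insert _ _ _ |>.2
        ⟨Or.inr (eq_neg_of_add_eq_zero_right hg), hvT⟩⟩
    · refine ⟨v + μ g v, hg, by rw [map_add, hcomm, hvh, map_neg, neg_add],
        Finset.forall_mem_insert _ _ _ |>.2 ⟨Or.inl ?_, fun g' hg' => ?_⟩⟩
      · rw [map_add, apply_apply_self h0 hadd, add_comm]
      · rw [map_add, hcomm]
        exact (hvT g' hg').imp (fun e => by rw [e]) fun e => by rw [e, map_neg, neg_add]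

variable [Finite V] [IsDomain R] [Module.IsTorsionFree R A] [NeZero (2 : R)]

theorem exists_eigencharacter (h0 : μ 0 = 1) (hadd : ∀ g h, μ (g + h) = μ g * μ h) {h : V}
    (hh : μ h ≠ 1) : ∃ χ : Dual (ZMod 2) V, χ h ≠ 0 ∧
      ∃ v ≠ 0, ∀ g, μ g v = if χ g = 0 then v else -v := by
  classical
  have := Fintype.ofFinite V
  obtain ⟨v, hv0, hvh, hv⟩ := exists_eigenvector_forall_mem_finset h0 hadd hh Finset.univ
  have hv : ∀ g, μ g v = v ∨ μ g v = -v := fun g => hv g (Finset.mem_univ g)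
  have hvv : -v ≠ v := fun e => hv0 <| (smul_eq_zero.1 (show (2 : R) • v = 0 by
    rw [two_smul, ← eq_neg_iff_add_eq_zero, e])).resolve_left two_ne_zero
  let χ : V →+ ZMod 2 := AddMonoidHom.mk' (fun g => if μ g v = v then 0 else 1) fun g g' => by
    have htwo : (0 : ZMod 2) = 1 + 1 := by decide
    rw [hadd, End.mul_apply]
    rcases hv g with e | e <;> rcases hv g' with e' | e' <;> simp [e, e', hvv, htwo]
  have hχ : ∀ g, χ g = if μ g v = v then 0 else 1 := fun _ => rfl
  refine ⟨χ.toZModLinearMap 2, ?_, v, hv0, fun g => ?_⟩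
  · simp [hχ, hvh, hvv]
  · rcases hv g with e | e <;> simp [hχ, e, hvv]

theorem linearIndependent_of_eigencharacters {κ : Type*} [Finite κ] {χ : κ → Dual (ZMod 2) V}
    (hχ : LinearIndependent (ZMod 2) χ) {v : κ → A} (hv0 : ∀ i, v i ≠ 0)
    (hv : ∀ i g, μ g (v i) = if χ i g = 0 then v i else -v i) : LinearIndependent R v := by
  classical
  have := Fintype.ofFinite κ
  rw [Fintype.linearIndependent_iff]
  intro a ha i
  obtain ⟨d, hd⟩ := exists_forall_apply_eq_of_linearIndependent hχ (Pi.single i 1)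
  have hproj : ∀ j, v j - μ d (v j) = if j = i then (2 : R) • v i else 0 := fun j => by
    rw [hv, hd]
    rcases eq_or_ne j i with rfl | h
    · simp [two_smul]
    · simp [h]
  have hsum : ∑ j, a j • (v j - μ d (v j)) = 0 := by
    simp only [smul_sub, Finset.sum_sub_distrib, ← map_smul, ← map_sum, ha, map_zero, sub_zero]
  simp only [hproj, smul_ite, smul_zero, Finset.sum_ite_eq', Finset.mem_univ, if_true,
    smul_smul] at hsum
  exact ((mul_eq_zero.1 ((smul_eq_zero.1 hsum).resolve_right (hv0 i))).resolve_right two_ne_zero)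

theorem exists_finrank_le_finrank_eigenspace_neg_one [IsNoetherianRing R] [Module.Finite R A]
    (h0 : μ 0 = 1) (hadd : ∀ g h, μ (g + h) = μ g * μ h) {K : Submodule (ZMod 2) V}
    (hK : ∀ g, μ g = 1 → g ∈ K) :
    ∃ g, finrank (ZMod 2) V ≤ finrank R ((μ g).eigenspace (-1)) + finrank (ZMod 2) K := by
  let S : Set (Dual (ZMod 2) V) := {χ | ∃ v ≠ 0, ∀ g, μ g v = if χ g = 0 then v else -v}
  have hS : (Submodule.span (ZMod 2) S).dualCoannihilator ≤ K := by
    intro h hh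
    refine hK h ?_
    by_contra hne
    obtain ⟨χ, hχ, hv⟩ := exists_eigencharacter h0 hadd hne
    exact hχ ((Submodule.mem_dualCoannihilator _).1 hh χ (Submodule.subset_span hv))
  have hdim := Subspace.finrank_add_finrank_dualCoannihilator_eq (Submodule.span (ZMod 2) S)
  have hle := Submodule.finrank_mono hS
  obtain ⟨χ, hχS, -, hχ⟩ := Submodule.exists_fun_fin_finrank_span_eq (ZMod 2) S
  choose v hv0 hv using hχS
  obtain ⟨g, hg⟩ := exists_forall_apply_eq_of_linearIndependent hχ fun _ => 1
  have hmem : ∀ i, v i ∈ (μ g).eigenspace (-1) := fun i => by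
    simp [hv, hg]
  have hind : LinearIndependent R fun i => (⟨v i, hmem i⟩ : (μ g).eigenspace (-1)) :=
    .of_comp (Submodule.subtype _) (linearIndependent_of_eigencharacters hχ hv0 hv)
  have hcard := hind.fintype_card_le_finrank
  rw [Fintype.card_fin] at hcard
  exact ⟨g, by omega⟩

end Eigenvectors

theorem linearIndependent_modTwo_of_basis {ι κ : Type*} [Finite κ] {L : Submodule ℤ (ι → ℤ)}
    (hL : ∀ x, (2 : ℤ) • x ∈ L → x ∈ L) (b : Module.Basis κ ℤ L) :
    LinearIndependent (ZMod 2) fun i => modTwo (b i : ι → ℤ) := by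
  have := Fintype.ofFinite κ
  rw [Fintype.linearIndependent_iff]
  intro a ha i
  let w : L := ∑ i, ((a i).val : ℤ) • b i
  have hdvd : ∀ j, (2 : ℤ) ∣ (w : ι → ℤ) j := fun j => by
    have haj := congrFun ha j
    simp only [Finset.sum_apply, Pi.smul_apply, smul_eq_mul, modTwo_apply] at haj
    refine (ZMod.intCast_zmod_eq_zero_iff_dvd _ 2).1 (Eq.trans ?_ haj)
    simp only [w, AddSubmonoidClass.coe_finsetSum, Submodule.coe_smul, Finset.sum_apply,
      Pi.smul_apply, smul_eq_mul, Int.cast_sum, Int.cast_mul, Int.cast_natCast,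
      ZMod.natCast_zmod_val]
  choose u hu using hdvd
  have hwu : (w : ι → ℤ) = (2 : ℤ) • u := funext hu
  have hcoord := congrArg (fun x => b.repr x i)
    (show w = (2 : ℤ) • ⟨u, hL u (hwu ▸ w.2)⟩ from Subtype.ext hwu)
  simp only [w, b.repr_sum_self, map_smul, Finsupp.smul_apply, smul_eq_mul] at hcoord
  rw [← ZMod.natCast_zmod_val (a i), ZMod.natCast_eq_zero_iff]
  exact Int.natCast_dvd_natCast.1 ⟨_, hcoord⟩

/-! ### Lifting maps to products of spheres -/

section Lifts

open scoped RealInnerProductSpace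

variable {X ι : Type*} {m : ℕ}

theorem inner_mul_inner_mul_inner_pos {E : Type*} [NormedAddCommGroup E] [InnerProductSpace ℝ E]
    {u v w : E} (hu : ‖u‖ = 1) (hv : ‖v‖ = 1) (hw : ‖w‖ = 1) (huv : 1 / 2 < ⟪u, v⟫ ^ 2)
    (huw : 1 / 2 < ⟪u, w⟫ ^ 2) : 0 < ⟪u, v⟫ * ⟪u, w⟫ * ⟪v, w⟫ := by
  have hcs := real_inner_mul_inner_self_le (v - ⟪u, v⟫ • u) (w - ⟪u, w⟫ • u)
  simp only [inner_sub_left, inner_sub_right, real_inner_smul_left, real_inner_smul_right,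
    real_inner_self_eq_norm_sq, norm_smul, mul_pow, Real.norm_eq_abs, sq_abs, hu, hv, hw,
    real_inner_comm u v, real_inner_comm u w] at hcs
  nlinarith [sq_nonneg ⟪v, w⟫]

/-- The sign of a nonzero real number, with values in `ℤ/2`. -/
def signBit (t : ℝ) : ZMod 2 := if 0 < t then 0 else 1

theorem signBit_of_pos {t : ℝ} (ht : 0 < t) : signBit t = 0 := if_pos ht

theorem signBit_of_neg {t : ℝ} (ht : t < 0) : signBit t = 1 := if_neg ht.not_gt

theorem pos_of_signBit_eq_zero {t : ℝ} (ht : signBit t = 0) : 0 < t := by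
  by_contra h
  exact one_ne_zero ((if_neg h).symm.trans ht)

theorem signBit_mul {s t : ℝ} (hs : s ≠ 0) (ht : t ≠ 0) :
    signBit (s * t) = signBit s + signBit t := by
  rcases hs.lt_or_gt with hs | hs <;> rcases ht.lt_or_gt with ht | ht
  · rw [signBit_of_pos (mul_pos_of_neg_of_neg hs ht), signBit_of_neg hs, signBit_of_neg ht]
    decide
  · rw [signBit_of_neg (mul_neg_of_neg_of_pos hs ht), signBit_of_neg hs, signBit_of_pos ht,
      add_zero]
  · rw [signBit_of_neg (mul_neg_of_pos_of_neg hs ht), signBit_of_pos hs, signBit_of_neg ht,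
      zero_add]
  · rw [signBit_of_pos (mul_pos hs ht), signBit_of_pos hs, signBit_of_pos ht, add_zero]

theorem Sph.inner_eq_sum (u v : Sph m) : ⟪u.1, v.1⟫ = ∑ p, u.1 p * v.1 p := by
  simp only [PiLp.inner_apply, RCLike.inner_apply, conj_trivial, mul_comm]

theorem Sph.inner_self (u : Sph m) : ⟪u.1, u.1⟫ = 1 := by
  rw [real_inner_self_eq_norm_sq, norm_eq_of_mem_sphere u, one_pow]

theorem Sph.inner_sq_eq_sum (u v : Sph m) :
    ⟪u.1, v.1⟫ ^ 2 = ∑ p, ∑ q, u.1 p * u.1 q * (v.1 p * v.1 q) := by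
  rw [sq, inner_eq_sum, Finset.sum_mul_sum]
  exact Finset.sum_congr rfl fun p _ => Finset.sum_congr rfl fun q _ => mul_mul_mul_comm _ _ _ _

theorem signBit_inner_add_eq_zero {u v w : Sph m} (huv : 1 / 2 < ⟪u.1, v.1⟫ ^ 2)
    (huw : 1 / 2 < ⟪u.1, w.1⟫ ^ 2) :
    signBit ⟪u.1, v.1⟫ + signBit ⟪u.1, w.1⟫ + signBit ⟪v.1, w.1⟫ = 0 := by
  have hpos := inner_mul_inner_mul_inner_pos (norm_eq_of_mem_sphere u) (norm_eq_of_mem_sphere v)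
    (norm_eq_of_mem_sphere w) huv huw
  have hne := mul_ne_zero_iff.1 hpos.ne'
  rw [← signBit_mul (left_ne_zero_of_mul hne.1) (right_ne_zero_of_mul hne.1),
    ← signBit_mul hne.1 hne.2, signBit_of_pos hpos]

theorem Sph.signBit_inner_signSMul {u v : Sph m} (huv : ⟪u.1, v.1⟫ ≠ 0) (s t : ZMod 2) :
    signBit ⟪(signSMul s u).1, (signSMul t v).1⟫ = s + t + signBit ⟪u.1, v.1⟫ := by
  have hneg : signBit (-1) = 1 := signBit_of_neg (by norm_num)
  have hneg' : signBit (-⟪u.1, v.1⟫) = 1 + signBit ⟪u.1, v.1⟫ := by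
    rw [neg_eq_neg_one_mul, signBit_mul (by norm_num) huv, hneg]
  have htwo : ∀ t : ZMod 2, t = 0 ∨ t = 1 := by decide
  have hone : (1 : ZMod 2) + 1 = 0 := by decide
  rcases htwo s with rfl | rfl <;> rcases htwo t with rfl | rfl <;>
    simp [signSMul, hneg', hone]

section Continuity

variable [TopologicalSpace X] {s : X → Sph m}

theorem continuous_inner_sq (hs : ∀ p q, Continuous fun x => (s x).1 p * (s x).1 q) :
    Continuous fun z : X × X => ⟪(s z.1).1, (s z.2).1⟫ ^ 2 := by
  simp only [Sph.inner_sq_eq_sum]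
  exact continuous_finsetSum _ fun p _ => continuous_finsetSum _ fun q _ =>
    ((hs p q).comp continuous_fst).mul ((hs p q).comp continuous_snd)

theorem continuous_of_continuous_mul_of_inner_pos
    (hs : ∀ p q, Continuous fun x => (s x).1 p * (s x).1 q)
    (hpos : ∀ x, ∀ᶠ y in 𝓝 x, 0 < ⟪(s x).1, (s y).1⟫) : Continuous s := by
  refine continuous_induced_rng.2 (continuous_iff_continuousAt.2 fun x => ?_)
  rw [ContinuousAt, tendsto_iff_norm_sub_tendsto_zero]
  have hsq : Tendsto (fun y => ⟪(s x).1, (s y).1⟫ ^ 2) (𝓝 x) (𝓝 1) := by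
    have hcont := ((continuous_inner_sq hs).comp (Continuous.prodMk_right x)).tendsto x
    simpa only [Function.comp_def, Sph.inner_self, one_pow] using hcont
  have hlim : Tendsto (fun y => √(2 - 2 * √(⟪(s x).1, (s y).1⟫ ^ 2))) (𝓝 x) (𝓝 0) := by
    simpa using ((hsq.sqrt.const_mul 2).const_sub 2).sqrt
  refine hlim.congr' ?_
  filter_upwards [hpos x] with y hy
  rw [Real.sqrt_sq hy.le, ← Real.sqrt_sq (norm_nonneg _)]
  congr 1
  simp only [Function.comp_apply]
  rw [norm_sub_sq_real, norm_eq_of_mem_sphere, norm_eq_of_mem_sphere, real_inner_comm]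
  ring

theorem eq_or_eq_neg_of_continuous [PreconnectedSpace X] {g g' : X → Sph m}
    (hg : Continuous g) (hg' : Continuous g') (h : ∀ x, g' x = g x ∨ g' x = -g x) :
    (∀ x, g' x = g x) ∨ ∀ x, g' x = -g x := by
  have hcont : Continuous fun x => ⟪(g x).1, (g' x).1⟫ :=
    (continuous_subtype_val.comp hg).inner (continuous_subtype_val.comp hg')
  have hne : (-1 : ℝ) ≠ 1 := by norm_num
  rcases isPreconnected_univ.eq_one_or_eq_neg_one_of_sq_eq hcont.continuousOn (fun x _ => by
    rcases h x with e | e <;> simp [e]) with hinner | hinner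
  · refine Or.inl fun x => (h x).resolve_right fun e => hne ?_
    simpa [e, Sph.inner_self] using hinner (Set.mem_univ x)
  · refine Or.inr fun x => (h x).resolve_left fun e => hne.symm ?_
    simpa [e, Sph.inner_self] using hinner (Set.mem_univ x)

end Continuity

/-- The function `signBit ⟪s x, s y⟫` is a cocycle with values in `ℤ/2`, the obstruction to choosing
the signs of `s` continuously. -/
theorem exists_signBit_inner_eq_sub [UniformSpace X] [CompactSpace X]
    (hX : IsAcyclic (ZMod 2) (Set.univ : Set X) 2) {s : X → Sph m}
    (hs : ∀ p q, Continuous fun x => (s x).1 p * (s x).1 q) :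
    ∃ t : X → ZMod 2, ∀ᶠ z in 𝓤 X, ⟪(s z.1).1, (s z.2).1⟫ ≠ 0 ∧
      signBit ⟪(s z.1).1, (s z.2).1⟫ = t z.2 - t z.1 := by
  let V : Set (X × X) := {z | 1 / 2 < ⟪(s z.1).1, (s z.2).1⟫ ^ 2}
  have hV : V ∈ 𝓤 X := by
    rw [← nhdsSet_diagonal_eq_uniformity]
    refine (isOpen_lt continuous_const (continuous_inner_sq hs)).mem_nhdsSet.2 ?_
    rintro ⟨x, y⟩ (rfl : x = y)
    change 1 / 2 < ⟪(s x).1, (s x).1⟫ ^ 2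
    rw [Sph.inner_self]
    norm_num
  let f : Cochain X (ZMod 2)
    | [x, y] => signBit ⟪(s x).1, (s y).1⟫
    | _ => 0
  have hf : IsCocycle Set.univ 2 f := by
    filter_upwards [eventually_nearDiag_close hV] with l ⟨hlen, _, hl⟩
    obtain ⟨x, y, z, rfl⟩ := List.length_eq_three.1 hlen
    have hsum := signBit_inner_add_eq_zero (hl x (by simp) y (by simp))
      (hl x (by simp) z (by simp))
    rw [Pi.zero_apply, ← hsum]
    simp only [δ_cons, δ_nil, f, CharTwo.sub_eq_add]
    ring
  obtain ⟨h, W, hW, hh⟩ := hX f hf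
  refine ⟨fun x => h [x], ?_⟩
  filter_upwards [hV, hW, symm_le_uniformity hW] with ⟨x, y⟩ hxyV hxy hyx
  refine ⟨fun e => ?_, ?_⟩
  · norm_num [V, e] at hxyV
  · have hrefl : ∀ z, (z, z) ∈ W := fun z => refl_mem_uniformity hW
    have hyx : (y, x) ∈ W := hyx
    simpa [δ_cons, f] using hh [x, y] rfl (by simp) (by simp [hrefl, hxy, hyx])

theorem exists_continuous_eq_or_eq_neg [UniformSpace X] [CompactSpace X]
    (hX : IsAcyclic (ZMod 2) (Set.univ : Set X) 2) {s : X → Sph m}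
    (hs : ∀ p q, Continuous fun x => (s x).1 p * (s x).1 q) :
    ∃ g : X → Sph m, Continuous g ∧ ∀ x, g x = s x ∨ g x = -s x := by
  obtain ⟨t, ht⟩ := exists_signBit_inner_eq_sub hX hs
  refine ⟨fun x => Sph.signSMul (t x) (s x), ?_, fun x => Sph.signSMul_eq_or_eq_neg _ _⟩
  refine continuous_of_continuous_mul_of_inner_pos (fun p q => ?_) fun x => ?_
  · exact (hs p q).congr fun x => (Sph.signSMul_apply_mul_apply _ _ p q).symm
  · filter_upwards [UniformSpace.ball_mem_nhds x ht] with y ⟨hne, hsub⟩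
    refine pos_of_signBit_eq_zero ?_
    rw [Sph.signBit_inner_signSMul hne, hsub, CharTwo.sub_eq_add, add_comm (t y),
      CharTwo.add_self_eq_zero]

theorem Sph.preconnectedSpace (hm : 1 ≤ m) : PreconnectedSpace (Sph m) := by
  refine Subtype.preconnectedSpace (isPreconnected_sphere ?_ _ _)
  rw [← Module.finrank_eq_rank, finrank_euclideanSpace_fin]
  exact_mod_cast Nat.lt_succ_of_le hm

/-- The covering of a product of projective spaces by the product of spheres. -/
def proj (x : ι → Sph m) : ι → RP m := fun i => Quot.mk _ (x i)

theorem continuous_proj : Continuous (proj (ι := ι) (m := m)) :=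
  continuous_pi fun i => continuous_quot_mk.comp (continuous_apply i)

/-- The product of two homogeneous coordinates, normalized to lie on the sphere, as a function on
projective space. -/
def RP.coordMul (p q : Fin (m + 1)) : RP m → ℝ :=
  Quot.lift (fun u : Sph m => u.1 p * u.1 q) fun u v h => by
    rcases h with h | h <;> simp [h]

theorem RP.continuous_coordMul (p q : Fin (m + 1)) : Continuous (RP.coordMul p q) :=
  continuous_quot_lift _ ((continuous_coord p).mul (continuous_coord q))

theorem RP.mk_eq_mk_iff {u v : Sph m} :
    (Quot.mk (antipodal m) u : RP m) = Quot.mk _ v ↔ v = u ∨ v = -u := by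
  constructor
  · intro h
    exact Sph.eq_or_eq_neg fun p q => congrArg (RP.coordMul p q) h.symm
  · rintro (rfl | rfl)
    · rfl
    · exact Quot.sound (Or.inr rfl)

theorem proj_signAct (a : ι → ZMod 2) (x : ι → Sph m) : proj (signAct a x) = proj x := by
  funext i
  by_cases h : a i = 0
  · simp [proj, signAct, h]
  · exact RP.mk_eq_mk_iff.2 (Or.inr (show x i = -(signAct a x i) by simp [signAct, h]))

theorem exists_lift_proj [Finite ι] (hm : 2 ≤ m) {R : (ι → RP m) → ι → RP m} (hR : Continuous R) :
    ∃ F : (ι → Sph m) → ι → Sph m, Continuous F ∧ ∀ x, proj (F x) = R (proj x) := by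
  have hcoord : ∀ i, ∃ g : (ι → Sph m) → Sph m, Continuous g ∧
      ∀ x, (Quot.mk _ (g x) : RP m) = R (proj x) i := by
    intro i
    have hRi : Continuous fun x : ι → Sph m => R (proj x) i :=
      (continuous_apply i).comp (hR.comp continuous_proj)
    obtain ⟨g, hg, hgs⟩ := exists_continuous_eq_or_eq_neg (isAcyclic_univ hm)
      (s := fun x : ι → Sph m => (R (proj x) i).out) fun p q =>
        ((RP.continuous_coordMul p q).comp hRi).congr fun x =>
          congrArg (RP.coordMul p q) (Quot.out_eq _).symm
    refine ⟨g, hg, fun x => ?_⟩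
    rw [← Quot.out_eq (R (proj x) i), eq_comm, RP.mk_eq_mk_iff]
    exact hgs x
  choose g hg hgR using hcoord
  exact ⟨fun x i => g i x, continuous_pi hg, fun x => funext fun i => hgR i x⟩

theorem exists_eq_signAct_of_proj_eq (hm : 1 ≤ m) {F F' : (ι → Sph m) → ι → Sph m}
    (hF : Continuous F) (hF' : Continuous F') (h : ∀ x, proj (F' x) = proj (F x)) :
    ∃ a, ∀ x, F' x = signAct a (F x) := by
  have := Sph.preconnectedSpace hm
  have hcoord : ∀ i, ∃ t : ZMod 2, ∀ x, F' x i = Sph.signSMul t (F x i) := fun i => by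
    rcases eq_or_eq_neg_of_continuous ((continuous_apply i).comp hF)
      ((continuous_apply i).comp hF')
      (fun x => RP.mk_eq_mk_iff.1 (congrFun (h x) i).symm) with e | e
    · exact ⟨0, fun x => by simpa using e x⟩
    · exact ⟨1, fun x => by simpa using e x⟩
  choose a ha using hcoord
  exact ⟨a, fun x => funext fun i => ha i x⟩

end Lifts

/-! ### Free extensions of the sign group -/

/-- Maps of a product of spheres, indexed by `V`, that together with the sign changes form an
extension of `V` by the sign group: `factor` is the factor set of the extension for the section
`toFun`, and `conj` is the action of `V` on the sign group by conjugation. -/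
structure SignExtension (V ι : Type*) (m : ℕ) [AddCommGroup V] where
  toFun : V → (ι → Sph m) → ι → Sph m
  continuous_toFun : ∀ g, Continuous (toFun g)
  zeroSign : ι → ZMod 2
  zero_apply : ∀ x, toFun 0 x = signAct zeroSign x
  factor : V → V → ι → ZMod 2
  add_apply : ∀ g h x, toFun (g + h) x = signAct (factor g h) (toFun g (toFun h x))
  conj : V → (ι → ZMod 2) → ι → ZMod 2
  apply_signAct : ∀ g a x, toFun g (signAct a x) = signAct (conj g a) (toFun g x)

namespace SignExtension

open Module

variable {V ι : Type*} {m : ℕ} [AddCommGroup V]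

instance : CoeFun (SignExtension V ι m) fun _ => V → (ι → Sph m) → ι → Sph m := ⟨toFun⟩

/-- The sign change `E g ∘ E g`. -/
def square (E : SignExtension V ι m) (g : V) : ι → ZMod 2 := E.factor g g + E.zeroSign

/-- The sign change by which `E g ∘ E h` and `E h ∘ E g` differ. -/
def commutator (E : SignExtension V ι m) (g h : V) : ι → ZMod 2 := E.factor g h + E.factor h g

theorem apply_apply_comm (E : SignExtension V ι m) (g h : V) (x : ι → Sph m) :
    E g (E h x) = signAct (E.commutator g h) (E h (E g x)) := by
  rw [commutator, signAct_add, ← add_apply, add_comm h g, add_apply, signAct_signAct]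

section DegreeAction

variable [Fintype ι]

/-- The action of `V` on the cohomology of the product of spheres in degree `m`. -/
def degree (hm : Odd m) (E : SignExtension V ι m) (g : V) : End ℤ (ι → ℤ) :=
  (degreeMap hm (E.continuous_toFun g)).toIntLinearMap

theorem degreeRel_degree (hm : Odd m) (E : SignExtension V ι m) (g : V) (c : ι → ℤ) :
    DegreeRel (E g) c (E.degree hm g c) :=
  degreeRel_degreeMap hm (E.continuous_toFun g) c

theorem degree_zero (hm : Odd m) (E : SignExtension V ι m) : E.degree hm 0 = 1 := by
  refine LinearMap.ext fun c => DegreeRel.degreeMap_eq hm (E.continuous_toFun 0) ?_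
  rw [show E 0 = signAct E.zeroSign from funext E.zero_apply]
  exact degreeRel_signAct hm E.zeroSign c

theorem degree_add (hm : Odd m) (E : SignExtension V ι m) (g h : V) :
    E.degree hm (g + h) = E.degree hm g * E.degree hm h := by
  refine LinearMap.ext fun c => DegreeRel.degreeMap_eq hm (E.continuous_toFun (g + h)) ?_
  rw [add_comm, show E (h + g) = fun x => signAct (E.factor h g) (E h (E g x)) from
    funext (E.add_apply h g)]
  have hcomp := (E.degreeRel_degree hm h c).comp (E.continuous_toFun g)
    (E.degreeRel_degree hm g (E.degree hm h c))
  exact (degreeRel_signAct hm (E.factor h g) c).comp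
    ((E.continuous_toFun h).comp (E.continuous_toFun g)) hcomp

theorem modTwo_dotProduct_conj (hm : Odd m) (E : SignExtension V ι m) (g : V) (c : ι → ℤ)
    (a : ι → ZMod 2) : modTwo c ⬝ᵥ E.conj g a = modTwo (E.degree hm g c) ⬝ᵥ a :=
  (E.degreeRel_degree hm g c).modTwo_dotProduct_eq hm (E.continuous_toFun g) (E.apply_signAct g a)

theorem conj_of_degree_eq_one {hm : Odd m} {E : SignExtension V ι m} {k : V}
    (hk : E.degree hm k = 1) (a : ι → ZMod 2) : E.conj k a = a := by
  classical
  funext i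
  have hi : modTwo (Pi.single i 1) = Pi.single i 1 := by
    ext j
    rcases eq_or_ne j i with rfl | h <;> simp [modTwo_apply, *]
  simpa [hk, hi] using E.modTwo_dotProduct_conj hm k (Pi.single i 1) a

theorem apply_signAct_of_degree_eq_one {hm : Odd m} {E : SignExtension V ι m} {k : V}
    (hk : E.degree hm k = 1) (a : ι → ZMod 2) (x : ι → Sph m) :
    E k (signAct a x) = signAct a (E k x) := by
  rw [apply_signAct, conj_of_degree_eq_one hk]

theorem commutator_add {hm : Odd m} (E : SignExtension V ι m) (g : V) {h : V}
    (hh : E.degree hm h = 1) (h' : V) :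
    E.commutator g (h + h') = E.commutator g h + E.commutator g h' +
      (E.conj g (E.factor h h') + E.factor h h') := by
  refine eq_of_signAct_eq (x := E (h + h') (E g fun _ => pole 0)) ?_
  simp only [signAct_add]
  rw [← apply_apply_comm, add_apply, add_apply, apply_signAct, signAct_signAct,
    apply_apply_comm E g h, apply_apply_comm E g h', apply_signAct_of_degree_eq_one hh,
    signAct_comm (E.conj g _), signAct_comm (E.conj g _)]

theorem commutator_add_of_degree_eq_one {hm : Odd m} (E : SignExtension V ι m) {g h : V}
    (hg : E.degree hm g = 1) (hh : E.degree hm h = 1) (h' : V) :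
    E.commutator g (h + h') = E.commutator g h + E.commutator g h' := by
  rw [commutator_add E g hh, conj_of_degree_eq_one hg, ZModModule.add_self, add_zero]

theorem modTwo_dotProduct_commutator_add {hm : Odd m} (E : SignExtension V ι m) {g h : V}
    {c : ι → ℤ} (hc : E.degree hm g c = -c) (hh : E.degree hm h = 1) (h' : V) :
    modTwo c ⬝ᵥ E.commutator g (h + h') =
      modTwo c ⬝ᵥ E.commutator g h + modTwo c ⬝ᵥ E.commutator g h' := by
  rw [commutator_add E g hh, dotProduct_add, dotProduct_add, dotProduct_add,
    E.modTwo_dotProduct_conj hm, hc, modTwo_neg, CharTwo.add_self_eq_zero, add_zero]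

end DegreeAction

variable [Module (ZMod 2) V]

theorem apply_apply (E : SignExtension V ι m) (g : V) (x : ι → Sph m) :
    E g (E g x) = signAct (E.square g) x := by
  rw [square, signAct_add, ← zero_apply, ← ZModModule.add_self g, add_apply, signAct_signAct]

variable [Fintype ι]

theorem square_add {hm : Odd m} (E : SignExtension V ι m) {k k' : V} (hk : E.degree hm k = 1)
    (hk' : E.degree hm k' = 1) :
    E.square (k + k') = E.square k + E.square k' + E.commutator k' k := by
  refine eq_of_signAct_eq (x := fun _ => pole (0 : Fin (m + 1))) ?_
  rw [← apply_apply, add_apply, add_apply, apply_signAct_of_degree_eq_one hk',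
    apply_signAct_of_degree_eq_one hk, signAct_signAct, apply_apply_comm E k' k,
    apply_signAct_of_degree_eq_one hk, apply_apply, apply_apply,
    add_comm (E.square k + E.square k'), signAct_add, signAct_add]

/-- Both `E g` and `E g ∘ E k` send the class `c` to its negative. -/
theorem modTwo_dotProduct_square {hm : Odd m} (E : SignExtension V ι m) {g k : V} {c : ι → ℤ}
    (hc : E.degree hm g c = -c) (hk : E.degree hm k = 1) :
    modTwo c ⬝ᵥ E.square k = modTwo c ⬝ᵥ E.commutator g k := by
  have hg : DegreeRel (E g) c (-c) := hc ▸ E.degreeRel_degree hm g c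
  have hk' : DegreeRel (E k) (-c) (-c) := by
    simpa only [hk, End.one_apply] using E.degreeRel_degree hm k (-c)
  have hzero := hg.modTwo_dotProduct_eq_zero hm (E.continuous_toFun g) (E.apply_apply g)
  have hzero' := (hg.comp (E.continuous_toFun k) hk').modTwo_dotProduct_eq_zero hm
    ((E.continuous_toFun g).comp (E.continuous_toFun k))
    (a := E.commutator g k + E.square g + E.square k) fun x => by
      rw [Function.comp_apply, Function.comp_apply, apply_apply_comm E g k, apply_apply,
        apply_signAct_of_degree_eq_one hk, apply_apply, signAct_add, signAct_add]
  rw [dotProduct_add, dotProduct_add, hzero, add_zero] at hzero'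
  exact (CharTwo.add_eq_zero.1 hzero').symm

/-- The elements of `V` acting trivially on cohomology. -/
def kernel (hm : Odd m) (E : SignExtension V ι m) : Submodule (ZMod 2) V where
  carrier := {k | E.degree hm k = 1}
  add_mem' {k k'} hk hk' := by
    rw [Set.mem_ofPred_eq, degree_add, hk, hk', mul_one]
  zero_mem' := E.degree_zero hm
  smul_mem' t k hk := by
    rcases (by decide : ∀ t : ZMod 2, t = 0 ∨ t = 1) t with rfl | rfl
    · rw [zero_smul]
      exact E.degree_zero hm
    · rwa [one_smul]

/-- `E.square` as a quadratic map on the kernel of the action on cohomology. -/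
def squareForm (hm : Odd m) (E : SignExtension V ι m) :
    QuadraticMap (ZMod 2) (E.kernel hm) (ι → ZMod 2) :=
  quadraticMapModTwo (fun k => E.square k) (fun k k' => E.commutator k' k)
    (fun k k' => E.square_add k.2 k'.2)
    fun k k' l => E.commutator_add_of_degree_eq_one l.2 k.2 k'

/-- On the eigenspace of `-1` of `E.degree hm g`, the components of `squareForm` are linear. -/
theorem exists_square_eq_zero [Finite V] (hm : Odd m) (E : SignExtension V ι m) (g : V)
    (hg : 2 * Fintype.card ι <
      finrank ℤ ((E.degree hm g).eigenspace (-1)) + finrank (ZMod 2) (E.kernel hm)) :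
    ∃ k ≠ 0, E.degree hm k = 1 ∧ E.square k = 0 := by
  let L := (E.degree hm g).eigenspace (-1)
  have b := finBasis ℤ L
  have hL : ∀ x, (2 : ℤ) • x ∈ L → x ∈ L := fun x hx => by
    rw [End.mem_eigenspace_iff, map_smul, smul_comm] at hx
    exact End.mem_eigenspace_iff.2 (smul_right_injective _ two_ne_zero hx)
  have hb : ∀ i, E.degree hm g (b i) = -b i := fun i => by
    simpa using End.mem_eigenspace_iff.1 (b i).2
  let C := Matrix.of fun i => modTwo (b i : ι → ℤ)
  have hrank : finrank (ZMod 2) C.mulVecLin.range = finrank ℤ L := by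
    simpa [Matrix.rank] using (linearIndependent_modTwo_of_basis hL b).rank_matrix (M := C)
  let ℓ : E.kernel hm →+ Fin (finrank ℤ L) → ZMod 2 :=
    AddMonoidHom.mk' (fun k i => modTwo (b i : ι → ℤ) ⬝ᵥ E.commutator g k) fun k k' =>
      funext fun i => E.modTwo_dotProduct_commutator_add (hb i) k.2 k'
  obtain ⟨k, hk0, hk⟩ := exists_ne_zero_quadraticMap_eq_zero_of_comp_eq (E.squareForm hm)
    C.mulVecLin (ℓ.toZModLinearMap 2)
    (fun k => funext fun i => E.modTwo_dotProduct_square (hb i) k.2)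
    (by rwa [hrank, finrank_fintype_fun_eq_card])
  exact ⟨k, by simpa using hk0, k.2, hk⟩

theorem finrank_le_two_mul_card [Finite V] (hm : Odd m) (E : SignExtension V ι m)
    (hfree : ∀ g a x, E g (signAct a x) = x → g = 0) :
    finrank (ZMod 2) V ≤ 2 * Fintype.card ι := by
  obtain ⟨g, hg⟩ := exists_finrank_le_finrank_eigenspace_neg_one (E.degree_zero hm)
    (E.degree_add hm) (K := E.kernel hm) fun _ hk => hk
  by_contra! hlt
  obtain ⟨k, hk0, hk, hsq⟩ := E.exists_square_eq_zero hm g (hlt.trans_le hg)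
  obtain ⟨a, x, hx⟩ := exists_signAct_fixed_of_commuting_involution (E.continuous_toFun k)
    (fun x => by rw [apply_apply, hsq, signAct_zero]) (apply_signAct_of_degree_eq_one hk)
  exact hk0 (hfree k a x hx)

end SignExtension

theorem exists_signExtension {V ι : Type*} [AddCommGroup V] [Finite ι] {m : ℕ} (hm : 2 ≤ m)
    {ρ : V → (ι → RP m) → ι → RP m} (hρ0 : ∀ x, ρ 0 x = x)
    (hρadd : ∀ g h x, ρ (g + h) x = ρ g (ρ h x)) (hcont : ∀ g, Continuous (ρ g)) :
    ∃ E : SignExtension V ι m, ∀ g x, proj (E g x) = ρ g (proj x) := by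
  have hm' : 1 ≤ m := one_le_two.trans hm
  choose φ hφ hp using fun g => exists_lift_proj hm (hcont g)
  obtain ⟨e, he⟩ := exists_eq_signAct_of_proj_eq hm' continuous_id (hφ 0) fun x => by
    rw [hp, hρ0, id]
  choose s hs using fun g h => exists_eq_signAct_of_proj_eq hm' ((hφ g).comp (hφ h)) (hφ (g + h))
    fun x => by rw [hp, hρadd, Function.comp_apply, hp, hp]
  choose κ hκ using fun g a => exists_eq_signAct_of_proj_eq hm' (hφ g)
    ((hφ g).comp (continuous_signAct a)) fun x => by
      rw [Function.comp_apply, hp, hp, proj_signAct]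
  exact ⟨⟨φ, hφ, e, he, s, hs, κ, hκ⟩, hp⟩

theorem stmt8_general {V ι : Type*} [AddCommGroup V] [Module (ZMod 2) V] [Finite V] [Fintype ι]
    {m : ℕ} (hm : Odd m) (hm1 : 1 < m) (ρ : V → (ι → RP m) → ι → RP m) (hρ0 : ∀ x, ρ 0 x = x)
    (hρadd : ∀ g h x, ρ (g + h) x = ρ g (ρ h x)) (hcont : ∀ g, Continuous (ρ g))
    (hfree : ∀ g x, ρ g x = x → g = 0) :
    Module.finrank (ZMod 2) V ≤ 2 * Fintype.card ι := by
  obtain ⟨E, hE⟩ := exists_signExtension hm1 hρ0 hρadd hcont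
  refine E.finrank_le_two_mul_card hm fun g a x hx => hfree g (proj x) ?_
  rw [← proj_signAct a x, ← hE, hx, proj_signAct]

theorem stmt8 (m n r : ℕ) (hm : Odd m) (hm7 : 7 < m) (hn : 1 ≤ n)
    (ρ : (Fin r → ZMod 2) → (Fin n → RP m) → (Fin n → RP m))
    (hρ0 : ∀ x, ρ 0 x = x)
    (hρadd : ∀ g h x, ρ (g + h) x = ρ g (ρ h x))
    (hcont : ∀ g, Continuous (ρ g))
    (hfree : ∀ g x, ρ g x = x → g = 0) :
    r ≤ 2 * n := by
  simpa using stmt8_general hm (by omega) ρ hρ0 hρadd hcont hfree
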